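/- arXiv:2101.07108 — 2 statements merged into one kernel-verified Lean document; each statement's English description precedes it below -/
import Mathlib

section
/- Let H_X and H_Z be separable Hilbert spaces with H_Z infinite-dimensional, and let d_Y ∈ ℕ. Let 𝒫 be the family of distributions of triples (X, Y, Z) with values in H_X × ℝ^{d_Y} × H_Z that are jointly Gaussian with injective covariance operator. Let 𝒫₀ ⊆ 𝒫 be the subset of distributions under which X ⊥⊥ Y | Z, let 𝒬 = 𝒫 \ 𝒫₀, fix Q ∈ 𝒬, and let 𝒫₀^Q = {P ∈ 𝒫₀ : the marginal distribution of Z under P equals that under Q}. Then for every n ∈ ℕ and every measurable test ψ_n : (H_X × ℝ^{d_Y} × H_Z)^n → {0, 1}, the power is at most the size: Q^{⊗n}(ψ_n = 1) ≤ sup_{P ∈ 𝒫₀^Q} P^{⊗n}(ψ_n = 1). -/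
open MeasureTheory ProbabilityTheory Filter
open scoped ENNReal NNReal RealInnerProductSpace

noncomputable section

/-- A measure on a real normed space is (jointly) Gaussian if every continuous linear
functional pushes it forward to a (possibly degenerate) Gaussian distribution on `ℝ`. -/
def IsGaussianMeasure {E : Type*} [NormedAddCommGroup E] [NormedSpace ℝ E] [MeasurableSpace E]
    (μ : Measure E) : Prop :=
  ∀ L : E →L[ℝ] ℝ, ∃ (m : ℝ) (v : ℝ≥0), μ.map L = gaussianReal m v

/-- The covariance form of a measure, evaluated at two continuous linear functionals. -/
def covForm {E : Type*} [NormedAddCommGroup E] [NormedSpace ℝ E] [MeasurableSpace E]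
    (μ : Measure E) (L₁ L₂ : E →L[ℝ] ℝ) : ℝ :=
  ∫ x, (L₁ x - ∫ y, L₁ y ∂μ) * (L₂ x - ∫ y, L₂ y ∂μ) ∂μ

/-- The covariance operator of `μ` is injective: if `Cov(L₁, L₂) = 0` for every continuous
linear functional `L₂`, then `L₁ = 0`.  On a Hilbert space this is precisely injectivity of
the covariance operator. -/
def HasInjectiveCovariance {E : Type*} [NormedAddCommGroup E] [NormedSpace ℝ E] [MeasurableSpace E]
    (μ : Measure E) : Prop :=
  ∀ L₁ : E →L[ℝ] ℝ, (∀ L₂ : E →L[ℝ] ℝ, covForm μ L₁ L₂ = 0) → L₁ = 0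

/-- `X ⫫ Y | Z` under `μ`: for all bounded measurable real-valued `f, g`,
`E(f(X) g(Y) | Z) = E(f(X) | Z) ⬝ E(g(Y) | Z)` almost surely. -/
def CondIndepGiven {Ω α β γ : Type*} [MeasurableSpace Ω] [MeasurableSpace α] [MeasurableSpace β]
    [MeasurableSpace γ] (μ : Measure Ω) (X : Ω → α) (Y : Ω → β) (Z : Ω → γ) : Prop :=
  ∀ (f : α → ℝ) (g : β → ℝ), Measurable f → Measurable g →
    (∃ C, ∀ a, |f a| ≤ C) → (∃ C, ∀ b, |g b| ≤ C) →
    μ[(fun ω => f (X ω) * g (Y ω))|MeasurableSpace.comap Z inferInstance] =ᵐ[μ]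
      fun ω => ((μ[(fun ω' => f (X ω'))|MeasurableSpace.comap Z inferInstance]) ω) *
        ((μ[(fun ω' => g (Y ω'))|MeasurableSpace.comap Z inferInstance]) ω)

/-- The density constant of the standard Gaussian measure. -/
def gConst (V : Type*) [NormedAddCommGroup V] [InnerProductSpace ℝ V] : ℝ :=
  ((2 * Real.pi) ^ ((Module.finrank ℝ V : ℝ) / 2))⁻¹

/-- The density of the standard Gaussian measure. -/
def gDens (V : Type*) [NormedAddCommGroup V] [InnerProductSpace ℝ V] (x : V) : ℝ :=
  gConst V * Real.exp (-(1 / 2) * ‖x‖ ^ 2)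

section Density

set_option linter.unusedSectionVars false

variable {V : Type*} [NormedAddCommGroup V] [InnerProductSpace ℝ V] [FiniteDimensional ℝ V]
  [MeasurableSpace V] [BorelSpace V]

lemma gConst_pos : 0 < gConst V := by
  unfold gConst
  have := Real.pi_pos
  positivity

lemma gDens_nonneg (x : V) : 0 ≤ gDens V x :=
  mul_nonneg gConst_pos.le (Real.exp_nonneg _)

lemma continuous_gDens : Continuous (gDens V) := by
  unfold gDens; fun_prop

lemma integrable_exp_neg_sq (b : ℝ) (hb : 0 < b) :
    Integrable (fun x : V => Real.exp (-b * ‖x‖ ^ 2)) := by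
  have h := GaussianFourier.integrable_cexp_neg_mul_sq_norm_add (V := V) (b := (b : ℂ))
    (by simpa using hb) 0 0
  have h2 := h.re
  refine h2.congr (ae_of_all _ fun x => ?_)
  have : (-(b : ℂ) * ((‖x‖ : ℝ) : ℂ) ^ 2 + 0 * ((inner ℝ (0 : V) x : ℝ) : ℂ))
      = ((-b * ‖x‖ ^ 2 : ℝ) : ℂ) := by push_cast; ring
  simp only [this]
  exact Complex.exp_ofReal_re _

lemma integrable_gDens : Integrable (gDens V) := by
  unfold gDens
  exact (integrable_exp_neg_sq _ (by norm_num)).const_mul _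

lemma stdGaussian_eq_withDensity :
    stdGaussian V = (volume : Measure V).withDensity (fun x => ENNReal.ofReal (gDens V x)) := by
  have hfin : IsFiniteMeasure
      ((volume : Measure V).withDensity (fun x => ENNReal.ofReal (gDens V x))) :=
    isFiniteMeasure_withDensity_ofReal integrable_gDens.2
  apply Measure.ext_of_charFun
  ext t
  rw [charFun_stdGaussian, charFun_apply,
    integral_withDensity_eq_integral_toReal_smul (by
      exact (continuous_gDens.measurable.ennreal_ofReal)) (by simp)]
  have h := GaussianFourier.integral_cexp_neg_mul_sq_norm_add (V := V) (b := ((1 / 2 : ℝ) : ℂ))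
    (by norm_num) Complex.I t
  have e : ∀ x : V, (ENNReal.ofReal (gDens V x)).toReal •
      Complex.exp (((inner ℝ x t : ℝ) : ℂ) * Complex.I) = (gConst V : ℂ) *
      Complex.exp (-((1 / 2 : ℝ) : ℂ) * ((‖x‖ : ℝ) : ℂ) ^ 2 + Complex.I * ((inner ℝ t x : ℝ) : ℂ)) := by
    intro x
    rw [ENNReal.toReal_ofReal (gDens_nonneg x), Complex.exp_add, gDens, Complex.real_smul,
      real_inner_comm]
    push_cast
    rw [mul_comm Complex.I]
    ring
  simp_rw [e]
  rw [integral_const_mul, h]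
  have hc : ((Real.pi : ℂ) / ((1 / 2 : ℝ) : ℂ)) ^ ((Module.finrank ℝ V : ℂ) / 2)
      = (((2 * Real.pi) ^ ((Module.finrank ℝ V : ℝ) / 2) : ℝ) : ℂ) := by
    rw [Complex.ofReal_cpow (by positivity)]
    congr 1
    · push_cast; ring
    · push_cast; ring
  rw [hc, gConst, ← mul_assoc, ← Complex.ofReal_mul, inv_mul_cancel₀ (by positivity)]
  simp only [Complex.ofReal_one, one_mul, Complex.I_sq]
  congr 1
  push_cast
  ring

lemma integral_stdGaussian (f : V → ℝ) :
    ∫ x, f x ∂(stdGaussian V) = ∫ x, gDens V x * f x := by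
  rw [stdGaussian_eq_withDensity,
    integral_withDensity_eq_integral_toReal_smul (by
      exact (continuous_gDens.measurable.ennreal_ofReal)) (by simp)]
  congr 1
  ext x
  rw [ENNReal.toReal_ofReal (gDens_nonneg x), smul_eq_mul]

lemma integral_affine_stdGaussian (f : V → ℝ) (T R : V →L[ℝ] V) (hRT : R * T = 1)
    (s : V) :
    ∫ x, f (T x + s) ∂(stdGaussian V) =
      |LinearMap.det (T : V →ₗ[ℝ] V)|⁻¹ * ∫ y, gDens V (R (y - s)) * f y := by
  have hdet : LinearMap.det (T : V →ₗ[ℝ] V) ≠ 0 := by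
    have : LinearMap.det (R : V →ₗ[ℝ] V) * LinearMap.det (T : V →ₗ[ℝ] V) = 1 := by
      rw [← LinearMap.det_comp]
      have h1 : (R : V →ₗ[ℝ] V) ∘ₗ (T : V →ₗ[ℝ] V) = LinearMap.id := by
        ext x; exact congrArg (fun (S : V →L[ℝ] V) => S x) hRT
      rw [h1]; simp
    intro h0
    rw [h0] at this; simp at this
  have hTR : ∀ x, R (T x) = x := fun x => congrArg (fun (S : V →L[ℝ] V) => S x) hRT
  rw [integral_stdGaussian]
  have e1 : ∫ y, gDens V (R (y - s)) * f y = ∫ y, gDens V (R y) * f (y + s) := by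
    rw [← integral_add_right_eq_self (fun y => gDens V (R (y - s)) * f y) s]
    simp
  let e : V ≃ₗ[ℝ] V := LinearEquiv.ofIsUnitDet (f := (T : V →ₗ[ℝ] V))
    (v := Module.finBasis ℝ V) (v' := Module.finBasis ℝ V) (by
      rw [LinearMap.det_toMatrix]; exact hdet.isUnit)
  have he : ∀ x, e x = T x := fun x => rfl
  let ec : V ≃L[ℝ] V := e.toContinuousLinearEquiv
  have hec : ∀ x, ec.toHomeomorph.toMeasurableEquiv x = T x := fun x => rfl
  have hm := Measure.map_linearMap_addHaar_eq_smul_addHaar (volume : Measure V) hdet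
  have hm' : Measure.map ec.toHomeomorph.toMeasurableEquiv (volume : Measure V) =
      ENNReal.ofReal |(LinearMap.det (T : V →ₗ[ℝ] V))⁻¹| • volume := by
    rw [← hm]; rfl
  have e2 := integral_map_equiv (μ := (volume : Measure V)) ec.toHomeomorph.toMeasurableEquiv
    (fun y => gDens V (R y) * f (y + s))
  rw [hm', integral_smul_measure] at e2
  rw [e1]
  rw [ENNReal.toReal_ofReal (abs_nonneg _), smul_eq_mul, abs_inv] at e2
  rw [e2]
  simp_rw [hec, hTR]

lemma tendsto_affine_stdGaussian (f : V → ℝ) (hf : Measurable f) (hb : ∀ x, |f x| ≤ 1)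
    (T : ℕ → V →L[ℝ] V) (hT : Tendsto T atTop (nhds 1)) (s : ℕ → V)
    (hs : Tendsto s atTop (nhds 0)) :
    Tendsto (fun m => ∫ x, f (T m x + s m) ∂(stdGaussian V)) atTop
      (nhds (∫ x, f x ∂(stdGaussian V))) := by
  set R : ℕ → V →L[ℝ] V := fun m => Ring.inverse (T m) with hRdef
  have hR : Tendsto R atTop (nhds 1) := by
    have h := (NormedRing.inverse_continuousAt (1 : (V →L[ℝ] V)ˣ)).tendsto
    simp only [Units.val_one, Ring.inverse_one] at h
    exact h.comp hT
  have hunit : ∀ᶠ m in atTop, IsUnit (T m) := by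
    have : {x : V →L[ℝ] V | IsUnit x} ∈ nhds (1 : V →L[ℝ] V) := Units.isOpen.mem_nhds isUnit_one
    exact hT this
  have hdetc : Tendsto (fun m => |LinearMap.det (T m : V →ₗ[ℝ] V)|⁻¹) atTop (nhds 1) := by
    have hc : Continuous (fun A : V →L[ℝ] V => LinearMap.det (A : V →ₗ[ℝ] V)) :=
      ContinuousLinearMap.continuous_det
    have h1 := (hc.tendsto 1).comp hT
    have h2 : LinearMap.det ((1 : V →L[ℝ] V) : V →ₗ[ℝ] V) = 1 := by
      have : ((1 : V →L[ℝ] V) : V →ₗ[ℝ] V) = LinearMap.id := rfl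
      rw [this]; simp
    rw [h2] at h1
    have h3 := (h1.abs).inv₀ (by simp)
    simpa using h3
  have hInteg : Tendsto (fun m => ∫ y, gDens V (R m (y - s m)) * f y) atTop
      (nhds (∫ y, gDens V y * f y)) := by
    refine tendsto_integral_filter_of_dominated_convergence
      (fun y => gConst V * Real.exp (1 / 8) * Real.exp (-(1 / 16) * ‖y‖ ^ 2)) ?_ ?_ ?_ ?_
    · refine Eventually.of_forall fun m => ?_
      refine (Measurable.mul ?_ hf).aestronglyMeasurable
      exact (continuous_gDens.comp ((R m).continuous.comp
        (continuous_id.sub continuous_const))).measurable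
    · have hTn : ∀ᶠ m in atTop, ‖T m‖ ≤ 2 := by
        have h1 : Tendsto (fun m => ‖T m‖) atTop (nhds ‖(1 : V →L[ℝ] V)‖) := hT.norm
        have h2 : ‖(1 : V →L[ℝ] V)‖ < 2 :=
          lt_of_le_of_lt ContinuousLinearMap.norm_id_le (by norm_num)
        exact (h1.eventually (gt_mem_nhds h2)).mono fun m h => le_of_lt h
      have hsn : ∀ᶠ m in atTop, ‖s m‖ ≤ 1 := by
        have h1 := hs.norm
        rw [norm_zero] at h1
        exact (h1.eventually (gt_mem_nhds one_pos)).mono fun m h => le_of_lt h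
      filter_upwards [hTn, hsn, hunit] with m hm1 hm2 hm3
      refine ae_of_all _ fun y => ?_
      rw [Real.norm_eq_abs, abs_mul, abs_of_nonneg (gDens_nonneg _)]
      refine (mul_le_of_le_one_right (gDens_nonneg _) (hb y)).trans ?_
      rw [gDens, mul_assoc, ← Real.exp_add]
      refine mul_le_mul_of_nonneg_left (Real.exp_le_exp.2 ?_) gConst_pos.le
      have hTR : T m (R m (y - s m)) = y - s m :=
        congrArg (fun (S : V →L[ℝ] V) => S (y - s m)) (Ring.mul_inverse_cancel (T m) hm3)
      set a := R m (y - s m) with ha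
      have h1 : ‖y‖ ≤ 2 * ‖a‖ + 1 := by
        calc ‖y‖ = ‖T m a + s m‖ := by rw [hTR]; simp
          _ ≤ ‖T m a‖ + ‖s m‖ := norm_add_le _ _
          _ ≤ 2 * ‖a‖ + 1 := by
            refine add_le_add (((T m).le_opNorm a).trans ?_) hm2
            exact mul_le_mul_of_nonneg_right hm1 (norm_nonneg _)
      have h0 := norm_nonneg y
      have h0' := norm_nonneg a
      nlinarith [sq_nonneg (2 * ‖a‖ - 1)]
    · exact (integrable_exp_neg_sq _ (by norm_num)).const_mul _
    · refine ae_of_all _ fun y => ?_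
      refine Tendsto.mul_const _ ?_
      have h1 : Tendsto (fun m => R m (y - s m)) atTop (nhds ((1 : V →L[ℝ] V) (y - 0))) :=
        ((isBoundedBilinearMap_apply (𝕜 := ℝ) (E := V) (F := V)).continuous.tendsto
          ((1 : V →L[ℝ] V), y - 0)).comp (hR.prodMk_nhds (tendsto_const_nhds.sub hs))
      simp only [sub_zero, one_apply_eq_self] at h1
      exact (continuous_gDens.tendsto y).comp h1
  have := hdetc.mul hInteg
  rw [one_mul, ← integral_stdGaussian] at this
  refine this.congr' ?_
  filter_upwards [hunit] with m hm
  exact (integral_affine_stdGaussian f (T m) (R m) (Ring.inverse_mul_cancel _ hm) (s m)).symm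

end Density
section MatrixGauss

open Matrix
open scoped MatrixOrder

/-- Standard Gaussian measure on `ι → ℝ`. -/
abbrev gam (ι : Type*) [Fintype ι] : Measure (ι → ℝ) := Measure.pi fun _ => gaussianReal 0 1

variable {ι : Type*} [Fintype ι] [DecidableEq ι]

lemma map_mulVec_gam {κ : Type*} [Fintype κ] [DecidableEq κ] (B : Matrix ι κ ℝ) :
    (gam κ).map (fun g => WithLp.toLp 2 (B *ᵥ g)) =
      multivariateGaussian 0 (B * Bᵀ) := by
  have hS : (B * Bᵀ).PosSemidef := by
    have := Matrix.posSemidef_self_mul_conjTranspose B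
    simpa using this
  have hm : Measurable (fun g : κ → ℝ => (WithLp.toLp 2 (B *ᵥ g) : EuclideanSpace ℝ ι)) := by
    refine Continuous.measurable ?_
    refine (PiLp.continuous_toLp 2 _).comp ?_
    exact Continuous.matrix_mulVec continuous_const continuous_id
  have : IsProbabilityMeasure ((gam κ).map (fun g => (WithLp.toLp 2 (B *ᵥ g) :
      EuclideanSpace ℝ ι))) := Measure.isProbabilityMeasure_map hm.aemeasurable
  apply Measure.ext_of_charFun
  ext t
  rw [charFun_multivariateGaussian hS, charFun_apply, integral_map hm.aemeasurable (by fun_prop)]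
  have e : ∀ g : κ → ℝ, (inner ℝ (WithLp.toLp 2 (B *ᵥ g) : EuclideanSpace ℝ ι) t : ℝ) =
      inner ℝ (WithLp.toLp 2 g : EuclideanSpace ℝ κ) (WithLp.toLp 2 (Bᵀ *ᵥ t.ofLp)) := by
    intro g
    simp only [EuclideanSpace.inner_eq_star_dotProduct, star_trivial]
    rw [Matrix.dotProduct_mulVec, dotProduct_comm, Matrix.mulVec_transpose, dotProduct_comm]
  simp_rw [e]
  have h1 : ∫ g, Complex.exp (((inner ℝ (WithLp.toLp 2 g : EuclideanSpace ℝ κ)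
      (WithLp.toLp 2 (Bᵀ *ᵥ t.ofLp)) : ℝ) : ℂ) * Complex.I) ∂(gam κ) =
      charFun (stdGaussian (EuclideanSpace ℝ κ)) (WithLp.toLp 2 (Bᵀ *ᵥ t.ofLp)) := by
    rw [← map_pi_eq_stdGaussian, charFun_apply, integral_map (by fun_prop) (by fun_prop)]
  rw [h1, charFun_stdGaussian]
  congr 1
  rw [← Complex.ofReal_pow, EuclideanSpace.real_norm_sq_eq]
  simp only [inner_zero_right, Complex.ofReal_zero, zero_mul, zero_sub]
  have h2 : t.ofLp ⬝ᵥ (B * Bᵀ) *ᵥ t.ofLp = ∑ i, (Bᵀ *ᵥ t.ofLp) i ^ 2 := by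
    rw [← Matrix.mulVec_mulVec, Matrix.dotProduct_mulVec, ← Matrix.mulVec_transpose]
    simp [dotProduct, pow_two]
  rw [h2]
  push_cast
  ring

lemma norm_sqrt_sub_one_le (S : Matrix ι ι ℝ) (hS : S.PosSemidef) :
    ‖toEuclideanCLM (𝕜 := ℝ) (CFC.sqrt S) - 1‖ ≤ ‖toEuclideanCLM (𝕜 := ℝ) S - 1‖ := by
  have h0 : 0 ≤ S := hS.nonneg
  have hT : (CFC.sqrt S).PosSemidef := Matrix.nonneg_iff_posSemidef.1 (CFC.sqrt_nonneg S)
  set T := toEuclideanCLM (𝕜 := ℝ) (CFC.sqrt S) with hTdef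
  have hTT : T * T = toEuclideanCLM (𝕜 := ℝ) S := by
    rw [hTdef, ← map_mul, CFC.sqrt_mul_sqrt_self S h0]
  refine ContinuousLinearMap.opNorm_le_bound _ (norm_nonneg _) fun x => ?_
  refine le_trans ?_ (ContinuousLinearMap.le_opNorm _ x)
  set y := (T - 1) x with hy
  have h1 : (toEuclideanCLM (𝕜 := ℝ) S - 1) x = T y + y := by
    rw [← hTT, hy]
    simp only [ContinuousLinearMap.sub_apply, ContinuousLinearMap.mul_apply, map_sub,
      one_apply_eq_self]
    abel
  rw [h1]
  have hpos : 0 ≤ inner ℝ (T y) y := by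
    have := hT.dotProduct_mulVec_nonneg y.ofLp
    rw [real_inner_comm]
    simpa [EuclideanSpace.inner_eq_star_dotProduct, hTdef, dotProduct_comm] using this
  refine le_of_sq_le_sq ?_ (norm_nonneg _)
  rw [norm_add_sq_real]
  nlinarith [sq_nonneg ‖T y‖]

lemma tendsto_gam {κ : ℕ → Type*} [∀ m, Fintype (κ m)] [∀ m, DecidableEq (κ m)]
    (B : ∀ m, Matrix ι (κ m) ℝ) (hB : Tendsto (fun m => B m * (B m)ᵀ) atTop (nhds 1))
    (s : ℕ → ι → ℝ) (hs : Tendsto s atTop (nhds 0))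
    (f : (ι → ℝ) → ℝ) (hf : Measurable f) (hb : ∀ x, |f x| ≤ 1) :
    Tendsto (fun m => ∫ g, f (B m *ᵥ g + s m) ∂(gam (κ m))) atTop
      (nhds (∫ x, f x ∂(gam ι))) := by
  set T : ℕ → EuclideanSpace ℝ ι →L[ℝ] EuclideanSpace ℝ ι :=
    fun m => toEuclideanCLM (𝕜 := ℝ) (CFC.sqrt (B m * (B m)ᵀ)) with hTdef
  have hS : ∀ m, (B m * (B m)ᵀ).PosSemidef := fun m => by
    have := Matrix.posSemidef_self_mul_conjTranspose (B m)
    simpa using this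
  have hT : Tendsto T atTop (nhds 1) := by
    rw [tendsto_iff_norm_sub_tendsto_zero]
    have hc : Continuous (fun S : Matrix ι ι ℝ => toEuclideanCLM (𝕜 := ℝ) (n := ι) S) := by
      let L : Matrix ι ι ℝ →ₗ[ℝ] (EuclideanSpace ℝ ι →L[ℝ] EuclideanSpace ℝ ι) :=
        { toFun := fun S => toEuclideanCLM (𝕜 := ℝ) (n := ι) S
          map_add' := fun x y => map_add _ x y
          map_smul' := fun c x => map_smul _ c x }
      exact L.continuous_of_finiteDimensional
    have h1 := (hc.tendsto 1).comp hB
    rw [map_one, tendsto_iff_norm_sub_tendsto_zero] at h1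
    exact squeeze_zero (fun m => norm_nonneg _) (fun m => norm_sqrt_sub_one_le _ (hS m)) h1
  have hmain := tendsto_affine_stdGaussian (V := EuclideanSpace ℝ ι) (fun x => f x.ofLp)
    (hf.comp (by fun_prop)) (fun x => hb _) T hT (fun m => WithLp.toLp 2 (s m)) (by
      have := ((PiLp.continuous_toLp 2 (fun _ : ι => ℝ)).tendsto 0).comp hs
      rw [WithLp.toLp_zero] at this
      exact this)
  have e2 : ∫ x : EuclideanSpace ℝ ι, f x.ofLp ∂(stdGaussian (EuclideanSpace ℝ ι)) =
      ∫ x, f x ∂(gam ι) := by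
    have hf' : Measurable (fun x : EuclideanSpace ℝ ι => f x.ofLp) := hf.comp (by fun_prop)
    rw [← map_pi_eq_stdGaussian, integral_map (by fun_prop) hf'.aestronglyMeasurable]
  rw [e2] at hmain
  refine hmain.congr fun m => ?_
  have hmv : Measurable (fun g : κ m → ℝ => (WithLp.toLp 2 (B m *ᵥ g) : EuclideanSpace ℝ ι)) := by
    refine Continuous.measurable ?_
    refine (PiLp.continuous_toLp 2 _).comp ?_
    exact Continuous.matrix_mulVec continuous_const continuous_id
  have hF : Measurable (fun y : EuclideanSpace ℝ ι => f (y.ofLp + s m)) :=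
    hf.comp (by fun_prop)
  calc ∫ x, f (T m x + WithLp.toLp 2 (s m)).ofLp ∂(stdGaussian (EuclideanSpace ℝ ι))
      = ∫ y : EuclideanSpace ℝ ι, f (y.ofLp + s m) ∂(multivariateGaussian 0 (B m * (B m)ᵀ)) := by
        rw [multivariateGaussian, integral_map (by fun_prop) hF.aestronglyMeasurable]
        simp [hTdef]
    _ = _ := by
        rw [← map_mulVec_gam, integral_map hmv.aemeasurable hF.aestronglyMeasurable]

end MatrixGauss

section GaussSpace

variable {E : Type*} [NormedAddCommGroup E] [NormedSpace ℝ E] [CompleteSpace E]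
  [SecondCountableTopology E] [MeasurableSpace E] [BorelSpace E]

/-- Continuous affine functionals, as elements of `L²`. -/
def aff (Q : Measure E) [IsFiniteMeasure Q] : (StrongDual ℝ E × ℝ) →L[ℝ] Lp ℝ 2 Q :=
  (StrongDual.toLp Q 2).coprod (Lp.constL 2 Q ℝ)

lemma aff_apply (Q : Measure E) [IsGaussian Q] (L : StrongDual ℝ E) (c : ℝ) :
    aff Q (L, c) =ᵐ[Q] fun x => L x + c := by
  simp only [aff, ContinuousLinearMap.coprod_apply]
  rw [StrongDual.toLp_apply IsGaussian.memLp_two_id]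
  have h1 : ((Lp.constL 2 Q ℝ : ℝ →L[ℝ] Lp ℝ 2 Q) c) =ᵐ[Q] fun _ => c := Lp.coeFn_const 2 Q c
  filter_upwards [Lp.coeFn_add (MemLp.toLp L (IsGaussian.memLp_two_id.continuousLinearMap_comp L) :
    Lp ℝ 2 Q) (Lp.constL 2 Q ℝ c), h1,
    MemLp.coeFn_toLp (IsGaussian.memLp_two_id.continuousLinearMap_comp L (μ := Q) (p := 2))]
    with x h1 h2 h3
  rw [h1, Pi.add_apply, h2]
  exact congrArg (· + c) h3

lemma integrable_Lp2 {Ω : Type*} [MeasurableSpace Ω] {Q : Measure Ω} [IsFiniteMeasure Q]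
    (f : Lp ℝ 2 Q) : Integrable f Q :=
  (Lp.memLp f).integrable (by norm_num)

lemma integral_abs_Lp2_le {Ω : Type*} [MeasurableSpace Ω] {Q : Measure Ω} [IsProbabilityMeasure Q]
    (f : Lp ℝ 2 Q) : ∫ x, ‖f x‖ ∂Q ≤ ‖f‖ := by
  have h := eLpNorm_le_eLpNorm_of_exponent_le (μ := Q) (f := f) (p := 1) (q := 2) (by norm_num)
    (Lp.aestronglyMeasurable f)
  rw [integral_norm_eq_lintegral_enorm (Lp.aestronglyMeasurable f), ← eLpNorm_one_eq_lintegral_enorm,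
    Lp.norm_def]
  exact ENNReal.toReal_mono (Lp.eLpNorm_ne_top f) h

lemma inner_Lp2 {Ω : Type*} [MeasurableSpace Ω] {Q : Measure Ω}
    (f g : Lp ℝ 2 Q) : inner ℝ f g = ∫ x, f x * g x ∂Q := by
  rw [L2.inner_def]
  congr 1; ext x
  simp [mul_comm]

lemma continuous_integral_Lp2 {Ω : Type*} [MeasurableSpace Ω] {Q : Measure Ω}
    [IsProbabilityMeasure Q] : Continuous fun f : Lp ℝ 2 Q => ∫ x, f x ∂Q := by
  refine LipschitzWith.continuous (K := 1) (LipschitzWith.of_dist_le_mul fun f g => ?_)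
  rw [NNReal.coe_one, one_mul, dist_eq_norm, dist_eq_norm,
    ← integral_sub (integrable_Lp2 f) (integrable_Lp2 g)]
  refine le_trans (norm_integral_le_integral_norm _) (le_trans (le_of_eq ?_)
    (integral_abs_Lp2_le (f - g)))
  refine integral_congr_ae ?_
  filter_upwards [Lp.coeFn_sub f g] with x hx
  rw [hx, Pi.sub_apply]

lemma norm_cexp_sub_le (a b : ℝ) :
    ‖Complex.exp (a * Complex.I) - Complex.exp (b * Complex.I)‖ ≤ |a - b| := by
  have h : Complex.exp (a * Complex.I) - Complex.exp (b * Complex.I)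
      = Complex.exp (b * Complex.I) * (Complex.exp (Complex.I * ((a - b : ℝ) : ℂ)) - 1) := by
    rw [mul_sub, ← Complex.exp_add, mul_one]
    congr 2
    push_cast; ring
  rw [h, norm_mul, Complex.norm_exp_ofReal_mul_I, one_mul]
  exact Real.norm_exp_I_mul_ofReal_sub_one_le

lemma continuous_charFun_Lp2 {Ω : Type*} [MeasurableSpace Ω] {Q : Measure Ω}
    [IsProbabilityMeasure Q] (t : ℝ) :
    Continuous fun f : Lp ℝ 2 Q => ∫ x, Complex.exp ((t * f x : ℝ) * Complex.I) ∂Q := by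
  have hInteg : ∀ f : Lp ℝ 2 Q, Integrable (fun x => Complex.exp ((t * f x : ℝ) * Complex.I)) Q := by
    intro f
    refine Integrable.of_bound (C := 1) ?_ ?_
    · have := (Lp.stronglyMeasurable f).measurable
      exact (by fun_prop : Measurable fun x => Complex.exp ((t * f x : ℝ) * Complex.I)).aestronglyMeasurable
    · exact ae_of_all _ fun x => (Complex.norm_exp_ofReal_mul_I _).le
  refine LipschitzWith.continuous (K := ‖t‖₊) (LipschitzWith.of_dist_le_mul fun f g => ?_)
  rw [dist_eq_norm, dist_eq_norm, ← integral_sub (hInteg f) (hInteg g)]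
  refine le_trans (norm_integral_le_integral_norm _) ?_
  refine le_trans ?_ (mul_le_mul_of_nonneg_left (integral_abs_Lp2_le (f - g)) (norm_nonneg t))
  rw [← integral_const_mul]
  refine integral_mono_ae ((hInteg f).sub (hInteg g)).norm ((integrable_Lp2 (f - g)).norm.const_mul _) ?_
  filter_upwards [Lp.coeFn_sub f g] with x hx
  refine (norm_cexp_sub_le _ _).trans (le_of_eq ?_)
  rw [hx, Pi.sub_apply, ← mul_sub, abs_mul, Real.norm_eq_abs]
  rfl

/-- The Gaussian space of `Q` (including constants). -/
def GS (Q : Measure E) [IsFiniteMeasure Q] : Submodule ℝ (Lp ℝ 2 Q) :=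
  (LinearMap.range (aff Q).toLinearMap).topologicalClosure

lemma gauss_charFun_Lp2 {Ω : Type*} [MeasurableSpace Ω] {Q : Measure Ω}
    [IsProbabilityMeasure Q] (f : Lp ℝ 2 Q)
    (h : ∀ t : ℝ, ∫ x, Complex.exp ((t * f x : ℝ) * Complex.I) ∂Q =
      Complex.exp (t * (∫ x, f x ∂Q : ℝ) * Complex.I - (‖f‖^2 - (∫ x, f x ∂Q)^2 : ℝ) * t^2 / 2)) :
    Q.map f = gaussianReal (∫ x, f x ∂Q) (‖f‖^2 - (∫ x, f x ∂Q)^2).toNNReal := by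
  have hm := (Lp.stronglyMeasurable f).measurable
  have := Measure.isProbabilityMeasure_map (μ := Q) hm.aemeasurable
  refine Measure.ext_of_charFun ?_
  ext t
  rw [charFun_gaussianReal, charFun_apply, integral_map hm.aemeasurable (by fun_prop)]
  have hle : (∫ x, f x ∂Q)^2 ≤ ‖f‖^2 := by
    rw [sq_le_sq, abs_of_nonneg (norm_nonneg f)]
    exact (norm_integral_le_integral_norm _).trans (integral_abs_Lp2_le f)
  rw [Real.coe_toNNReal _ (sub_nonneg.2 hle), ← h t]
  congr 1

lemma sqnorm_Lp2 {Ω : Type*} [MeasurableSpace Ω] {Q : Measure Ω}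
    (f : Lp ℝ 2 Q) : ‖f‖^2 = ∫ x, f x ^ 2 ∂Q := by
  rw [← real_inner_self_eq_norm_sq, inner_Lp2]
  simp [sq]

lemma gaussian_of_mem_GS (Q : Measure E) [IsGaussian Q] (f : Lp ℝ 2 Q) (hf : f ∈ GS Q) :
    Q.map f = gaussianReal (∫ x, f x ∂Q) (‖f‖^2 - (∫ x, f x ∂Q)^2).toNNReal := by
  refine gauss_charFun_Lp2 f fun t => ?_
  revert f
  have hcl : IsClosed {f : Lp ℝ 2 Q | ∫ x, Complex.exp ((t * f x : ℝ) * Complex.I) ∂Q =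
      Complex.exp (t * (∫ x, f x ∂Q : ℝ) * Complex.I - (‖f‖^2 - (∫ x, f x ∂Q)^2 : ℝ) * t^2 / 2)} := by
    refine isClosed_eq (continuous_charFun_Lp2 t) ?_
    have := continuous_integral_Lp2 (Q := Q)
    fun_prop
  refine fun f hf => closure_minimal (s := (LinearMap.range (aff Q).toLinearMap : Set (Lp ℝ 2 Q)))
    ?_ hcl hf
  rintro _ ⟨⟨L, c⟩, rfl⟩
  set g := aff Q (L, c) with hg
  change ∫ x, Complex.exp ((t * g x : ℝ) * Complex.I) ∂Q = _
  have hgm := (Lp.stronglyMeasurable g).measurable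
  have hae := aff_apply Q L c
  have hlaw : Q.map g = gaussianReal (Q[L] + c) (Var[L; Q]).toNNReal := by
    rw [Measure.map_congr hae]
    have : (fun x => L x + c) = (fun y => y + c) ∘ L := rfl
    rw [this, ← Measure.map_map (by fun_prop) (by fun_prop), IsGaussian.map_eq_gaussianReal,
      gaussianReal_map_add_const]
  set m := Q[L] + c
  set v := (Var[L; Q]).toNNReal
  have hI : ∫ x, g x ∂Q = m := by
    have : ∫ x, g x ∂Q = ∫ y, y ∂(Q.map g) := by
      rw [integral_map hgm.aemeasurable (by fun_prop)]
    rw [this, hlaw, integral_id_gaussianReal]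
  have hV : ‖g‖^2 - m^2 = v := by
    rw [sqnorm_Lp2, ← hI, ← variance_id_gaussianReal (μ := m) (v := v), ← hlaw,
      variance_map (by fun_prop) hgm.aemeasurable, Function.id_comp,
      variance_eq_sub (Lp.memLp g)]
    rfl
  have := charFun_gaussianReal (μ := m) (v := v) t
  rw [← hlaw, charFun_apply, integral_map hgm.aemeasurable (by fun_prop)] at this
  change _ = Complex.exp (t * (∫ x, g x ∂Q : ℝ) * Complex.I - (‖g‖^2 - (∫ x, g x ∂Q)^2 : ℝ) * t^2 / 2)
  rw [hI, hV]
  rw [← this]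
  congr 1

/-- `f` is a.e. equal to an element of `K`. -/
def InK {Ω : Type*} [MeasurableSpace Ω] {Q : Measure Ω} (K : Submodule ℝ (Lp ℝ 2 Q)) (f : Ω → ℝ) :
    Prop := ∃ g ∈ K, f =ᵐ[Q] g

lemma InK.coe {Ω : Type*} [MeasurableSpace Ω] {Q : Measure Ω} {K : Submodule ℝ (Lp ℝ 2 Q)}
    {f : Lp ℝ 2 Q} (hf : f ∈ K) : InK K f := ⟨f, hf, ae_eq_rfl⟩

lemma InK.mem {Ω : Type*} [MeasurableSpace Ω] {Q : Measure Ω} {K : Submodule ℝ (Lp ℝ 2 Q)}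
    {f : Lp ℝ 2 Q} (hf : InK K f) : f ∈ K := by
  obtain ⟨g, hg, h⟩ := hf
  rwa [Lp.ext h]

lemma InK.congr {Ω : Type*} [MeasurableSpace Ω] {Q : Measure Ω} {K : Submodule ℝ (Lp ℝ 2 Q)}
    {f f' : Ω → ℝ} (hf : InK K f) (h : f' =ᵐ[Q] f) : InK K f' := by
  obtain ⟨g, hg, h'⟩ := hf
  exact ⟨g, hg, h.trans h'⟩

lemma InK.mono {Ω : Type*} [MeasurableSpace Ω] {Q : Measure Ω} {K K' : Submodule ℝ (Lp ℝ 2 Q)}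
    {f : Ω → ℝ} (hf : InK K f) (h : K ≤ K') : InK K' f := by
  obtain ⟨g, hg, h'⟩ := hf
  exact ⟨g, h hg, h'⟩

lemma InK.add {Ω : Type*} [MeasurableSpace Ω] {Q : Measure Ω} {K : Submodule ℝ (Lp ℝ 2 Q)}
    {f f' : Ω → ℝ} (hf : InK K f) (hf' : InK K f') : InK K (fun x => f x + f' x) := by
  obtain ⟨g, hg, h⟩ := hf
  obtain ⟨g', hg', h'⟩ := hf'
  refine ⟨g + g', K.add_mem hg hg', ?_⟩
  filter_upwards [h, h', Lp.coeFn_add g g'] with x h1 h2 h3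
  rw [h1, h2, h3, Pi.add_apply]

lemma InK.const_mul {Ω : Type*} [MeasurableSpace Ω] {Q : Measure Ω} {K : Submodule ℝ (Lp ℝ 2 Q)}
    {f : Ω → ℝ} (hf : InK K f) (c : ℝ) : InK K (fun x => c * f x) := by
  obtain ⟨g, hg, h⟩ := hf
  refine ⟨c • g, K.smul_mem c hg, ?_⟩
  filter_upwards [h, Lp.coeFn_smul c g] with x h1 h3
  rw [h1, h3, Pi.smul_apply, smul_eq_mul]

lemma InK.sub {Ω : Type*} [MeasurableSpace Ω] {Q : Measure Ω} {K : Submodule ℝ (Lp ℝ 2 Q)}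
    {f f' : Ω → ℝ} (hf : InK K f) (hf' : InK K f') : InK K (fun x => f x - f' x) := by
  have := hf.add (hf'.const_mul (-1))
  refine this.congr (ae_of_all _ fun x => ?_)
  simp only; ring

lemma InK.zero {Ω : Type*} [MeasurableSpace Ω] {Q : Measure Ω} {K : Submodule ℝ (Lp ℝ 2 Q)} :
    InK K (fun _ => 0) :=
  ⟨0, K.zero_mem, (Lp.coeFn_zero ℝ 2 Q).symm⟩

lemma InK.sum {Ω ι : Type*} [MeasurableSpace Ω] {Q : Measure Ω} {K : Submodule ℝ (Lp ℝ 2 Q)}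
    (s : Finset ι) (f : ι → Ω → ℝ) (hf : ∀ i ∈ s, InK K (f i)) :
    InK K (fun x => ∑ i ∈ s, f i x) := by
  classical
  induction s using Finset.induction_on with
  | empty => simpa using InK.zero
  | insert a s ha ih =>
    simp only [Finset.sum_insert ha]
    exact (hf a (by simp)).add (ih fun i hi => hf i (by simp [hi]))

lemma range_aff_le_GS (Q : Measure E) [IsFiniteMeasure Q] :
    LinearMap.range (aff Q).toLinearMap ≤ GS Q := Submodule.le_topologicalClosure _

lemma InK.aff (Q : Measure E) [IsGaussian Q] (L : StrongDual ℝ E) (c : ℝ) :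
    InK (LinearMap.range (aff Q).toLinearMap) (fun x => L x + c) :=
  ⟨_, ⟨(L, c), rfl⟩, (aff_apply Q L c).symm⟩

lemma InK.dual (Q : Measure E) [IsGaussian Q] (L : StrongDual ℝ E) :
    InK (LinearMap.range (_root_.aff Q).toLinearMap) (fun x => L x) := by
  simpa using InK.aff Q L 0

lemma InK.gaussian {Q : Measure E} [IsGaussian Q] {f : E → ℝ} (hf : InK (GS Q) f) :
    ∃ (m : ℝ) (v : ℝ≥0), Q.map f = gaussianReal m v := by
  obtain ⟨g, hg, h⟩ := hf
  exact ⟨_, _, (Measure.map_congr h).trans (gaussian_of_mem_GS Q g hg)⟩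

/-- A random element all of whose functionals lie in the Gaussian space is Gaussian. -/
lemma hasGaussianLaw_of_InK {Q : Measure E} [IsGaussian Q] {F : Type*} [NormedAddCommGroup F]
    [NormedSpace ℝ F] [MeasurableSpace F] [BorelSpace F] {T : E → F} (hT : Measurable T)
    (h : ∀ L : F →L[ℝ] ℝ, InK (GS Q) (fun x => L (T x))) : HasGaussianLaw T Q := by
  refine ⟨isGaussian_of_map_eq_gaussianReal fun L => ?_⟩
  obtain ⟨m, v, hh⟩ := (h L).gaussian
  refine ⟨m, v, ?_⟩
  rw [Measure.map_map (by fun_prop) hT, ← hh]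
  rfl

end GaussSpace

section Struct

variable {E : Type*} [NormedAddCommGroup E] [NormedSpace ℝ E] [CompleteSpace E]
  [SecondCountableTopology E] [MeasurableSpace E] [BorelSpace E]

lemma pi_functional {ι : Type*} [Fintype ι] [DecidableEq ι] (L : (ι → ℝ) →L[ℝ] ℝ) (x : ι → ℝ) :
    L x = ∑ i, L (Pi.single i 1) * x i := by
  conv_lhs => rw [pi_eq_sum_univ' x]
  rw [map_sum]
  refine Finset.sum_congr rfl fun i _ => ?_
  rw [map_smul, smul_eq_mul, mul_comm]

lemma InK.pi {Ω : Type*} [MeasurableSpace Ω] {Q : Measure Ω} {K : Submodule ℝ (Lp ℝ 2 Q)}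
    {ι : Type*} [Fintype ι] (f : ι → Ω → ℝ) (hf : ∀ i, InK K (f i)) (L : (ι → ℝ) →L[ℝ] ℝ) :
    InK K (fun x => L (fun i => f i x)) := by
  classical
  have h : (fun x => L (fun i => f i x)) = fun x => ∑ i, L (Pi.single i 1) * f i x := by
    ext x
    exact pi_functional L _
  rw [h]
  exact InK.sum _ _ fun i _ => (hf i).const_mul _

lemma cov_Lp2 {Ω : Type*} [MeasurableSpace Ω] {Q : Measure Ω} [IsProbabilityMeasure Q]
    (f g : Lp ℝ 2 Q) (hg : ∫ x, g x ∂Q = 0) : cov[f, g; Q] = inner ℝ f g := by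
  rw [covariance_eq_sub (Lp.memLp f) (Lp.memLp g), hg, mul_zero, sub_zero, inner_Lp2]
  rfl

lemma covariance_congr_ae {Ω : Type*} [MeasurableSpace Ω] {Q : Measure Ω} {f f' g g' : Ω → ℝ}
    (h : f =ᵐ[Q] f') (h' : g =ᵐ[Q] g') : cov[f, g; Q] = cov[f', g'; Q] := by
  unfold covariance
  rw [integral_congr_ae h, integral_congr_ae h']
  refine integral_congr_ae ?_
  filter_upwards [h, h'] with x h1 h2
  rw [h1, h2]

/-- Orthonormal centred elements of the Gaussian space are i.i.d. standard normal. -/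
lemma orthonormal_iid (Q : Measure E) [IsGaussian Q] {ι : Type*} (ζ : ι → Lp ℝ 2 Q)
    (ho : Orthonormal ℝ ζ) (hm : ∀ i, ζ i ∈ GS Q) (h0 : ∀ i, ∫ x, ζ i x ∂Q = 0) :
    iIndepFun (fun i => (ζ i : E → ℝ)) Q ∧ ∀ i, Q.map (ζ i) = gaussianReal 0 1 := by
  constructor
  · rw [iIndepFun_iff_finset]
    intro s
    refine HasGaussianLaw.iIndepFun_of_covariance_eq_zero ?_ ?_
    · refine hasGaussianLaw_of_InK (measurable_pi_lambda _ fun i =>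
        (Lp.stronglyMeasurable (ζ i)).measurable) fun L => ?_
      exact InK.pi (fun (i : s) x => ζ i x) (fun i => InK.coe (hm i)) L
    · intro i j hij
      change cov[ζ i, ζ j; Q] = 0
      rw [cov_Lp2 _ _ (h0 j)]
      exact ho.2 fun h => hij (Subtype.ext h)
  · intro i
    rw [gaussian_of_mem_GS Q _ (hm i), h0 i, ho.1 i]
    simp

variable {F : Type*} [NormedAddCommGroup F] [NormedSpace ℝ F]

/-- affine functionals of `p`. -/
def affZ (Q : Measure E) [IsFiniteMeasure Q] (p : E →L[ℝ] F) :
    (StrongDual ℝ F × ℝ) →L[ℝ] Lp ℝ 2 Q :=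
  (aff Q).comp (((ContinuousLinearMap.compL ℝ E F ℝ).flip p).prodMap (ContinuousLinearMap.id ℝ ℝ))

lemma affZ_eq (Q : Measure E) [IsFiniteMeasure Q] (p : E →L[ℝ] F) (L : StrongDual ℝ F) (c : ℝ) :
    affZ Q p (L, c) = aff Q (L.comp p, c) := rfl

/-- The Gaussian space generated by `p`. -/
def SZ (Q : Measure E) [IsFiniteMeasure Q] (p : E →L[ℝ] F) : Submodule ℝ (Lp ℝ 2 Q) :=
  (LinearMap.range (affZ Q p).toLinearMap).topologicalClosure

lemma SZ_closed (Q : Measure E) [IsFiniteMeasure Q] (p : E →L[ℝ] F) :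
    IsClosed (SZ Q p : Set (Lp ℝ 2 Q)) := Submodule.isClosed_topologicalClosure _

lemma affZ_mem_SZ (Q : Measure E) [IsFiniteMeasure Q] (p : E →L[ℝ] F) (L : StrongDual ℝ F)
    (c : ℝ) : aff Q (L.comp p, c) ∈ SZ Q p :=
  Submodule.le_topologicalClosure _ ⟨(L, c), rfl⟩

lemma SZ_le_GS (Q : Measure E) [IsFiniteMeasure Q] (p : E →L[ℝ] F) : SZ Q p ≤ GS Q := by
  refine Submodule.topologicalClosure_mono ?_
  rintro _ ⟨⟨L, c⟩, rfl⟩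
  exact ⟨(L.comp p, c), rfl⟩

lemma InK.factor {Q : Measure E} [IsGaussian Q] {p : E →L[ℝ] F} [MeasurableSpace F]
    [BorelSpace F] {f : E → ℝ} (hf : InK (SZ Q p) f) :
    ∃ m : F → ℝ, Measurable m ∧ f =ᵐ[Q] fun x => m (p x) := by
  obtain ⟨g, hg, hfg⟩ := hf
  have hp : Measurable p := p.continuous.measurable
  have hle : MeasurableSpace.comap p inferInstance ≤ (inferInstance : MeasurableSpace E) :=
    hp.comap_le
  have h1 : SZ Q p ≤ lpMeas ℝ ℝ (MeasurableSpace.comap p inferInstance) 2 Q := by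
    refine Submodule.topologicalClosure_minimal _ ?_ ?_
    · rintro _ ⟨⟨L, c⟩, rfl⟩
      rw [mem_lpMeas_iff_aestronglyMeasurable]
      refine ⟨fun x => L (p x) + c, ?_, aff_apply Q (L.comp p) c⟩
      refine Measurable.stronglyMeasurable ?_
      have h : Measurable[MeasurableSpace.comap p inferInstance] p := comap_measurable _
      exact (L.continuous.measurable.comp h).add_const c
    · have : Fact (1 ≤ (2 : ℝ≥0∞)) := ⟨by norm_num⟩
      have := isClosed_aestronglyMeasurable (F := ℝ) (p := 2) (μ := Q) hle
      exact this
  have h2 := (mem_lpMeas_iff_aestronglyMeasurable).1 (h1 hg)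
  obtain ⟨g', hg', hae⟩ := h2
  obtain ⟨m, hm, hmg⟩ := hg'.measurable.exists_eq_measurable_comp
  refine ⟨m, hm, hfg.trans (hae.trans ?_)⟩
  rw [hmg]
  rfl

/-- Innovations of the finitely many functionals `Y l` with respect to the Gaussian space of `p`. -/
lemma exists_innovations (Q : Measure E) [IsGaussian Q] (p : E →L[ℝ] F) {d : ℕ}
    (Y : Fin d → StrongDual ℝ E) :
    ∃ (r : ℕ) (G : Fin r → Lp ℝ 2 Q), Orthonormal ℝ G ∧ (∀ k, G k ∈ GS Q) ∧
      (∀ k, ∀ f ∈ SZ Q p, inner ℝ (G k) f = 0) ∧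
      ∀ l, aff Q (Y l, 0) - ∑ k, inner ℝ (G k) (aff Q (Y l, 0)) • G k ∈ SZ Q p := by
  have : CompleteSpace (SZ Q p) := (SZ_closed Q p).completeSpace_coe
  set y : Fin d → Lp ℝ 2 Q := fun l => aff Q (Y l, 0) with hy
  set P := (SZ Q p).starProjection
  set ε : Fin d → Lp ℝ 2 Q := fun l => y l - P (y l) with hε
  set W := Submodule.span ℝ (Set.range ε)
  have hfin : FiniteDimensional ℝ W := FiniteDimensional.span_of_finite ℝ (Set.finite_range ε)
  set b := stdOrthonormalBasis ℝ W
  have hPmem : ∀ v, P v ∈ SZ Q p := fun v => Submodule.starProjection_apply_mem _ v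
  have hW1 : W ≤ GS Q := by
    refine Submodule.span_le.2 ?_
    rintro _ ⟨l, rfl⟩
    exact (GS Q).sub_mem (range_aff_le_GS Q ⟨_, rfl⟩) (SZ_le_GS Q p (hPmem _))
  have hW2 : W ≤ (SZ Q p)ᗮ := by
    refine Submodule.span_le.2 ?_
    rintro _ ⟨l, rfl⟩
    exact Submodule.sub_starProjection_mem_orthogonal _
  have horth : ∀ w ∈ W, ∀ f ∈ SZ Q p, inner ℝ w f = 0 := fun w hw f hf => by
    rw [real_inner_comm]
    exact hW2 hw f hf
  refine ⟨Module.finrank ℝ W, fun k => (b k : Lp ℝ 2 Q), ?_, fun k => hW1 (b k).2,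
    fun k => horth _ (b k).2, fun l => ?_⟩
  · exact b.orthonormal.comp_linearIsometry W.subtypeₗᵢ
  · have h1 : ∀ k, inner ℝ (b k : Lp ℝ 2 Q) (y l) = inner ℝ (b k : Lp ℝ 2 Q) (ε l) := by
      intro k
      rw [hε, inner_sub_right, horth _ (b k).2 _ (hPmem _), sub_zero]
    have h2 : ∑ k, inner ℝ (b k : Lp ℝ 2 Q) (y l) • (b k : Lp ℝ 2 Q) = ε l := by
      have := b.sum_repr' ⟨ε l, Submodule.subset_span ⟨l, rfl⟩⟩
      have h3 := congrArg (Subtype.val) this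
      simp only [Submodule.coe_sum, Submodule.coe_smul] at h3
      rw [← h3]
      simp only [h1]
      simp [Submodule.coe_inner]
    change y l - ∑ k, inner ℝ (b k : Lp ℝ 2 Q) (y l) • (b k : Lp ℝ 2 Q) ∈ _
    rw [h2, hε]
    simpa using hPmem _

/-- The directions `E[G • x]`. -/
def dirE (Q : Measure E) (g : Lp ℝ 2 Q) : E := ∫ x, g x • x ∂Q

lemma dual_dirE (Q : Measure E) [IsGaussian Q] (g : Lp ℝ 2 Q) (L : StrongDual ℝ E) :
    L (dirE Q g) = inner ℝ g (aff Q (L, 0)) := by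
  have hInteg : Integrable (fun x => g x • x) Q :=
    memLp_one_iff_integrable.1
      (MemLp.smul (p := 2) (q := 2) (IsGaussian.memLp_two_id (μ := Q)) (Lp.memLp g))
  rw [dirE, ← L.integral_comp_comm hInteg, inner_Lp2]
  refine integral_congr_ae ?_
  filter_upwards [aff_apply Q L 0] with x hx
  simp [hx]

lemma p_dirE (Q : Measure E) [IsGaussian Q] (p : E →L[ℝ] F) (g : Lp ℝ 2 Q)
    (hg : ∀ f ∈ SZ Q p, inner ℝ g f = 0) : p (dirE Q g) = 0 := by
  refine SeparatingDual.eq_zero_of_forall_dual_eq_zero (R := ℝ) fun L => ?_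
  have := dual_dirE Q g (L.comp p)
  rw [hg _ (affZ_mem_SZ Q p L 0)] at this
  exact this

/-- The residual. -/
def resid (Q : Measure E) {r : ℕ} (G : Fin r → Lp ℝ 2 Q) (x : E) : E :=
  x - ∑ k, G k x • dirE Q (G k)

lemma measurable_resid (Q : Measure E) {r : ℕ} (G : Fin r → Lp ℝ 2 Q) : Measurable (resid Q G) := by
  have := fun k => (Lp.stronglyMeasurable (G k)).measurable
  unfold resid
  fun_prop

lemma indep_resid (Q : Measure E) [IsGaussian Q] {r : ℕ} (G : Fin r → Lp ℝ 2 Q)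
    (ho : Orthonormal ℝ G) (hG : ∀ k, G k ∈ GS Q) (h0 : ∀ k, ∫ x, G k x ∂Q = 0) :
    IndepFun (resid Q G) (fun x k => G k x) Q := by
  have hres : ∀ L : StrongDual ℝ E, (fun x => L (resid Q G x)) =ᵐ[Q]
      (aff Q (L, 0) - ∑ k, L (dirE Q (G k)) • G k : Lp ℝ 2 Q) := by
    intro L
    have hs : ∀ᵐ x ∂Q, ∀ k, (L (dirE Q (G k)) • G k : Lp ℝ 2 Q) x = L (dirE Q (G k)) * G k x := by
      rw [ae_all_iff]
      intro k
      filter_upwards [Lp.coeFn_smul (L (dirE Q (G k))) (G k)] with x hx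
      rw [hx]; rfl
    filter_upwards [aff_apply Q L 0, Lp.coeFn_sub (aff Q (L, 0)) (∑ k, L (dirE Q (G k)) • G k),
      Lp.coeFn_fun_finsetSum Finset.univ (fun k => L (dirE Q (G k)) • G k), hs] with x h1 h2 h3 h4
    rw [h2, Pi.sub_apply, h1, h3]
    simp [resid, h4, mul_comm]
  have hmem : ∀ L : StrongDual ℝ E,
      (aff Q (L, 0) - ∑ k, L (dirE Q (G k)) • G k : Lp ℝ 2 Q) ∈ GS Q := fun L =>
    (GS Q).sub_mem (range_aff_le_GS Q ⟨_, rfl⟩) ((GS Q).sum_mem fun k _ => (GS Q).smul_mem _ (hG k))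
  have hmG : Measurable (fun x k => G k x) :=
    measurable_pi_lambda _ fun k => (Lp.stronglyMeasurable (G k)).measurable
  refine HasGaussianLaw.indepFun_of_covariance_strongDual ?_ ?_
  · refine hasGaussianLaw_of_InK ((measurable_resid Q G).prodMk hmG) fun L => ?_
    have : (fun x => L (resid Q G x, fun k => G k x)) = fun x =>
        (L.comp (ContinuousLinearMap.inl ℝ E (Fin r → ℝ))) (resid Q G x) +
        (L.comp (ContinuousLinearMap.inr ℝ E (Fin r → ℝ))) (fun k => G k x) := by
      ext x
      simp [← map_add]
    rw [this]
    refine InK.add ?_ (InK.pi _ (fun k => InK.coe (hG k)) _)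
    exact ⟨_, hmem _, hres _⟩
  · intro L₁ L₂
    have h2 : (L₂ ∘ fun x k => G k x) = fun x => ∑ k, L₂ (Pi.single k 1) * G k x := by
      ext x
      exact pi_functional L₂ _
    rw [h2, covariance_fun_sum_right (fun k => (Lp.memLp (G k)).const_mul _)]
    · refine Finset.sum_eq_zero fun k _ => ?_
      rw [covariance_const_mul_right]
      have : cov[L₁ ∘ resid Q G, G k; Q] = 0 := by
        have h3 : L₁ ∘ resid Q G =ᵐ[Q] _ := hres L₁
        rw [covariance_congr_ae h3 (ae_eq_rfl), cov_Lp2 _ _ (h0 k)]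
        rw [inner_sub_left, sum_inner, Finset.sum_eq_single k, inner_smul_left, dual_dirE,
          real_inner_self_eq_norm_sq, ho.1 k, real_inner_comm]
        · simp
        · intro j _ hj
          rw [inner_smul_left, ho.2 hj, mul_zero]
        · simp
      rw [this, mul_zero]
    · exact MemLp.ae_eq (hres L₁).symm (Lp.memLp _)

/-- disintegration of `Q` as residual plus independent standard normal innovation. -/
lemma Q_eq_map (Q : Measure E) [IsGaussian Q] {r : ℕ} (G : Fin r → Lp ℝ 2 Q)
    (ho : Orthonormal ℝ G) (hG : ∀ k, G k ∈ GS Q) (h0 : ∀ k, ∫ x, G k x ∂Q = 0) :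
    Q = ((Q.map (resid Q G)).prod (gam (Fin r))).map
      (fun vx => vx.1 + ∑ k, vx.2 k • dirE Q (G k)) := by
  have hmG : Measurable (fun x k => G k x) :=
    measurable_pi_lambda _ fun k => (Lp.stronglyMeasurable (G k)).measurable
  have h1 := (indepFun_iff_map_prod_eq_prod_map_map (measurable_resid Q G).aemeasurable
    hmG.aemeasurable).1 (indep_resid Q G ho hG h0)
  obtain ⟨hi, hl⟩ := orthonormal_iid Q G ho hG h0
  have h2 : Q.map (fun x k => G k x) = gam (Fin r) := by
    have := (iIndepFun_iff_map_fun_eq_pi_map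
      (fun k => (Lp.stronglyMeasurable (G k)).measurable.aemeasurable)).1 hi
    rw [this]
    simp only [hl]
  rw [← h2, ← h1, Measure.map_map (by fun_prop) ((measurable_resid Q G).prodMk hmG)]
  have : (fun vx : E × (Fin r → ℝ) => vx.1 + ∑ k, vx.2 k • dirE Q (G k)) ∘
      (fun x => (resid Q G x, fun k => G k x)) = id := by
    ext x
    simp [resid]
  rw [this, Measure.map_id]

end Struct

section Indep

/-- i.i.d. standard normal sequences are a.s. unbounded. -/
lemma iid_bounded_null {Ω : Type*} [MeasurableSpace Ω] {Q : Measure Ω} [IsProbabilityMeasure Q]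
    (ζ : ℕ → Ω → ℝ) (hm : ∀ j, Measurable (ζ j)) (hi : iIndepFun ζ Q)
    (hl : ∀ j, Q.map (ζ j) = gaussianReal 0 1) (R : ℝ) : Q {x | ∀ j, |ζ j x| ≤ R} = 0 := by
  set q := gaussianReal 0 1 (Set.Icc (-R) R) with hq
  have hq1 : q < 1 := by
    have h1 : gaussianReal 0 1 (Set.Icc (-R) R)ᶜ ≠ 0 := by
      intro h0
      have := gaussianReal_absolutelyContinuous' 0 (v := 1) one_ne_zero h0
      have h2 : volume (Set.Ioi R) ≤ volume (Set.Icc (-R) R)ᶜ := by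
        refine measure_mono fun x hx => ?_
        simp only [Set.mem_compl_iff, Set.mem_Icc, not_and, not_le]
        exact fun _ => hx
      rw [this, Real.volume_Ioi] at h2
      simp at h2
    rw [prob_compl_eq_one_sub measurableSet_Icc] at h1
    exact tsub_pos_iff_lt.1 (pos_iff_ne_zero.2 h1)
  have hbound : ∀ M : ℕ, Q {x | ∀ j, |ζ j x| ≤ R} ≤ q ^ M := by
    intro M
    have h := hi.measure_inter_preimage_eq_mul (Finset.range M) (sets := fun _ => Set.Icc (-R) R)
      (fun _ _ => measurableSet_Icc)
    have h2 : ∏ i ∈ Finset.range M, Q (ζ i ⁻¹' Set.Icc (-R) R) = q ^ M := by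
      rw [Finset.prod_congr rfl (g := fun _ => q)]
      · simp
      · intro j _
        rw [← Measure.map_apply (hm j) measurableSet_Icc, hl j]
    rw [← h2, ← h]
    refine measure_mono fun x hx => ?_
    simp only [Set.mem_iInter, Set.mem_preimage, Set.mem_Icc]
    exact fun j _ => abs_le.1 (hx j)
  have := ENNReal.tendsto_pow_atTop_nhds_zero_of_lt_one hq1
  exact le_antisymm (ge_of_tendsto' this hbound) bot_le

variable {E : Type*} [NormedAddCommGroup E] [NormedSpace ℝ E] [CompleteSpace E]
  [SecondCountableTopology E] [MeasurableSpace E] [BorelSpace E]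

lemma integral_aff (Q : Measure E) [IsGaussian Q] (L : StrongDual ℝ E) (c : ℝ) :
    ∫ x, aff Q (L, c) x ∂Q = L (∫ x, x ∂Q) + c := by
  rw [integral_congr_ae (aff_apply Q L c), integral_add _ (integrable_const c), integral_const,
    IsGaussian.integral_dual]
  · simp
  · exact L.integrable_comp IsGaussian.integrable_id

/-- A sequence of orthonormal centred functionals. -/
lemma exists_zeta {H : Type*} [NormedAddCommGroup H] [InnerProductSpace ℝ H] [CompleteSpace H]
    (Q : Measure E) [IsGaussian Q] (p : E →L[ℝ] H) (hp : Function.Surjective p)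
    (hinf : ¬ FiniteDimensional ℝ H) (hinj : ∀ L c, aff Q (L, c) = 0 → L = 0) :
    ∃ (L : ℕ → StrongDual ℝ H) (c : ℕ → ℝ),
      Orthonormal ℝ (fun j => aff Q ((L j).comp p, c j)) ∧
      ∀ j, ∫ x, aff Q ((L j).comp p, c j) x ∂Q = 0 := by
  set m := ∫ x, x ∂Q
  let T : H →ₗ[ℝ] Lp ℝ 2 Q :=
    { toFun := fun h => aff Q ((innerSL ℝ h).comp p, - innerSL ℝ h (p m))
      map_add' := fun a b => by
        rw [← map_add]
        congr 1
        ext <;> simp [add_comm]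
      map_smul' := fun a b => by
        rw [RingHom.id_apply, ← map_smul]
        congr 1
        ext <;> simp }
  have hT : LinearMap.ker T = ⊥ := by
    refine LinearMap.ker_eq_bot'.2 fun h hh => ?_
    have h1 := hinj _ _ hh
    obtain ⟨x, hx⟩ := hp h
    have := congrArg (fun L => L x) h1
    simpa [hx] using this
  let b := Module.Basis.ofVectorSpace ℝ H
  have hinf' : Infinite (Module.Basis.ofVectorSpaceIndex ℝ H) := by
    by_contra hh
    rw [not_infinite_iff_finite] at hh
    exact hinf (Module.Finite.of_basis b)
  let v : ℕ → Lp ℝ 2 Q := fun j => T (b (Infinite.natEmbedding _ j))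
  have hv : LinearIndependent ℝ v :=
    (b.linearIndependent.comp _ (Infinite.natEmbedding _).injective).map' T hT
  have ho := InnerProductSpace.gramSchmidtNormed_orthonormal hv
  have hr : ∀ j, ∃ h, T h = InnerProductSpace.gramSchmidtNormed ℝ v j := by
    intro j
    have h1 : InnerProductSpace.gramSchmidtNormed ℝ v j ∈ Submodule.span ℝ (Set.range v) := by
      rw [← InnerProductSpace.span_gramSchmidt ℝ v, ← InnerProductSpace.span_gramSchmidtNormed_range]
      exact Submodule.subset_span ⟨j, rfl⟩
    have h2 : Submodule.span ℝ (Set.range v) ≤ LinearMap.range T := by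
      refine Submodule.span_le.2 ?_
      rintro _ ⟨i, rfl⟩
      exact ⟨_, rfl⟩
    exact h2 h1
  choose h hh using hr
  refine ⟨fun j => innerSL ℝ (h j), fun j => - innerSL ℝ (h j) (p m), ?_, fun j => ?_⟩
  · have : (fun j => aff Q ((innerSL ℝ (h j)).comp p, - innerSL ℝ (h j) (p m))) =
        InnerProductSpace.gramSchmidtNormed ℝ v := by
      ext1 j
      exact hh j
    rw [this]
    exact ho
  · rw [integral_aff]
    simp [m]

/-- The Gaussian space of `p` is not contained in a finite extension of the space of
continuous functionals. -/
lemma SZ_not_le {H : Type*} [NormedAddCommGroup H] [NormedSpace ℝ H]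
    (Q : Measure E) [IsGaussian Q] (p : E →L[ℝ] H) (L : ℕ → StrongDual ℝ H) (c : ℕ → ℝ)
    (ho : Orthonormal ℝ (fun j => aff Q ((L j).comp p, c j)))
    (h0 : ∀ j, ∫ x, aff Q ((L j).comp p, c j) x ∂Q = 0) {q : ℕ} (f : Fin q → Lp ℝ 2 Q) :
    ¬ SZ Q p ≤ LinearMap.range (aff Q).toLinearMap ⊔ Submodule.span ℝ (Set.range f) := by
  intro hle
  let B : ((StrongDual ℝ E × ℝ) × (Fin q → ℝ)) →L[ℝ] Lp ℝ 2 Q :=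
    (aff Q).coprod (∑ i, (ContinuousLinearMap.proj (R := ℝ) (φ := fun _ : Fin q => ℝ) i).smulRight
      (f i))
  have hB : ∀ L c a, B ((L, c), a) = aff Q (L, c) + ∑ i, a i • f i := by
    intro L c a
    simp [B]
  let D := (SZ Q p).comap B.toLinearMap
  have hD : IsClosed (D : Set ((StrongDual ℝ E × ℝ) × (Fin q → ℝ))) :=
    (SZ_closed Q p).preimage B.continuous
  have : CompleteSpace D := hD.completeSpace_coe
  have : CompleteSpace (SZ Q p) := (SZ_closed Q p).completeSpace_coe
  let B' : D →L[ℝ] SZ Q p := (B.comp D.subtypeL).codRestrict (SZ Q p) (fun x => x.2)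
  have hsurj : Function.Surjective B' := by
    rintro ⟨y, hy⟩
    obtain ⟨y1, ⟨⟨L, c⟩, rfl⟩, y2, hy2, hsum⟩ := Submodule.mem_sup.1 (hle hy)
    obtain ⟨a, rfl⟩ := (Submodule.mem_span_range_iff_exists_fun ℝ).1 hy2
    have hh : B ((L, c), a) = y := by
      rw [hB]
      exact hsum
    exact ⟨⟨((L, c), a), by change B ((L, c), a) ∈ SZ Q p; rwa [hh]⟩, Subtype.ext hh⟩
  obtain ⟨C, hC, hpre⟩ := ContinuousLinearMap.exists_preimage_norm_le (E := D) (F := SZ Q p) (σ := RingHom.id ℝ) (σ' := RingHom.id ℝ) B' hsurj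
  set ζ : ℕ → Lp ℝ 2 Q := fun j => aff Q ((L j).comp p, c j) with hζ
  have hmem : ∀ j, ζ j ∈ SZ Q p := fun j => affZ_mem_SZ Q p _ _
  have hbd : ∀ j, ∀ᵐ x ∂Q, |ζ j x| ≤ C * (‖x‖ + 1 + ∑ i, |f i x|) := by
    intro j
    obtain ⟨⟨⟨⟨L', c'⟩, a⟩, hd⟩, hx1, hx2⟩ := hpre ⟨ζ j, hmem j⟩
    have h1 : B ((L', c'), a) = ζ j := congrArg Subtype.val hx1
    have h2 : ‖((L', c'), a)‖ ≤ C := by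
      have : ‖(⟨ζ j, hmem j⟩ : SZ Q p)‖ = 1 := ho.1 j
      rw [this, mul_one] at hx2
      exact hx2
    have hL : ‖L'‖ ≤ C := (norm_fst_le (L', c')).trans ((norm_fst_le ((L', c'), a)).trans h2)
    have hc : ‖c'‖ ≤ C := (norm_snd_le (L', c')).trans ((norm_fst_le ((L', c'), a)).trans h2)
    have ha : ∀ i, |a i| ≤ C := fun i =>
      (norm_le_pi_norm a i).trans ((norm_snd_le ((L', c'), a)).trans h2)
    rw [hB] at h1
    have hs : ∀ᵐ x ∂Q, ∀ i, (a i • f i : Lp ℝ 2 Q) x = a i * f i x := by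
      rw [ae_all_iff]
      intro k
      filter_upwards [Lp.coeFn_smul (a k) (f k)] with x hx
      rw [hx]; rfl
    filter_upwards [aff_apply Q L' c', Lp.coeFn_add (aff Q (L', c')) (∑ i, a i • f i),
      Lp.coeFn_fun_finsetSum Finset.univ (fun k => a k • f k), hs] with x g1 g2 g3 g4
    rw [← h1, g2, Pi.add_apply, g1, g3]
    simp only [g4]
    have e1 : |L' x| ≤ C * ‖x‖ := (L'.le_opNorm x).trans (by gcongr)
    have e2 : |∑ i, a i * f i x| ≤ ∑ i, C * |f i x| := by
      refine (Finset.abs_sum_le_sum_abs _ _).trans (Finset.sum_le_sum fun i _ => ?_)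
      rw [abs_mul]
      exact mul_le_mul_of_nonneg_right (ha i) (abs_nonneg _)
    rw [← Finset.mul_sum] at e2
    have e3 := abs_add_le (L' x + c') (∑ i, a i * f i x)
    have e4 := abs_add_le (L' x) c'
    rw [Real.norm_eq_abs] at hc
    linarith
  obtain ⟨hi, hl⟩ := orthonormal_iid Q ζ ho (fun j => SZ_le_GS Q p (hmem j)) h0
  have hnull : ∀ N : ℕ, ∀ᵐ x ∂Q, ¬ ∀ j, |ζ j x| ≤ N := by
    intro N
    rw [ae_iff]
    simpa using iid_bounded_null (fun j => (ζ j : E → ℝ))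
      (fun j => (Lp.stronglyMeasurable (ζ j)).measurable) hi hl N
  have hF : ∀ᵐ x ∂Q, False := by
    filter_upwards [ae_all_iff.2 hbd, ae_all_iff.2 hnull] with x h1 h2
    obtain ⟨N, hN⟩ := exists_nat_ge (C * (‖x‖ + 1 + ∑ i, |f i x|))
    exact h2 N fun j => (h1 j).trans hN
  rw [ae_iff] at hF
  simp at hF

lemma exists_tau {V : Type*} [AddCommGroup V] [Module ℝ V] (S A W : Submodule ℝ V)
    (h : ∀ {q : ℕ} (f : Fin q → V), ¬ S ≤ A ⊔ Submodule.span ℝ (Set.range f))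
    (hW : W.FG) (r : ℕ) :
    ∃ τ : Fin r → V, (∀ k, τ k ∈ S) ∧ ∀ c : Fin r → ℝ, ∑ k, c k • τ k ∈ A ⊔ W → c = 0 := by
  induction r with
  | zero => exact ⟨Fin.elim0, fun k => k.elim0, fun c _ => Subsingleton.elim _ _⟩
  | succ r ih =>
    obtain ⟨τ, hτ, hind⟩ := ih
    have hfg : (W ⊔ Submodule.span ℝ (Set.range τ)).FG :=
      hW.sup (Submodule.fg_span (Set.finite_range τ))
    obtain ⟨q, f, hf⟩ := Submodule.fg_iff_exists_fin_generating_family.1 hfg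
    have := h f
    rw [hf, SetLike.not_le_iff_exists] at this
    obtain ⟨t, htS, ht⟩ := this
    refine ⟨Fin.cons t τ, fun k => ?_, fun c hc => ?_⟩
    · refine Fin.cases ?_ (fun i => ?_) k
      · simpa using htS
      · simpa using hτ i
    · rw [Fin.sum_univ_succ] at hc
      simp only [Fin.cons_zero, Fin.cons_succ] at hc
      have hc0 : c 0 = 0 := by
        by_contra hne
        apply ht
        have h1 : A ⊔ W ≤ A ⊔ (W ⊔ Submodule.span ℝ (Set.range τ)) :=
          sup_le_sup_left le_sup_left _
        have h2 : ∑ i : Fin r, c i.succ • τ i ∈ A ⊔ (W ⊔ Submodule.span ℝ (Set.range τ)) :=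
          Submodule.sum_mem _ fun i _ => Submodule.smul_mem _ _
            ((le_sup_right.trans le_sup_right : Submodule.span ℝ (Set.range τ) ≤
              A ⊔ (W ⊔ Submodule.span ℝ (Set.range τ))) (Submodule.subset_span ⟨i, rfl⟩))
        have h3 := Submodule.sub_mem _ (h1 hc) h2
        rw [add_sub_cancel_right] at h3
        have h4 := Submodule.smul_mem _ (c 0)⁻¹ h3
        rwa [smul_smul, inv_mul_cancel₀ hne, one_smul] at h4
      rw [hc0, zero_smul, zero_add] at hc
      have h5 := hind _ hc
      ext k
      refine Fin.cases hc0 (fun i => ?_) k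
      exact congrFun h5 i

end Indep

section Null

lemma condIndep_of_ae {Ω α β γ : Type*} [MeasurableSpace Ω] [MeasurableSpace α] [MeasurableSpace β]
    [MeasurableSpace γ] (μ : Measure Ω) [IsProbabilityMeasure μ] (X : Ω → α) (Y : Ω → β) (Z : Ω → γ)
    (hX : Measurable X) (hZ : Measurable Z) (ρ : γ → β) (hρ : Measurable ρ)
    (h : ∀ᵐ ω ∂μ, Y ω = ρ (Z ω)) : CondIndepGiven μ X Y Z := by
  rintro f g hf hg ⟨C, hC⟩ ⟨C', hC'⟩
  have hle := hZ.comap_le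
  set m := MeasurableSpace.comap Z inferInstance with hm
  have hZm : Measurable[m] Z := comap_measurable Z
  have h1 : (fun ω => g (Y ω)) =ᵐ[μ] fun ω => g (ρ (Z ω)) := by
    filter_upwards [h] with ω hω
    rw [hω]
  have h2 : (fun ω => f (X ω) * g (Y ω)) =ᵐ[μ] fun ω => f (X ω) * g (ρ (Z ω)) := by
    filter_upwards [h] with ω hω
    rw [hω]
  have hsm : StronglyMeasurable[m] fun ω => g (ρ (Z ω)) :=
    ((hg.comp hρ).comp hZm).stronglyMeasurable
  have hgi : Integrable (fun ω => g (ρ (Z ω))) μ :=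
    Integrable.of_bound ((hg.comp hρ).comp hZ).aestronglyMeasurable C'
      (ae_of_all _ fun ω => hC' _)
  have hfi : Integrable (fun ω => f (X ω)) μ :=
    Integrable.of_bound (hf.comp hX).aestronglyMeasurable C (ae_of_all _ fun ω => hC _)
  have hfgi : Integrable (fun ω => f (X ω) * g (ρ (Z ω))) μ := by
    refine Integrable.of_bound ((hf.comp hX).mul ((hg.comp hρ).comp hZ)).aestronglyMeasurable
      (C * C') (ae_of_all _ fun ω => ?_)
    rw [Real.norm_eq_abs, abs_mul]
    exact mul_le_mul (hC _) (hC' _) (abs_nonneg _) ((abs_nonneg _).trans (hC (X ω)))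
  have h3 : μ[(fun ω => g (Y ω))|m] =ᵐ[μ] fun ω => g (ρ (Z ω)) :=
    (condExp_congr_ae h1).trans (by rw [condExp_of_stronglyMeasurable hle hsm hgi])
  have h4 := condExp_mul_of_stronglyMeasurable_right (μ := μ) (m := m) hsm hfgi hfi
  filter_upwards [condExp_congr_ae (m := m) h2, h3, h4] with ω e1 e2 e3
  rw [e1, e2]
  exact e3

variable {E : Type*} [NormedAddCommGroup E] [NormedSpace ℝ E] [CompleteSpace E]
  [SecondCountableTopology E] [MeasurableSpace E] [BorelSpace E]
  {F : Type*} [NormedAddCommGroup F] [NormedSpace ℝ F] [MeasurableSpace F] [BorelSpace F]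

/-- Null map -/
def nullMap (Q : Measure E) (p : E →L[ℝ] F) {r : ℕ} (G : Fin r → Lp ℝ 2 Q) (w : Fin r → F → ℝ)
    (v : E) : E := v + ∑ k, w k (p v) • dirE Q (G k)

lemma measurable_nullMap (Q : Measure E) (p : E →L[ℝ] F) {r : ℕ} (G : Fin r → Lp ℝ 2 Q)
    (w : Fin r → F → ℝ) (hw : ∀ k, Measurable (w k)) : Measurable (nullMap Q p G w) := by
  have hp : Measurable p := p.continuous.measurable
  unfold nullMap
  fun_prop

/-- Null measure -/
def nullMeas (Q : Measure E) (p : E →L[ℝ] F) {r : ℕ} (G : Fin r → Lp ℝ 2 Q) (w : Fin r → F → ℝ) :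
    Measure E := (Q.map (resid Q G)).map (nullMap Q p G w)

variable (Q : Measure E) [IsGaussian Q] (p : E →L[ℝ] F) {r : ℕ} (G : Fin r → Lp ℝ 2 Q)

lemma p_resid
    (hSZ : ∀ k, ∀ f ∈ SZ Q p, inner ℝ (G k) f = 0)
    (x : E) : p (resid Q G x) = p x := by
  simp [resid, fun k => p_dirE Q p (G k) (hSZ k)]

lemma p_nullMap
    (hSZ : ∀ k, ∀ f ∈ SZ Q p, inner ℝ (G k) f = 0)
    (w : Fin r → F → ℝ)
    (x : E) : p (nullMap Q p G w x) = p x := by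
  simp [nullMap, fun k => p_dirE Q p (G k) (hSZ k)]

lemma dual_null
    (hSZ : ∀ k, ∀ f ∈ SZ Q p, inner ℝ (G k) f = 0)
    (w : Fin r → F → ℝ)
    (L : StrongDual ℝ E) (x : E) : L (nullMap Q p G w (resid Q G x)) =
    L x - ∑ k, L (dirE Q (G k)) * G k x + ∑ k, L (dirE Q (G k)) * w k (p x) := by
  simp only [nullMap, p_resid Q p G hSZ]
  simp [resid, mul_comm]

lemma nullMeas_eq
    (w : Fin r → F → ℝ)
    (hw : ∀ k, Measurable (w k))
    : nullMeas Q p G w = Q.map (fun x => nullMap Q p G w (resid Q G x)) := by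
  rw [nullMeas, Measure.map_map (measurable_nullMap Q p G w hw) (measurable_resid Q G)]
  rfl

lemma meas_null
    (w : Fin r → F → ℝ)
    (hw : ∀ k, Measurable (w k))
    : Measurable (fun x => nullMap Q p G w (resid Q G x)) :=
  (measurable_nullMap Q p G w hw).comp (measurable_resid Q G)

lemma nullMeas_prob
    (w : Fin r → F → ℝ)
    (hw : ∀ k, Measurable (w k))
    : IsProbabilityMeasure (nullMeas Q p G w) := by
  rw [nullMeas_eq Q p G w hw]
  exact Measure.isProbabilityMeasure_map (meas_null Q p G w hw).aemeasurable

lemma nullMeas_marginal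
    (hSZ : ∀ k, ∀ f ∈ SZ Q p, inner ℝ (G k) f = 0)
    (w : Fin r → F → ℝ)
    (hw : ∀ k, Measurable (w k))
    : (nullMeas Q p G w).map p = Q.map p := by
  rw [nullMeas_eq Q p G w hw, Measure.map_map p.continuous.measurable (meas_null Q p G w hw)]
  congr 1
  ext x
  simp [p_nullMap Q p G hSZ w, p_resid Q p G hSZ]

lemma InK_null
    (hSZ : ∀ k, ∀ f ∈ SZ Q p, inner ℝ (G k) f = 0)
    (w : Fin r → F → ℝ)
    (hG : ∀ k, G k ∈ GS Q) (hwS : ∀ k, InK (SZ Q p) (fun x => w k (p x)))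
    (L : StrongDual ℝ E) : InK (GS Q) (fun x => L (nullMap Q p G w (resid Q G x))) := by
  simp only [dual_null Q p G hSZ w]
  refine InK.add (InK.sub ((InK.dual Q L).mono (range_aff_le_GS Q)) ?_) ?_
  · exact InK.sum _ _ fun k _ => (InK.coe (hG k)).const_mul _
  · exact InK.sum _ _ fun k _ => ((hwS k).mono (SZ_le_GS Q p)).const_mul _

lemma nullMeas_gaussian
    (hSZ : ∀ k, ∀ f ∈ SZ Q p, inner ℝ (G k) f = 0)
    (w : Fin r → F → ℝ)
    (hw : ∀ k, Measurable (w k))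
    (hG : ∀ k, G k ∈ GS Q) (hwS : ∀ k, InK (SZ Q p) (fun x => w k (p x))) :
    IsGaussianMeasure (nullMeas Q p G w) := by
  intro L
  obtain ⟨m, v, h⟩ := (InK_null Q p G hSZ w hG hwS L).gaussian
  refine ⟨m, v, ?_⟩
  rw [nullMeas_eq Q p G w hw, Measure.map_map L.continuous.measurable (meas_null Q p G w hw), ← h]
  rfl

lemma nullMeas_inj
    (hSZ : ∀ k, ∀ f ∈ SZ Q p, inner ℝ (G k) f = 0)
    (w : Fin r → F → ℝ)
    (hw : ∀ k, Measurable (w k))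
    (hG : ∀ k, G k ∈ GS Q) (hwS : ∀ k, InK (SZ Q p) (fun x => w k (p x)))
    (hinj : ∀ L c, aff Q (L, c) = 0 → L = 0)
    (hind : ∀ c : Fin r → ℝ, InK (LinearMap.range (aff Q).toLinearMap ⊔
      Submodule.span ℝ (Set.range G)) (fun x => ∑ k, c k * w k (p x)) → c = 0) :
    HasInjectiveCovariance (nullMeas Q p G w) := by
  intro L hL
  have h1 := hL L
  set m := ∫ y, L y ∂(nullMeas Q p G w)
  have hT := meas_null Q p G w hw
  have h2 : ∫ x, (L (nullMap Q p G w (resid Q G x)) - m) ^ 2 ∂Q = 0 := by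
    rw [covForm, nullMeas_eq Q p G w hw, integral_map hT.aemeasurable (by fun_prop)] at h1
    rw [← nullMeas_eq Q p G w hw] at h1
    simpa only [sq] using h1
  obtain ⟨g, hg, hae⟩ := InK_null Q p G hSZ w hG hwS L
  have hmem : MemLp (fun x => L (nullMap Q p G w (resid Q G x)) - m) 2 Q :=
    (MemLp.ae_eq hae.symm (Lp.memLp g)).sub (memLp_const m)
  rw [integral_eq_zero_iff_of_nonneg (fun x => sq_nonneg _) hmem.integrable_sq] at h2
  have h3 : ∀ᵐ x ∂Q, L x - ∑ k, L (dirE Q (G k)) * G k x + ∑ k, L (dirE Q (G k)) * w k (p x) = m := by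
    filter_upwards [h2] with x hx
    have hx' : (L (nullMap Q p G w (resid Q G x)) - m) ^ 2 = 0 := hx
    rw [sq_eq_zero_iff, dual_null Q p G hSZ w] at hx'
    linarith
  have h4 : (fun k => L (dirE Q (G k))) = 0 := by
    refine hind _ ?_
    have i1 : InK (LinearMap.range (aff Q).toLinearMap ⊔
      Submodule.span ℝ (Set.range G)) (fun x => (-L) x + m) := (InK.aff Q (-L) m).mono le_sup_left
    have i2 : InK (LinearMap.range (aff Q).toLinearMap ⊔
      Submodule.span ℝ (Set.range G)) (fun x => ∑ k, L (dirE Q (G k)) * G k x) :=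
      InK.sum _ _ fun k _ => (InK.coe ((le_sup_right : _ ≤ LinearMap.range (aff Q).toLinearMap ⊔
      Submodule.span ℝ (Set.range G)) (Submodule.subset_span ⟨k, rfl⟩))).const_mul _
    refine (i1.add i2).congr ?_
    filter_upwards [h3] with x hx
    simp only [ContinuousLinearMap.neg_apply]
    linarith
  have h5 : ∀ k, L (dirE Q (G k)) = 0 := fun k => congrFun h4 k
  refine hinj L (-m) (Lp.ext ?_)
  filter_upwards [h3, aff_apply Q L (-m), Lp.coeFn_zero ℝ 2 Q] with x hx hx2 hx3
  rw [hx2, hx3]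
  simp only [h5, zero_mul, Finset.sum_const_zero, sub_zero, add_zero] at hx
  simp [hx]

lemma nullMeas_factor
    (hSZ : ∀ k, ∀ f ∈ SZ Q p, inner ℝ (G k) f = 0)
    (w : Fin r → F → ℝ)
    (hw : ∀ k, Measurable (w k))
    {d : ℕ} (Y : Fin d → StrongDual ℝ E)
    (hY : ∀ l, aff Q (Y l, 0) - ∑ k, inner ℝ (G k) (aff Q (Y l, 0)) • G k ∈ SZ Q p)
    (hwS : ∀ k, InK (SZ Q p) (fun x => w k (p x))) :
    ∃ ρ : F → Fin d → ℝ, Measurable ρ ∧ ∀ᵐ x ∂(nullMeas Q p G w), (fun l => Y l x) = ρ (p x) := by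
  have h : ∀ l, ∃ m : F → ℝ, Measurable m ∧
      (fun x => Y l (nullMap Q p G w (resid Q G x))) =ᵐ[Q] fun x => m (p x) := by
    intro l
    refine InK.factor ?_
    simp only [dual_null Q p G hSZ w]
    refine InK.add ?_ (InK.sum _ _ fun k _ => (hwS k).const_mul _)
    refine ⟨_, hY l, ?_⟩
    have hs : ∀ᵐ x ∂Q, ∀ k, (inner ℝ (G k) (aff Q (Y l, 0)) • G k : Lp ℝ 2 Q) x
        = Y l (dirE Q (G k)) * G k x := by
      rw [ae_all_iff]
      intro k
      filter_upwards [Lp.coeFn_smul (inner ℝ (G k) (aff Q (Y l, 0))) (G k)] with x hx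
      rw [hx, dual_dirE]; rfl
    filter_upwards [aff_apply Q (Y l) 0, Lp.coeFn_sub (aff Q (Y l, 0))
      (∑ k, inner ℝ (G k) (aff Q (Y l, 0)) • G k),
      Lp.coeFn_fun_finsetSum Finset.univ (fun k => inner ℝ (G k) (aff Q (Y l, 0)) • G k), hs]
      with x h1 h2 h3 h4
    rw [h2, Pi.sub_apply, h1, h3]
    simp [h4]
  choose m hm hae using h
  have hp : Measurable p := p.continuous.measurable
  have hρ : Measurable (fun z l => m l z) := measurable_pi_lambda _ hm
  refine ⟨fun z l => m l z, hρ, ?_⟩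
  rw [nullMeas_eq Q p G w hw, ae_map_iff (meas_null Q p G w hw).aemeasurable]
  · filter_upwards [ae_all_iff.2 hae] with x hx
    ext l
    rw [p_nullMap Q p G hSZ w, p_resid Q p G hSZ]
    exact hx l
  · exact measurableSet_eq_fun (measurable_pi_lambda _ fun l => (Y l).continuous.measurable)
      (hρ.comp hp)

end Null

section Slln

lemma iIndep_comp_mp {Ω Ω' : Type*} [MeasurableSpace Ω] [MeasurableSpace Ω'] {μ : Measure Ω}
    {ν : Measure Ω'} {φ : Ω → Ω'} (hφ : MeasurePreserving φ μ ν) {ζ : ℕ → Ω' → ℝ}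
    (hm : ∀ j, Measurable (ζ j)) (h : iIndepFun ζ ν) :
    iIndepFun (fun j ω => ζ j (φ ω)) μ := by
  rw [iIndepFun_iff_measure_inter_preimage_eq_mul] at h ⊢
  intro S s hs
  have h1 := h S hs
  have e1 : (⋂ j ∈ S, (fun ω => ζ j (φ ω)) ⁻¹' s j) = φ ⁻¹' (⋂ j ∈ S, ζ j ⁻¹' s j) := by
    ext ω; simp
  rw [e1, hφ.measure_preimage
    (Finset.measurableSet_biInter S fun j hj => hm j (hs j hj)).nullMeasurableSet, h1]
  refine Finset.prod_congr rfl fun j hj => ?_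
  rw [← hφ.measure_preimage (hm j (hs j hj)).nullMeasurableSet]
  rfl

lemma slln_gram {E : Type*} [MeasurableSpace E] (Λ : Measure E) [IsProbabilityMeasure Λ]
    (ζ : ℕ → E → ℝ) (hm : ∀ j, Measurable (ζ j)) (hi : iIndepFun ζ Λ)
    (hl : ∀ j, Λ.map (ζ j) = gaussianReal 0 1) (n : ℕ) (i i' : Fin n) :
    ∀ᵐ v ∂(Measure.pi fun _ : Fin n => Λ),
      Tendsto (fun M : ℕ => (∑ j ∈ Finset.range M, ζ j (v i) * ζ j (v i')) / (M : ℝ)) atTop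
        (nhds (if i = i' then 1 else 0)) := by
  set μ := Measure.pi fun _ : Fin n => Λ with hμ
  have hmp : ∀ i : Fin n, MeasurePreserving (Function.eval i) μ Λ := fun i =>
    measurePreserving_eval (fun _ : Fin n => Λ) i
  have hmX : ∀ (i : Fin n) j, Measurable (fun v : Fin n → E => ζ j (v i)) := fun i j =>
    (hm j).comp (measurable_pi_apply i)
  have hind : iIndepFun (fun (q : Fin n × ℕ) (v : Fin n → E) => ζ q.2 (v q.1)) μ := by
    refine iIndepFun_uncurry' (X := fun (i : Fin n) j (v : Fin n → E) => ζ j (v i)) hmX ?_ ?_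
    · exact iIndepFun_pi (μ := fun _ : Fin n => Λ) (X := fun _ x j => ζ j x)
        fun i => (measurable_pi_lambda _ hm).aemeasurable
    · intro i
      exact iIndep_comp_mp (hmp i) hm hi
  have hid : ∀ (i : Fin n) j, IdentDistrib (fun v : Fin n → E => ζ j (v i)) (id : ℝ → ℝ) μ
      (gaussianReal 0 1) := by
    intro i j
    refine ⟨(hmX i j).aemeasurable, aemeasurable_id, ?_⟩
    rw [Measure.map_id, ← hl j, ← (hmp i).map_eq, Measure.map_map (hm j) (measurable_pi_apply i)]
    rfl
  have hL2 : ∀ (i : Fin n) j, MemLp (fun v : Fin n → E => ζ j (v i)) 2 μ := fun i j =>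
    (hid i j).memLp_iff.2 (memLp_id_gaussianReal 2)
  have hmean : ∀ (i : Fin n) j, ∫ v, ζ j (v i) ∂μ = 0 := by
    intro i j
    rw [(hid i j).integral_eq]
    simp
  have hsq : ∀ (i : Fin n) j, ∫ v, ζ j (v i) * ζ j (v i) ∂μ = 1 := by
    intro i j
    have h1 := ((hid i j).comp (u := fun x : ℝ => x * x) (by fun_prop)).integral_eq
    have h2 : ∫ x, x * x ∂(gaussianReal 0 1) = 1 := by
      have h3 := variance_fun_id_gaussianReal (μ := 0) (v := 1)
      rw [variance_of_integral_eq_zero (by fun_prop) (by simp)] at h3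
      simpa [sq] using h3
    simpa [Function.comp_def, h2] using h1
  have hS := strong_law_ae_real (μ := μ) (fun j v => ζ j (v i) * ζ j (v i')) ?_ ?_ ?_
  · filter_upwards [hS] with v hv
    convert hv using 2
    split_ifs with h
    · subst h; exact (hsq i 0).symm
    · have h1 : IndepFun (fun v : Fin n → E => ζ 0 (v i)) (fun v => ζ 0 (v i')) μ :=
        hind.indepFun (i := (i, 0)) (j := (i', 0)) (by simpa using h)
      have := h1.integral_mul_eq_mul_integral (hmX i 0).aestronglyMeasurable
        (hmX i' 0).aestronglyMeasurable
      simp only [Pi.mul_apply] at this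
      rw [this, hmean, zero_mul]
  · exact (hL2 i 0).integrable_mul (hL2 i' 0)
  · intro j l hjl
    have := hind.indepFun_prodMk_prodMk (fun q => hmX q.1 q.2) (i, j) (i', j) (i, l) (i', l)
      (by simp [hjl]) (by simp [hjl]) (by simp [hjl]) (by simp [hjl])
    exact this.comp (φ := fun x : ℝ × ℝ => x.1 * x.2) (ψ := fun x : ℝ × ℝ => x.1 * x.2)
      (by fun_prop) (by fun_prop)
  · intro j
    by_cases h : i = i'
    · subst h
      exact ((hid i j).trans (hid i 0).symm).comp (u := fun x : ℝ => x * x) (by fun_prop)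
    · have h1 : ∀ j, IndepFun (fun v : Fin n → E => ζ j (v i)) (fun v => ζ j (v i')) μ := fun j =>
        hind.indepFun (i := (i, j)) (j := (i', j)) (by simpa using h)
      have := ((hid i j).trans (hid i 0).symm).prodMk ((hid i' j).trans (hid i' 0).symm)
        (h1 j) (h1 0)
      exact this.comp (u := fun x : ℝ × ℝ => x.1 * x.2) (by fun_prop)

end Slln

section Limit

set_option linter.unusedSectionVars false

lemma pi_gam_uncurry (n r : ℕ) :
    (Measure.pi fun _ : Fin n => gam (Fin r)).map (fun x (q : Fin n × Fin r) => x q.1 q.2) =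
      gam (Fin n × Fin r) := by
  symm
  refine Measure.pi_eq fun s hs => ?_
  rw [Measure.map_apply (by fun_prop) (MeasurableSet.univ_pi hs)]
  have e1 : (fun (x : Fin n → Fin r → ℝ) (q : Fin n × Fin r) => x q.1 q.2) ⁻¹' (Set.univ.pi s) =
      Set.univ.pi fun i => Set.univ.pi fun k => s (i, k) := by
    ext x; simp
  rw [e1, Measure.pi_pi, Fintype.prod_prod_type]
  refine Finset.prod_congr rfl fun i _ => ?_
  rw [Measure.pi_pi]

variable {E : Type*} [NormedAddCommGroup E] [NormedSpace ℝ E]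
  [SecondCountableTopology E] [MeasurableSpace E] [BorelSpace E]

/-- Test function -/
def tf {n r : ℕ} (A : Set (Fin n → E)) (e : Fin r → E) (v : Fin n → E)
    (x : Fin n × Fin r → ℝ) : ℝ :=
  A.indicator 1 (fun i => v i + ∑ k, x (i, k) • e k)

lemma tf_meas {n r : ℕ} {A : Set (Fin n → E)} (hA : MeasurableSet A) (e : Fin r → E) :
    Measurable (fun q : (Fin n → E) × (Fin n × Fin r → ℝ) => tf A e q.1 q.2) := by
  unfold tf
  have h1 : Measurable (A.indicator (1 : (Fin n → E) → ℝ)) := measurable_one.indicator hA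
  refine h1.comp ?_
  fun_prop

lemma tf_abs {n r : ℕ} (A : Set (Fin n → E)) (e : Fin r → E) (v : Fin n → E)
    (x : Fin n × Fin r → ℝ) : |tf A e v x| ≤ 1 := by
  unfold tf
  by_cases h : (fun i => v i + ∑ k, x (i, k) • e k) ∈ A
  · simp [Set.indicator_of_mem h]
  · simp [Set.indicator_of_notMem h]

lemma pi_null_real {n r : ℕ} (Λ : Measure E) [IsProbabilityMeasure Λ] {A : Set (Fin n → E)}
    (hA : MeasurableSet A) (e : Fin r → E) (u : Fin r → E → ℝ) (hu : ∀ k, Measurable (u k)) :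
    (Measure.pi fun _ : Fin n => Λ.map (fun v => v + ∑ k, u k v • e k)).real A =
      ∫ v, tf A e v (fun q => u q.2 (v q.1)) ∂(Measure.pi fun _ : Fin n => Λ) := by
  have hmeas : Measurable (fun v => v + ∑ k, u k v • e k) := by fun_prop
  have : IsProbabilityMeasure (Λ.map (fun v => v + ∑ k, u k v • e k)) :=
    Measure.isProbabilityMeasure_map hmeas.aemeasurable
  rw [← Measure.pi_map_pi (μ := fun _ : Fin n => Λ) (f := fun _ v => v + ∑ k, u k v • e k)
    (fun _ => hmeas.aemeasurable), ← integral_indicator_one hA, integral_map (by fun_prop)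
    (measurable_one.indicator hA).aestronglyMeasurable]
  rfl

lemma pi_alt_real {n r : ℕ} (Λ : Measure E) [IsProbabilityMeasure Λ] {A : Set (Fin n → E)}
    (hA : MeasurableSet A) (e : Fin r → E) :
    (Measure.pi fun _ : Fin n =>
        (Λ.prod (gam (Fin r))).map (fun vx => vx.1 + ∑ k, vx.2 k • e k)).real A =
      ∫ v, ∫ x, tf A e v x ∂(gam (Fin n × Fin r)) ∂(Measure.pi fun _ : Fin n => Λ) := by
  have hmeas : Measurable (fun vx : E × (Fin r → ℝ) => vx.1 + ∑ k, vx.2 k • e k) := by fun_prop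
  have : IsProbabilityMeasure ((Λ.prod (gam (Fin r))).map
      (fun vx : E × (Fin r → ℝ) => vx.1 + ∑ k, vx.2 k • e k)) :=
    Measure.isProbabilityMeasure_map hmeas.aemeasurable
  have hI : Measurable (A.indicator (1 : (Fin n → E) → ℝ)) := measurable_one.indicator hA
  rw [← Measure.pi_map_pi (μ := fun _ : Fin n => Λ.prod (gam (Fin r)))
    (f := fun _ vx => vx.1 + ∑ k, vx.2 k • e k)
    (fun _ => hmeas.aemeasurable), ← integral_indicator_one hA, integral_map (by fun_prop)
    hI.aestronglyMeasurable]
  have hmp := measurePreserving_arrowProdEquivProdArrow E (Fin r → ℝ) (Fin n)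
    (fun _ => Λ) (fun _ => gam (Fin r))
  have h1 := hmp.integral_comp' (g := fun q : (Fin n → E) × (Fin n → Fin r → ℝ) =>
    tf A e q.1 (fun p => q.2 p.1 p.2))
  have hm2 : Measurable (fun q : (Fin n → E) × (Fin n → Fin r → ℝ) =>
      tf A e q.1 (fun p => q.2 p.1 p.2)) :=
    (tf_meas hA e).comp (show Measurable (fun q : (Fin n → E) × (Fin n → Fin r → ℝ) =>
      (q.1, fun p : Fin n × Fin r => q.2 p.1 p.2)) by fun_prop)
  refine Eq.trans (Eq.trans ?_ h1) ?_
  · rfl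
  · rw [integral_prod _ (Integrable.of_bound hm2.aestronglyMeasurable 1
      (ae_of_all _ fun q => tf_abs A e _ _))]
    refine integral_congr_ae (ae_of_all _ fun v => ?_)
    dsimp only
    have hm3 : Measurable (tf A e v) := (tf_meas hA e).comp measurable_prodMk_left
    have hm4 : Measurable (fun (x : Fin n → Fin r → ℝ) (q : Fin n × Fin r) => x q.1 q.2) := by
      fun_prop
    rw [← pi_gam_uncurry, integral_map hm4.aemeasurable hm3.aestronglyMeasurable]

open Matrix in
/-- Weight matrix -/
def wmat {n r : ℕ} (ζ : ℕ → E → ℝ) (M : ℕ) (v : Fin n → E) :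
    Matrix (Fin n × Fin r) (Fin r × Fin M) ℝ :=
  Matrix.of fun q q' => if q.2 = q'.1 then (√(M : ℝ))⁻¹ * ζ q'.2 (v q.1) else 0

lemma wmat_mulVec {n r : ℕ} (ζ : ℕ → E → ℝ) (M : ℕ) (v : Fin n → E) (g : Fin r × Fin M → ℝ)
    (q : Fin n × Fin r) :
    (wmat (r := r) ζ M v).mulVec g q =
      (√(M : ℝ))⁻¹ * ∑ j : Fin M, g (q.2, j) * ζ j (v q.1) := by
  simp only [Matrix.mulVec, dotProduct, wmat, Matrix.of_apply, Fintype.sum_prod_type, ite_mul,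
    zero_mul]
  rw [Finset.sum_eq_single q.2]
  · simp only [if_true, Finset.mul_sum]
    exact Finset.sum_congr rfl fun j _ => by ring
  · intro k _ hk
    simp [hk.symm]
  · simp

lemma wmat_gram {n r : ℕ} (ζ : ℕ → E → ℝ) (M : ℕ) (v : Fin n → E)
    (q q' : Fin n × Fin r) :
    (wmat (r := r) ζ M v * (wmat (r := r) ζ M v).transpose) q q' =
      if q.2 = q'.2 then
        (∑ j ∈ Finset.range M, ζ j (v q.1) * ζ j (v q'.1)) / (M : ℝ) else 0 := by
  rw [Matrix.mul_apply]
  simp only [wmat, Matrix.transpose_apply, Matrix.of_apply, Fintype.sum_prod_type, ite_mul,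
    zero_mul, mul_ite, mul_zero]
  rw [Finset.sum_eq_single q.2]
  · by_cases h : q.2 = q'.2
    · simp only [h, if_true]
      rw [← Fin.sum_univ_eq_sum_range (fun j => ζ j (v q.1) * ζ j (v q'.1)) M, Finset.sum_div]
      refine Finset.sum_congr rfl fun j _ => ?_
      have : (√(M : ℝ))⁻¹ * (√(M : ℝ))⁻¹ = (M : ℝ)⁻¹ := by
        rw [← mul_inv, Real.mul_self_sqrt (Nat.cast_nonneg M)]
      rw [div_eq_mul_inv, ← this]
      ring
    · simp [h, Ne.symm h]
  · intro k _ hk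
    simp [hk.symm]
  · simp

lemma pi_limit_le {n r : ℕ} (Λ : Measure E) [IsProbabilityMeasure Λ]
    (ζ : ℕ → E → ℝ) (hm : ∀ j, Measurable (ζ j)) (hi : iIndepFun ζ Λ)
    (hl : ∀ j, Λ.map (ζ j) = gaussianReal 0 1) (τ : Fin r → E → ℝ) (hτ : ∀ k, Measurable (τ k))
    (e : Fin r → E) {A : Set (Fin n → E)} (hA : MeasurableSet A) (C : ℝ≥0∞)
    (hC : ∀ (M : ℕ) (g : Fin r × Fin M → ℝ), (Measure.pi fun _ : Fin n => Λ.map (fun v => v +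
      ∑ k, ((√(M : ℝ))⁻¹ * ∑ j : Fin M, g (k, j) * ζ j v + (1 / ((M : ℝ) + 1)) * τ k v) • e k)) A
        ≤ C) :
    (Measure.pi fun _ : Fin n =>
        (Λ.prod (gam (Fin r))).map (fun vx => vx.1 + ∑ k, vx.2 k • e k)) A ≤ C := by
  by_cases hCt : C = ∞
  · simp [hCt]
  have hmeas : Measurable (fun vx : E × (Fin r → ℝ) => vx.1 + ∑ k, vx.2 k • e k) := by fun_prop
  have : IsProbabilityMeasure ((Λ.prod (gam (Fin r))).map
      (fun vx : E × (Fin r → ℝ) => vx.1 + ∑ k, vx.2 k • e k)) :=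
    Measure.isProbabilityMeasure_map hmeas.aemeasurable
  rw [← ENNReal.toReal_le_toReal (measure_ne_top _ _) hCt]
  change Measure.real _ A ≤ _
  rw [pi_alt_real Λ hA e]
  set μ := Measure.pi fun _ : Fin n => Λ with hμ
  set s : ℕ → (Fin n → E) → (Fin n × Fin r → ℝ) := fun M v q =>
    (1 / ((M : ℝ) + 1)) * τ q.2 (v q.1) with hs
  have hmW : ∀ M : ℕ, Measurable (fun q : (Fin n → E) × (Fin r × Fin M → ℝ) =>
      tf A e q.1 ((wmat ζ M q.1).mulVec q.2 + s M q.1)) := by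
    intro M
    refine (tf_meas hA e).comp (measurable_fst.prodMk (measurable_pi_lambda _ fun q => ?_))
    simp only [Pi.add_apply, wmat_mulVec, hs]
    fun_prop
  have hlim : Tendsto (fun M : ℕ => ∫ v, ∫ g, tf A e v ((wmat ζ M v).mulVec g + s M v)
      ∂(gam (Fin r × Fin M)) ∂μ) atTop
      (nhds (∫ v, ∫ x, tf A e v x ∂(gam (Fin n × Fin r)) ∂μ)) := by
    refine tendsto_integral_of_dominated_convergence (fun _ => 1) (fun M => ?_)
      (integrable_const _) (fun M => ae_of_all _ fun v => ?_) ?_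
    · exact (hmW M).stronglyMeasurable.integral_prod_right'.aestronglyMeasurable
    · refine (norm_integral_le_of_norm_le_const (ae_of_all _ fun g => tf_abs A e _ _)).trans ?_
      simp
    · have hall : ∀ᵐ v ∂μ, ∀ i i' : Fin n,
          Tendsto (fun M : ℕ => (∑ j ∈ Finset.range M, ζ j (v i) * ζ j (v i')) / (M : ℝ)) atTop
            (nhds (if i = i' then 1 else 0)) :=
        ae_all_iff.2 fun i => ae_all_iff.2 fun i' => slln_gram Λ ζ hm hi hl n i i'
      filter_upwards [hall] with v hv
      refine tendsto_gam (fun M => wmat ζ M v) ?_ (fun M => s M v) ?_ (tf A e v)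
        ((tf_meas hA e).comp measurable_prodMk_left) (tf_abs A e v)
      · refine tendsto_pi_nhds.2 fun q => tendsto_pi_nhds.2 fun q' => ?_
        simp only [wmat_gram, Matrix.one_apply]
        by_cases h : q.2 = q'.2
        · simp only [h, if_true]
          have := hv q.1 q'.1
          convert this using 3
          simp [Prod.ext_iff, h]
        · have h' : q ≠ q' := fun hh => h (by rw [hh])
          simp [h, h']
      · rw [tendsto_pi_nhds]
        intro q
        have := tendsto_one_div_add_atTop_nhds_zero_nat (𝕜 := ℝ)
        simpa [hs] using this.mul_const (τ q.2 (v q.1))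
  refine le_of_tendsto' hlim fun M => ?_
  rw [integral_integral_swap (Integrable.of_bound (hmW M).aestronglyMeasurable 1
      (ae_of_all _ fun q => tf_abs A e _ _))]
  have hb : ∀ g : Fin r × Fin M → ℝ,
      ∫ v, tf A e v ((wmat ζ M v).mulVec g + s M v) ∂μ ≤ C.toReal := by
    intro g
    have h1 := pi_null_real Λ hA e (fun k v => (√(M : ℝ))⁻¹ * ∑ j : Fin M, g (k, j) * ζ j v +
      (1 / ((M : ℝ) + 1)) * τ k v) (fun k => by fun_prop)
    have h2 := ENNReal.toReal_mono hCt (hC M g)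
    refine le_trans (le_of_eq ?_) (h1.symm.le.trans h2)
    refine integral_congr_ae (ae_of_all _ fun v => ?_)
    dsimp only
    congr 1
    funext q
    simp only [Pi.add_apply, wmat_mulVec, hs]
  calc _ ≤ ∫ _g, C.toReal ∂(gam (Fin r × Fin M)) := by
        refine integral_mono_of_nonneg ?_ (integrable_const _) (ae_of_all _ hb)
        exact ae_of_all _ fun g => integral_nonneg fun v => Set.indicator_nonneg (by simp) _
    _ = C.toReal := by simp

end Limit

section Assembly

lemma power_le_abstract {E : Type*} [NormedAddCommGroup E] [NormedSpace ℝ E] [CompleteSpace E]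
    [SecondCountableTopology E] [MeasurableSpace E] [BorelSpace E]
    {H : Type*} [NormedAddCommGroup H] [InnerProductSpace ℝ H] [CompleteSpace H]
    [SecondCountableTopology H]
    [MeasurableSpace H] [BorelSpace H] (Q : Measure E) [IsGaussian Q] (p : E →L[ℝ] H)
    (hp : Function.Surjective p) (hinf : ¬ FiniteDimensional ℝ H)
    (hQinj : HasInjectiveCovariance Q) {d : ℕ} (Y : Fin d → StrongDual ℝ E)
    {n : ℕ} {A : Set (Fin n → E)} (hA : MeasurableSet A) (C : ℝ≥0∞)
    (hC : ∀ P : Measure E, IsProbabilityMeasure P → IsGaussianMeasure P →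
      HasInjectiveCovariance P → P.map p = Q.map p →
      (∃ ρ : H → (Fin d → ℝ), Measurable ρ ∧ ∀ᵐ x ∂P, (fun l => Y l x) = ρ (p x)) →
      (Measure.pi fun _ : Fin n => P) A ≤ C) :
    (Measure.pi fun _ : Fin n => Q) A ≤ C := by
  have hinj : ∀ (L : StrongDual ℝ E) (c : ℝ), aff Q (L, c) = 0 → L = 0 := by
    intro L c h
    refine hQinj L fun L₂ => ?_
    have h1 : ∀ᵐ x ∂Q, L x = -c := by
      have h2 := aff_apply Q L c
      rw [h] at h2
      filter_upwards [h2, Lp.coeFn_zero ℝ 2 Q] with x hx h0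
      rw [h0] at hx
      simp only [Pi.zero_apply] at hx
      linarith
    have h3 : ∫ y, L y ∂Q = -c := by
      rw [integral_congr_ae h1]; simp
    unfold covForm
    rw [h3, integral_eq_zero_of_ae]
    filter_upwards [h1] with x hx
    simp [hx]
  obtain ⟨r, G, hGo, hG, hSZ, hY⟩ := exists_innovations Q p Y
  obtain ⟨L, c, hLo, hL0⟩ := exists_zeta Q p hp hinf hinj
  obtain ⟨T, hTS, hTind⟩ := exists_tau (SZ Q p) (aff Q).toLinearMap.range
    (Submodule.span ℝ (Set.range G)) (SZ_not_le Q p L c hLo hL0)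
    (Submodule.fg_span (Set.finite_range G)) r
  have hfac : ∀ k, ∃ m : H → ℝ, Measurable m ∧ (T k : E → ℝ) =ᵐ[Q] fun x => m (p x) :=
    fun k => (InK.coe (hTS k)).factor
  choose t ht hTt using hfac
  have hpm : Measurable p := p.continuous.measurable
  have hmean : ∀ k, ∫ x, G k x ∂Q = 0 := by
    intro k
    have h1 := hSZ k _ (affZ_mem_SZ Q p 0 1)
    rw [inner_Lp2] at h1
    rw [← h1]
    refine integral_congr_ae ?_
    filter_upwards [aff_apply Q ((0 : StrongDual ℝ H).comp p) 1] with x hx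
    rw [hx]; simp
  have hr := measurable_resid Q G
  set Λ := Q.map (resid Q G) with hΛ
  have hΛp : IsProbabilityMeasure Λ := Measure.isProbabilityMeasure_map hr.aemeasurable
  have hpr := p_resid Q p G hSZ
  set z : ℕ → H → ℝ := fun j y => L j y + c j with hz
  have hzm : ∀ j, Measurable (z j) := fun j => by
    have : Measurable (L j) := (L j).continuous.measurable
    fun_prop
  have hiid := orthonormal_iid Q _ hLo (fun j => SZ_le_GS Q p (affZ_mem_SZ Q p (L j) (c j))) hL0
  have hae : ∀ j, (aff Q ((L j).comp p, c j) : E → ℝ) =ᵐ[Q] fun x => z j (p x) := fun j =>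
    aff_apply Q _ _
  have hiQ : iIndepFun (fun j x => z j (p x)) Q := hiid.1.congr hae
  have hlQ : ∀ j, Q.map (fun x => z j (p x)) = gaussianReal 0 1 := fun j => by
    rw [← Measure.map_congr (hae j)]; exact hiid.2 j
  have hmap : Λ.map p = Q.map p := by
    rw [hΛ, Measure.map_map hpm hr]
    congr 1
    funext x
    exact hpr x
  have hiH : iIndepFun z (Λ.map p) := by
    rw [hmap]
    rw [iIndepFun_iff_measure_inter_preimage_eq_mul] at hiQ ⊢
    intro S s hs
    have h1 := hiQ S hs
    rw [Measure.map_apply hpm (Finset.measurableSet_biInter S fun j hj => hzm j (hs j hj))]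
    have e1 : (p ⁻¹' ⋂ j ∈ S, z j ⁻¹' s j) = ⋂ j ∈ S, (fun x => z j (p x)) ⁻¹' s j := by
      ext x; simp
    rw [e1, h1]
    refine Finset.prod_congr rfl fun j hj => ?_
    rw [Measure.map_apply hpm (hzm j (hs j hj))]
    rfl
  have hiΛ : iIndepFun (fun j v => z j (p v)) Λ :=
    iIndep_comp_mp ⟨hpm, rfl⟩ hzm hiH
  have hlΛ : ∀ j, Λ.map (fun v => z j (p v)) = gaussianReal 0 1 := fun j => by
    have h1 : Λ.map (fun v => z j (p v)) = (Λ.map p).map (z j) :=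
      (Measure.map_map (hzm j) hpm).symm
    rw [h1, hmap, Measure.map_map (hzm j) hpm]
    exact hlQ j
  have key := pi_limit_le (n := n) Λ (fun j v => z j (p v)) (fun j => (hzm j).comp hpm) hiΛ hlΛ
    (fun k v => t k (p v)) (fun k => (ht k).comp hpm) (fun k => dirE Q (G k)) hA C ?_
  · rw [← Q_eq_map Q G hGo hG hmean] at key
    exact key
  intro M g
  set w : Fin r → H → ℝ := fun k y =>
    (√(M : ℝ))⁻¹ * ∑ j : Fin M, g (k, j) * z j y + (1 / ((M : ℝ) + 1)) * t k y with hw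
  have hwm : ∀ k, Measurable (w k) := fun k => by fun_prop
  have hzS : ∀ j, InK (SZ Q p) (fun x => z j (p x)) := fun j =>
    (InK.coe (affZ_mem_SZ Q p (L j) (c j))).congr (hae j).symm
  have hzA : ∀ j, InK ((aff Q).toLinearMap.range ⊔ Submodule.span ℝ (Set.range G))
      (fun x => z j (p x)) := fun j =>
    (InK.aff Q ((L j).comp p) (c j)).mono le_sup_left
  have hlin : ∀ (K : Submodule ℝ (Lp ℝ 2 Q)), (∀ j, InK K (fun x => z j (p x))) → ∀ k,
      InK K (fun x => (√(M : ℝ))⁻¹ * ∑ j : Fin M, g (k, j) * z j (p x)) := fun K hK k =>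
    (InK.sum Finset.univ (fun (j : Fin M) x => g (k, j) * z j (p x))
      fun j _ => (hK j).const_mul _).const_mul _
  have hwS : ∀ k, InK (SZ Q p) (fun x => w k (p x)) := fun k =>
    (hlin _ hzS k).add (((InK.coe (hTS k)).congr (hTt k).symm).const_mul _)
  have hind : ∀ a : Fin r → ℝ, InK ((aff Q).toLinearMap.range ⊔ Submodule.span ℝ (Set.range G))
      (fun x => ∑ k, a k * w k (p x)) → a = 0 := by
    intro a ha
    have h1 := ha.sub (InK.sum Finset.univ
      (fun k x => a k * ((√(M : ℝ))⁻¹ * ∑ j : Fin M, g (k, j) * z j (p x)))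
      fun k _ => (hlin _ hzA k).const_mul _)
    have h2 : InK ((aff Q).toLinearMap.range ⊔ Submodule.span ℝ (Set.range G))
        (∑ k, (a k * (1 / ((M : ℝ) + 1))) • T k : Lp ℝ 2 Q) := by
      refine h1.congr ?_
      have e1 : ∀ᵐ x ∂Q, ∀ k, ((a k * (1 / ((M : ℝ) + 1))) • T k : Lp ℝ 2 Q) x =
          (a k * (1 / ((M : ℝ) + 1))) * t k (p x) := by
        refine ae_all_iff.2 fun k => ?_
        filter_upwards [Lp.coeFn_smul (a k * (1 / ((M : ℝ) + 1))) (T k), hTt k] with x hx hx'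
        rw [hx, Pi.smul_apply, hx', smul_eq_mul]
      filter_upwards [e1, Lp.coeFn_finsetSum Finset.univ
        (fun k => (a k * (1 / ((M : ℝ) + 1))) • T k)] with x hx hx'
      rw [hx', Finset.sum_apply, ← Finset.sum_sub_distrib]
      refine Finset.sum_congr rfl fun k _ => ?_
      rw [hx k, hw]
      ring
    have h3 := hTind _ h2.mem
    funext k
    have h4 := congrFun h3 k
    have h5 : (1 / ((M : ℝ) + 1)) ≠ 0 := by positivity
    simpa [h5] using (mul_eq_zero.1 h4).resolve_right h5
  have := hC (nullMeas Q p G w) (nullMeas_prob Q p G w hwm)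
    (nullMeas_gaussian Q p G hSZ w hwm hG hwS) (nullMeas_inj Q p G hSZ w hwm hG hwS hinj hind)
    (nullMeas_marginal Q p G hSZ w hwm) (nullMeas_factor Q p G hSZ w hwm Y hY hwS)
  exact this

end Assembly

/-- Theorem 1 (hardness of conditional independence testing with Gaussian functional data):
for any alternative `Q` and any test `ψ` on `n` i.i.d. observations, the power of the test
against `Q` is at most its size over the null `𝒫₀^Q` of jointly Gaussian distributions with
injective covariance operator, satisfying conditional independence, and having the same
marginal distribution of `Z` as `Q`. -/
theorem power_le_size_gaussian_hilbertian
    {HX HZ : Type*}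
    [NormedAddCommGroup HX] [InnerProductSpace ℝ HX] [CompleteSpace HX]
    [TopologicalSpace.SeparableSpace HX] [MeasurableSpace HX] [BorelSpace HX]
    [NormedAddCommGroup HZ] [InnerProductSpace ℝ HZ] [CompleteSpace HZ]
    [TopologicalSpace.SeparableSpace HZ] [MeasurableSpace HZ] [BorelSpace HZ]
    (hinf : ¬ FiniteDimensional ℝ HZ)
    (dY : ℕ)
    (Q : Measure (HX × (Fin dY → ℝ) × HZ))
    (hQprob : IsProbabilityMeasure Q)
    (hQgauss : IsGaussianMeasure Q)
    (hQinj : HasInjectiveCovariance Q)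
    (hQalt : ¬ CondIndepGiven Q (fun ω => ω.1) (fun ω => ω.2.1) (fun ω => ω.2.2))
    (n : ℕ)
    (ψ : (Fin n → HX × (Fin dY → ℝ) × HZ) → Bool)
    (hψ : Measurable ψ) :
    (Measure.pi fun _ : Fin n => Q) {x | ψ x = true} ≤
      ⨆ (P : Measure (HX × (Fin dY → ℝ) × HZ)) (_ :
        IsProbabilityMeasure P ∧ IsGaussianMeasure P ∧ HasInjectiveCovariance P ∧
          CondIndepGiven P (fun ω => ω.1) (fun ω => ω.2.1) (fun ω => ω.2.2) ∧
          P.map (fun ω => ω.2.2) = Q.map (fun ω => ω.2.2)),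
        (Measure.pi fun _ : Fin n => P) {x | ψ x = true} := by
  have := UniformSpace.secondCountable_of_separable HX
  have := UniformSpace.secondCountable_of_separable HZ
  have : IsGaussian Q := isGaussian_of_map_eq_gaussianReal hQgauss
  let p : HX × (Fin dY → ℝ) × HZ →L[ℝ] HZ := (ContinuousLinearMap.snd ℝ (Fin dY → ℝ) HZ).comp
    (ContinuousLinearMap.snd ℝ HX ((Fin dY → ℝ) × HZ))
  let Y : Fin dY → StrongDual ℝ (HX × (Fin dY → ℝ) × HZ) := fun l => (ContinuousLinearMap.proj l).comp
    ((ContinuousLinearMap.fst ℝ (Fin dY → ℝ) HZ).comp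
      (ContinuousLinearMap.snd ℝ HX ((Fin dY → ℝ) × HZ)))
  have hA : MeasurableSet {x | ψ x = true} := hψ (measurableSet_singleton true)
  refine power_le_abstract Q p (fun y => ⟨(0, 0, y), rfl⟩) hinf hQinj Y hA _ ?_
  rintro P hP hPg hPi hPm ⟨ρ, hρ, hY⟩
  refine le_iSup₂_of_le P ⟨hP, hPg, hPi, ?_, hPm⟩ le_rfl
  exact condIndep_of_ae P _ _ _ measurable_fst (measurable_snd.comp measurable_snd) ρ hρ hY
end
end

section
/- Let H_Z be a separable Hilbert space with orthonormal basis (e_k)_{k∈ℕ}, and for a random element Z of H_Z write Z_k = ⟨e_k, Z⟩. Let 𝒫 be the family of distributions of triples (X, Y, Z) with values in ℝ × ℝ × H_Z that are jointly Gaussian with injective covariance operator and for which there exists r ∈ ℕ such that (X, Y) ⊥⊥ (Z_{r+1}, Z_{r+2}, …) | (Z_1, …, Z_r). Let 𝒫₀ ⊆ 𝒫 be the subset of distributions under which X ⊥⊥ Y | Z, let 𝒬 = 𝒫 \ 𝒫₀, fix Q ∈ 𝒬, and let 𝒫₀^Q = {P ∈ 𝒫₀ : the marginal distribution of Z under P equals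 that under Q}. Then for every n ∈ ℕ and every measurable test ψ_n : (ℝ × ℝ × H_Z)^n → {0, 1}, Q^{⊗n}(ψ_n = 1) ≤ sup_{P ∈ 𝒫₀^Q} P^{⊗n}(ψ_n = 1). -/
open MeasureTheory ProbabilityTheory Filter
open scoped ENNReal NNReal RealInnerProductSpace

noncomputable section

open scoped Topology

theorem aux_pi_ac {X : Type*} [MeasurableSpace X] (μ ν : Measure X) [SigmaFinite μ] [SigmaFinite ν]
    (h : μ ≪ ν) (n : ℕ) : (Measure.pi fun _ : Fin n => μ) ≪ (Measure.pi fun _ : Fin n => ν) := by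
  induction n with
  | zero => rw [Measure.pi_of_empty, Measure.pi_of_empty]
  | succ n ih =>
    have h1 := measurePreserving_piFinSuccAbove (fun _ : Fin (n+1) => μ) 0
    have h2 := measurePreserving_piFinSuccAbove (fun _ : Fin (n+1) => ν) 0
    have h3 := (h1.symm).map_eq
    have h4 := (h2.symm).map_eq
    rw [← h3, ← h4]
    exact (Measure.AbsolutelyContinuous.prod h ih).map (MeasurableEquiv.measurable _)

theorem aux_translate {n : ℕ} (m : Measure (Fin n → ℝ × ℝ)) [IsFiniteMeasure m]
    (hm : m ≪ volume) (S : Set (Fin n → ℝ × ℝ)) (hS : MeasurableSet S) :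
    Continuous (fun v : Fin n → ℝ × ℝ => (m ((fun x => v + x) ⁻¹' S)).toReal) := by
  set f : (Fin n → ℝ × ℝ) → ℝ := fun x => (m.rnDeriv volume x).toReal with hf
  have hfi : Integrable f volume := Measure.integrable_toReal_rnDeriv
  have hint : ∀ T : Set (Fin n → ℝ × ℝ), MeasurableSet T → (m T).toReal = ∫ x in T, f x := by
    intro T hT
    exact (Measure.setIntegral_toReal_rnDeriv hm T).symm
  let F : Lp ℝ 1 (volume : Measure (Fin n → ℝ × ℝ)) := hfi.toL1 f
  let g : (Fin n → ℝ × ℝ) → C(Fin n → ℝ × ℝ, Fin n → ℝ × ℝ) := fun v =>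
    ⟨fun x => x - v, by fun_prop⟩
  have hg : Continuous g := by
    refine ContinuousMap.continuous_of_continuous_uncurry _ ?_
    simp only [Function.uncurry_def, g, ContinuousMap.coe_mk]
    fun_prop
  have hgm : ∀ v, MeasurePreserving (g v) volume volume := fun v => 
    measurePreserving_sub_right volume v
  have hc : Continuous (fun v => Lp.compMeasurePreserving (g v) (hgm v) F) :=
    Continuous.compMeasurePreservingLp continuous_const hg hgm (by simp)
  have h2 := (continuous_setIntegral (E := ℝ) (μ := volume) S).comp hc
  convert h2 using 2 with v
  have hpre : MeasurableSet ((fun x => v + x) ⁻¹' S) := hS.preimage (by fun_prop)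
  rw [hint _ hpre]
  have e1 : (Lp.compMeasurePreserving (g v) (hgm v) F : _ → ℝ) =ᵐ[volume] fun x => f (x - v) := by
    refine (Lp.coeFn_compMeasurePreserving F (hgm v)).trans ?_
    exact (hgm v).quasiMeasurePreserving.ae_eq_comp hfi.coeFn_toL1
  simp only [Function.comp]
  rw [setIntegral_congr_ae (g := fun x => f (x - v)) hS (e1.mono fun x hx _ => hx)]
  have := (measurePreserving_add_left volume v).setIntegral_preimage_emb 
    (measurableEmbedding_addLeft v) (fun x => f (x - v)) S
  rw [← this]
  simp

theorem aux_weak {n : ℕ} (a : ℕ → Fin n → ℝ)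
    (h : ∀ i i', Tendsto (fun k : ℕ => (∑ j ∈ Finset.range k, a j i * a j i') / (k : ℝ)) atTop
      (𝓝 (if i = i' then 1 else 0)))
    (G : (Fin n → ℝ) → ℝ) (hG : Continuous G) (C : ℝ) (hC : ∀ t, |G t| ≤ C) :
    Tendsto (fun k : ℕ => ∫ w, G (fun i => (√k)⁻¹ * ∑ j : Fin k, w j * a j i)
        ∂(Measure.pi fun _ : Fin k => gaussianReal 0 1)) atTop
      (𝓝 (∫ t, G t ∂(Measure.pi fun _ : Fin n => gaussianReal 0 1))) := by
  let T : (k : ℕ) → (Fin k → ℝ) → EuclideanSpace ℝ (Fin n) := fun k w =>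
    WithLp.toLp 2 (fun i => (√k)⁻¹ * ∑ j : Fin k, w j * a j i)
  have hT : ∀ k, Measurable (T k) := by intro k; simp only [T]; fun_prop
  let μ : ℕ → ProbabilityMeasure (EuclideanSpace ℝ (Fin n)) := fun k =>
    ⟨(Measure.pi fun _ : Fin k => gaussianReal 0 1).map (T k),
      Measure.isProbabilityMeasure_map (hT k).aemeasurable⟩
  let μ₀ : ProbabilityMeasure (EuclideanSpace ℝ (Fin n)) := ⟨stdGaussian _, inferInstance⟩
  have key : Tendsto μ atTop (𝓝 μ₀) := by
    apply ProbabilityMeasure.tendsto_of_tendsto_charFun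
    intro t
    let c : (k : ℕ) → EuclideanSpace ℝ (Fin k) := fun k =>
      WithLp.toLp 2 (fun j => (√k)⁻¹ * ∑ i, a j i * t i)
    have h1 : ∀ k, charFun (μ k : Measure (EuclideanSpace ℝ (Fin n))) t = Complex.exp (-‖c k‖^2/2) := by
      intro k
      rw [← charFun_stdGaussian, ← map_pi_eq_stdGaussian, charFun_apply, charFun_apply]
      change ∫ x, _ ∂(Measure.map (T k) _) = _
      rw [integral_map (hT k).aemeasurable (by fun_prop), integral_map (by fun_prop) (by fun_prop)]
      congr 1
      ext w
      congr 3
      simp only [T, c, PiLp.inner_apply, RCLike.inner_apply, conj_trivial]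
      simp only [Finset.mul_sum, Finset.sum_mul]
      rw [Finset.sum_comm]
      refine Finset.sum_congr rfl fun j _ => Finset.sum_congr rfl fun i _ => by ring
    have h2 : ∀ k, ‖c k‖^2 = ∑ i, ∑ i', t i * t i' * ((∑ j ∈ Finset.range k, a j i * a j i') / (k : ℝ)) := by
      intro k
      rw [EuclideanSpace.real_norm_sq_eq]
      simp only [c, mul_pow, inv_pow, Real.sq_sqrt (Nat.cast_nonneg k)]
      simp only [Finset.sum_range, sq, Finset.sum_mul, Finset.mul_sum, Finset.sum_div]
      rw [Finset.sum_comm]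
      refine Finset.sum_congr rfl fun i _ => ?_
      rw [Finset.sum_comm]
      refine Finset.sum_congr rfl fun i' _ => Finset.sum_congr rfl fun j _ => ?_
      rw [div_eq_mul_inv]; ring
    have h3 : Tendsto (fun k => ‖c k‖^2) atTop (𝓝 (‖t‖^2)) := by
      simp_rw [h2]
      have : ‖t‖^2 = ∑ i, ∑ i', t i * t i' * (if i = i' then 1 else 0) := by
        rw [EuclideanSpace.real_norm_sq_eq]
        simp [sq]
      rw [this]
      exact tendsto_finsetSum _ fun i _ => tendsto_finsetSum _ fun i' _ => (h i i').const_mul _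
    simp_rw [h1]
    change Tendsto _ _ (𝓝 (charFun (stdGaussian _) t))
    rw [charFun_stdGaussian]
    have h4 : Continuous fun x : ℝ => Complex.exp (-(x:ℂ)/2) := by fun_prop
    have := (h4.tendsto _).comp h3
    simpa [Function.comp_def] using this
  rw [ProbabilityMeasure.tendsto_iff_forall_integral_tendsto] at key
  let f : BoundedContinuousFunction (EuclideanSpace ℝ (Fin n)) ℝ :=
    BoundedContinuousFunction.ofNormedAddCommGroup (fun x => G (WithLp.ofLp x)) (by fun_prop) C
      (fun x => by simpa using hC _)
  have := key f
  convert this using 1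
  · ext k
    change _ = ∫ x, _ ∂(Measure.map (T k) _)
    rw [integral_map (hT k).aemeasurable (by fun_prop)]
    rfl
  · change _ = 𝓝 (∫ x, _ ∂(stdGaussian _))
    rw [← map_pi_eq_stdGaussian, integral_map (by fun_prop) (by fun_prop)]
    rfl

theorem aux_slln {H : Type*} [MeasurableSpace H] (ν : Measure H) [IsProbabilityMeasure ν]
    (W : ℕ → H → ℝ) (hW : ∀ j, Measurable (W j)) (hlaw : ∀ j, ν.map (W j) = gaussianReal 0 1)
    (hind : ∀ i j, i ≠ j → IndepFun (W i) (W j) ν) (n : ℕ) :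
    ∀ᵐ z ∂(Measure.pi fun _ : Fin n => ν), ∀ i i',
      Tendsto (fun k : ℕ => (∑ j ∈ Finset.range k, W j (z i) * W j (z i')) / (k : ℝ)) atTop
      (𝓝 (if i = i' then 1 else 0)) := by
  rw [ae_all_iff]; intro i
  rw [ae_all_iff]; intro i'
  set N := Measure.pi fun _ : Fin n => gaussianReal 0 1 with hN
  let V : ℕ → (Fin n → H) → (Fin n → ℝ) := fun j z i => W j (z i)
  have hV : ∀ j, Measurable (V j) := by
    intro j; simp only [V]; exact measurable_pi_lambda _ fun i => (hW j).comp (measurable_pi_apply i)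
  have hVlaw : ∀ j, (Measure.pi fun _ : Fin n => ν).map (V j) = N := by
    intro j
    have := Measure.pi_map_pi (μ := fun _ : Fin n => ν) (f := fun _ => W j) 
      (hμ := fun i => by rw [hlaw]; infer_instance) (fun i => (hW j).aemeasurable)
    simp only [hlaw] at this
    exact this
  have hVind : ∀ j j', j ≠ j' → IndepFun (V j) (V j') (Measure.pi fun _ : Fin n => ν) := by
    intro j j' hjj
    rw [indepFun_iff_map_prod_eq_prod_map_map (hV j).aemeasurable (hV j').aemeasurable, hVlaw, hVlaw]
    have h1 := (indepFun_iff_map_prod_eq_prod_map_map (hW j).aemeasurable (hW j').aemeasurable).1 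
      (hind j j' hjj)
    rw [hlaw, hlaw] at h1
    have h2 := Measure.pi_map_pi (μ := fun _ : Fin n => ν) (f := fun _ => fun x => (W j x, W j' x)) 
      (hμ := fun i => by rw [h1]; infer_instance) 
      (fun i => ((hW j).prodMk (hW j')).aemeasurable)
    simp only [h1] at h2
    have h3 := (measurePreserving_arrowProdEquivProdArrow ℝ ℝ (Fin n) (fun _ => gaussianReal 0 1)
      (fun _ => gaussianReal 0 1)).map_eq
    rw [hN, ← h3, ← h2, Measure.map_map (MeasurableEquiv.measurable _)]
    · rfl
    · exact measurable_pi_lambda _ fun i => 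
        ((hW j).prodMk (hW j')).comp (measurable_pi_apply i)
  have hφ : Measurable (fun y : Fin n → ℝ => y i * y i') := by fun_prop
  have hmem : ∀ i, MemLp (fun y : Fin n → ℝ => y i) 2 N := fun i =>
    (IsGaussian.memLp_two_id (μ := gaussianReal 0 1)).comp_measurePreserving (measurePreserving_eval _ i)
  have hintN : Integrable (fun y : Fin n → ℝ => y i * y i') N := (hmem i).integrable_mul (hmem i')
  have hmean : ∫ y, y i * y i' ∂N = if i = i' then 1 else 0 := by
    split_ifs with hii
    · subst hii
      have h1 := integral_comp_eval (μ := fun _ : Fin n => gaussianReal 0 1) (i := i) 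
        (f := fun x : ℝ => x * x) (by fun_prop)
      rw [hN, h1]
      have h2 := variance_eq_integral (X := id) (μ := gaussianReal 0 1) (by fun_prop)
      rw [variance_id_gaussianReal] at h2
      simp only [id, integral_id_gaussianReal, sub_zero, sq] at h2
      simpa using h2.symm
    · have h0 : iIndepFun (fun (i : Fin n) (y : Fin n → ℝ) => id (y i)) N := 
        iIndepFun_pi (fun _ => by fun_prop)
      have h1 := (h0.indepFun hii).integral_mul_eq_mul_integral (hmem i).1 (hmem i').1
      have h2 := integral_comp_eval (μ := fun _ : Fin n => gaussianReal 0 1) (i := i) 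
        (f := fun x : ℝ => x) (by fun_prop)
      simp only [id, integral_id_gaussianReal] at h1 h2
      rw [← hN] at h2
      have h3 : ∫ y, y i * y i' ∂N = (∫ y, y i ∂N) * (∫ y, y i' ∂N) := h1
      rw [h3, h2, zero_mul]
  have hid : ∀ j, IdentDistrib (fun z => (fun y : Fin n → ℝ => y i * y i') (V j z)) 
      (fun z => (fun y : Fin n → ℝ => y i * y i') (V 0 z)) 
      (Measure.pi fun _ : Fin n => ν) (Measure.pi fun _ : Fin n => ν) := by
    intro j
    have : IdentDistrib (V j) (V 0) (Measure.pi fun _ : Fin n => ν) (Measure.pi fun _ : Fin n => ν) :=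
      ⟨(hV j).aemeasurable, (hV 0).aemeasurable, by rw [hVlaw, hVlaw]⟩
    exact this.comp hφ
  have := strong_law_ae_real (μ := Measure.pi fun _ : Fin n => ν) 
    (fun j z => (fun y : Fin n → ℝ => y i * y i') (V j z))
    ?_ ?_ hid
  · rw [← hmean, ← hVlaw 0, integral_map (hV 0).aemeasurable (by fun_prop)]
    exact this
  · rw [← hVlaw 0] at hintN
    exact (integrable_map_measure (by fun_prop) (hV 0).aemeasurable).1 hintN
  · intro j j' hjj
    exact (hVind j j' hjj).comp hφ hφ

theorem aux_gs {H : Type*} [NormedAddCommGroup H] [InnerProductSpace ℝ H] [CompleteSpace H]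
    [SecondCountableTopology H] [MeasurableSpace H] [BorelSpace H]
    (ν : Measure H) [IsGaussian ν] (hinj : ∀ h : H, Var[fun z => ⟪h, z⟫; ν] = 0 → h = 0)
    (e : ℕ → H) (he : Orthonormal ℝ e) :
    ∃ u : ℕ → H, (∀ r j, j < r → u j ∈ Submodule.span ℝ (e '' Set.Iio r)) ∧
      (∀ r j, j < r → e j ∈ Submodule.span ℝ (u '' Set.Iio r)) ∧
      (∀ i j, cov[fun z => ⟪u i, z⟫, fun z => ⟪u j, z⟫; ν] = if i = j then 1 else 0) := by
  have hmem : ∀ h : H, MemLp (fun z => ⟪h, z⟫ - ∫ y, ⟪h, y⟫ ∂ν) 2 ν := fun h =>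
    (IsGaussian.memLp_dual ν (innerSL ℝ h) 2 (by simp)).sub (memLp_const _)
  have hint : ∀ h : H, Integrable (fun z => ⟪h, z⟫) ν := fun h => 
    (IsGaussian.integrable_dual ν (innerSL ℝ h))
  let Φ : H →ₗ[ℝ] Lp ℝ 2 ν := 
    { toFun := fun h => (hmem h).toLp
      map_add' := by
        intro x y
        rw [← MemLp.toLp_add, MemLp.toLp_eq_toLp_iff]
        refine Eventually.of_forall fun z => ?_
        simp only [inner_add_left, Pi.add_apply]
        rw [integral_add (hint x) (hint y)]; ring
      map_smul' := by
        intro c x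
        simp only [RingHom.id_apply]
        rw [← MemLp.toLp_const_smul, MemLp.toLp_eq_toLp_iff]
        refine Eventually.of_forall fun z => ?_
        simp only [real_inner_smul_left, Pi.smul_apply, smul_eq_mul]
        rw [integral_const_mul]; ring }
  have hΦ : ∀ x y, ⟪Φ x, Φ y⟫ = cov[fun z => ⟪x, z⟫, fun z => ⟪y, z⟫; ν] := by
    intro x y
    rw [L2.inner_def, covariance]
    refine integral_congr_ae ?_
    filter_upwards [(hmem x).coeFn_toLp, (hmem y).coeFn_toLp] with z h1 h2
    change ⟪(hmem x).toLp _ z, (hmem y).toLp _ z⟫ = _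
    rw [h1, h2]; simp [mul_comm]
  have hΦinj : Function.Injective Φ := by
    rw [injective_iff_map_eq_zero]
    intro h hh
    apply hinj
    have := hΦ h h
    rw [hh, inner_zero_left, covariance_self] at this
    · exact this.symm
    · exact (hint h).aemeasurable
  have hli : LinearIndependent ℝ (Φ ∘ e) := 
    he.linearIndependent.map' Φ (LinearMap.ker_eq_bot.2 hΦinj)
  set g := InnerProductSpace.gramSchmidtNormed ℝ (Φ ∘ e) with hg
  have hgo : Orthonormal ℝ g := InnerProductSpace.gramSchmidtNormed_orthonormal hli
  have hspan : ∀ r : ℕ, Submodule.span ℝ (g '' Set.Iio r) = 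
      (Submodule.span ℝ (e '' Set.Iio r)).map Φ := by
    intro r
    rw [hg, InnerProductSpace.span_gramSchmidtNormed, InnerProductSpace.span_gramSchmidt_Iio,
      Submodule.map_span, Set.image_comp]
  have hex : ∀ j, ∃ u ∈ Submodule.span ℝ (e '' Set.Iio (j+1)), Φ u = g j := by
    intro j
    have : g j ∈ Submodule.span ℝ (g '' Set.Iio (j+1)) := 
      Submodule.subset_span ⟨j, by simp, rfl⟩
    rw [hspan] at this
    exact this
  choose u hu1 hu2 using hex
  refine ⟨u, ?_, ?_, ?_⟩
  · intro r j hj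
    refine Submodule.span_mono (Set.image_mono ?_) (hu1 j)
    exact Set.Iio_subset_Iio hj
  · intro r j hj
    have h1 : Φ (e j) ∈ (Submodule.span ℝ (e '' Set.Iio r)).map Φ := 
      Submodule.mem_map_of_mem (Submodule.subset_span ⟨j, hj, rfl⟩)
    rw [← hspan] at h1
    have h2 : g '' Set.Iio r = Φ '' (u '' Set.Iio r) := by
      rw [← Set.image_comp]; exact Set.image_congr fun j _ => (hu2 j).symm
    rw [h2, ← Submodule.map_span] at h1
    obtain ⟨y, hy, hy2⟩ := h1
    rwa [← hΦinj hy2]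
  · intro i j
    rw [← hΦ, hu2, hu2]
    exact orthonormal_iff_ite.1 hgo i j

section NullModel
set_option linter.unusedSectionVars false
variable {H : Type*} [NormedAddCommGroup H] [InnerProductSpace ℝ H] [CompleteSpace H]
    [SecondCountableTopology H] [MeasurableSpace H] [BorelSpace H]

/-- The law of `(A Z + ξ, B Z + η, Z)`. -/
def nullP (ν : Measure H) (A B : H → ℝ) (σ τ : ℝ≥0) : Measure (ℝ × ℝ × H) :=
  (((gaussianReal 0 σ).prod (gaussianReal 0 τ)).prod ν).map
    (fun p => (A p.2 + p.1.1, B p.2 + p.1.2, p.2))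

theorem nullP_meas {A B : H → ℝ} (hA : Measurable A) (hB : Measurable B) :
    Measurable (fun p : (ℝ × ℝ) × H => (A p.2 + p.1.1, B p.2 + p.1.2, p.2)) := by fun_prop

theorem nullP_prob (ν : Measure H) [IsProbabilityMeasure ν] {A B : H → ℝ} (hA : Measurable A)
    (hB : Measurable B) (σ τ : ℝ≥0) : IsProbabilityMeasure (nullP ν A B σ τ) :=
  Measure.isProbabilityMeasure_map (nullP_meas hA hB).aemeasurable

theorem nullP_map (ν : Measure H) [IsProbabilityMeasure ν] {A B : H → ℝ} (hA : Measurable A)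
    (hB : Measurable B) (σ τ : ℝ≥0) : (nullP ν A B σ τ).map (fun ω => ω.2.2) = ν := by
  rw [nullP, Measure.map_map (by fun_prop) (nullP_meas hA hB)]
  exact Measure.map_snd_prod.trans (by simp)

theorem nullP_condExp (ν : Measure H) [IsProbabilityMeasure ν] {A B : H → ℝ} (hA : Measurable A)
    (hB : Measurable B) (σ τ : ℝ≥0) (k : ℝ × ℝ × H → ℝ) (hk : Measurable k)
    (C : ℝ) (hC : ∀ a, |k a| ≤ C) :
    (nullP ν A B σ τ)[k|MeasurableSpace.comap (fun ω : ℝ × ℝ × H => ω.2.2) inferInstance]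
      =ᵐ[nullP ν A B σ τ] fun ω => ∫ x, k (A ω.2.2 + x.1, B ω.2.2 + x.2, ω.2.2)
        ∂((gaussianReal 0 σ).prod (gaussianReal 0 τ)) := by
  have := nullP_prob ν hA hB σ τ
  have hT := nullP_meas hA hB
  have hki : Integrable k (nullP ν A B σ τ) := 
    Integrable.of_bound hk.aestronglyMeasurable C (Eventually.of_forall fun a => by simpa using hC a)
  have hFm : StronglyMeasurable (fun z : H => ∫ x, k (A z + x.1, B z + x.2, z)
        ∂((gaussianReal 0 σ).prod (gaussianReal 0 τ))) := by
    refine StronglyMeasurable.integral_prod_right (f := fun z (x : ℝ × ℝ) => k (A z + x.1, B z + x.2, z)) ?_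
    refine Measurable.stronglyMeasurable ?_
    exact hk.comp (by fun_prop)
  have hFb : ∀ z : H, |∫ x, k (A z + x.1, B z + x.2, z)
        ∂((gaussianReal 0 σ).prod (gaussianReal 0 τ))| ≤ C := by
    intro z
    have := norm_integral_le_of_norm_le_const (μ := (gaussianReal 0 σ).prod (gaussianReal 0 τ))
      (f := fun x => k (A z + x.1, B z + x.2, z)) (C := C) (Eventually.of_forall fun x => by simpa using hC _)
    simpa using this
  have hsnd : Measurable (fun ω : ℝ × ℝ × H => ω.2.2) := by fun_prop
  have hFi : Integrable (fun ω : ℝ × ℝ × H => ∫ x, k (A ω.2.2 + x.1, B ω.2.2 + x.2, ω.2.2)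
        ∂((gaussianReal 0 σ).prod (gaussianReal 0 τ))) (nullP ν A B σ τ) := 
    Integrable.of_bound (hFm.comp_measurable hsnd).aestronglyMeasurable C
      (Eventually.of_forall fun a => by simpa using hFb _)
  symm
  refine ae_eq_condExp_of_forall_setIntegral_eq hsnd.comap_le hki (fun s _ _ => hFi.integrableOn) ?_ ?_
  · rintro s ⟨S, hS, rfl⟩ -
    have hpre : MeasurableSet ((fun ω : ℝ × ℝ × H => ω.2.2) ⁻¹' S) := hS.preimage hsnd
    have hFi1 := hFi.1
    unfold nullP at hFi1 ⊢
    rw [setIntegral_map hpre hFi1 hT.aemeasurable,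
      setIntegral_map hpre hk.aestronglyMeasurable hT.aemeasurable]
    have hset : (fun p : (ℝ × ℝ) × H => (A p.2 + p.1.1, B p.2 + p.1.2, p.2)) ⁻¹' 
        ((fun ω : ℝ × ℝ × H => ω.2.2) ⁻¹' S) = Set.univ ×ˢ S := by
      ext p; simp
    rw [hset, ← Measure.prod_restrict, Measure.restrict_univ, integral_prod_symm, integral_prod_symm]
    · simp
    · refine Integrable.of_bound (hk.comp hT).aestronglyMeasurable C
        (Eventually.of_forall fun a => by simpa using hC _)
    · refine Integrable.of_bound (hFm.comp_measurable measurable_snd).aestronglyMeasurable C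
        (Eventually.of_forall fun a => by simpa using hFb _)
  · exact (hFm.comp_measurable (comap_measurable _)).aestronglyMeasurable

theorem nullP_ci (ν : Measure H) [IsProbabilityMeasure ν] {A B : H → ℝ} (hA : Measurable A)
    (hB : Measurable B) (σ τ : ℝ≥0) : 
    CondIndepGiven (nullP ν A B σ τ) (fun ω => ω.1) (fun ω => ω.2.1) (fun ω => ω.2.2) := by
  rintro f g hf hg ⟨C, hC⟩ ⟨D, hD⟩
  have h1 := nullP_condExp ν hA hB σ τ (fun ω => f ω.1 * g ω.2.1) (by fun_prop) (C * D) (fun a => by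
    rw [abs_mul]; exact mul_le_mul (hC _) (hD _) (abs_nonneg _) ((abs_nonneg _).trans (hC a.1)))
  have h2 := nullP_condExp ν hA hB σ τ (fun ω => f ω.1) (by fun_prop) C (fun a => hC _)
  have h3 := nullP_condExp ν hA hB σ τ (fun ω => g ω.2.1) (by fun_prop) D (fun a => hD _)
  filter_upwards [h1, h2, h3] with ω h1 h2 h3
  rw [h1, h2, h3]
  have e1 := integral_prod_mul (μ := gaussianReal 0 σ) (ν := gaussianReal 0 τ)
    (fun x => f (A ω.2.2 + x)) (fun x => g (B ω.2.2 + x))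
  have e2 := integral_prod_mul (μ := gaussianReal 0 σ) (ν := gaussianReal 0 τ)
    (fun x => f (A ω.2.2 + x)) (fun x => (1:ℝ))
  have e3 := integral_prod_mul (μ := gaussianReal 0 σ) (ν := gaussianReal 0 τ)
    (fun x => (1:ℝ)) (fun x => g (B ω.2.2 + x))
  simp only [mul_one, one_mul, integral_const, probReal_univ, smul_eq_mul] at e2 e3
  rw [e1, e2, e3]

theorem nullP_sparse (ν : Measure H) [IsProbabilityMeasure ν] {A B : H → ℝ} (hA : Measurable A)
    (hB : Measurable B) (σ τ : ℝ≥0) (e : ℕ → H) (r : ℕ) (A' B' : (Fin r → ℝ) → ℝ)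
    (hA' : Measurable A') (hB' : Measurable B')
    (hAA : ∀ z, A z = A' (fun i => ⟪e i, z⟫)) (hBB : ∀ z, B z = B' (fun i => ⟪e i, z⟫)) : 
    CondIndepGiven (nullP ν A B σ τ) (fun ω => (ω.1, ω.2.1))
      (fun ω (k : ℕ) => ⟪e (r + k), ω.2.2⟫) (fun ω (i : Fin r) => ⟪e (i : ℕ), ω.2.2⟫) := by
  have := nullP_prob ν hA hB σ τ
  rintro f g hf hg ⟨C, hC⟩ ⟨D, hD⟩
  set P := nullP ν A B σ τ with hP
  let π : ℝ × ℝ × H → (Fin r → ℝ) := fun ω i => ⟪e (i : ℕ), ω.2.2⟫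
  have hπ : Measurable π := by simp only [π]; fun_prop
  have htail : Measurable (fun (ω : ℝ × ℝ × H) (k : ℕ) => ⟪e (r + k), ω.2.2⟫) := by fun_prop
  have hsnd : Measurable (fun ω : ℝ × ℝ × H => ω.2.2) := by fun_prop
  have hle : MeasurableSpace.comap π inferInstance ≤ 
      MeasurableSpace.comap (fun ω : ℝ × ℝ × H => ω.2.2) inferInstance := by
    have : π = (fun (z : H) (i : Fin r) => ⟪e (i : ℕ), z⟫) ∘ (fun ω : ℝ × ℝ × H => ω.2.2) := rfl
    rw [this, ← MeasurableSpace.comap_comp]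
    refine MeasurableSpace.comap_mono ?_
    exact Measurable.comap_le (by fun_prop)
  have hle2 := hsnd.comap_le
  let F : (Fin r → ℝ) → ℝ := fun y => ∫ x, f (A' y + x.1, B' y + x.2) 
    ∂((gaussianReal 0 σ).prod (gaussianReal 0 τ))
  have hF : StronglyMeasurable F := by
    refine StronglyMeasurable.integral_prod_right (f := fun y (x : ℝ × ℝ) => f (A' y + x.1, B' y + x.2)) ?_
    refine Measurable.stronglyMeasurable ?_
    exact hf.comp (by fun_prop)
  have hFb : ∀ z, |F z| ≤ C := by
    intro z
    have := norm_integral_le_of_norm_le_const (μ := (gaussianReal 0 σ).prod (gaussianReal 0 τ))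
      (f := fun x => f (A' z + x.1, B' z + x.2)) (C := C) (Eventually.of_forall fun x => by simpa using hC _)
    simpa using this
  have hFπ : StronglyMeasurable[MeasurableSpace.comap π inferInstance] (fun ω => F (π ω)) := 
    hF.comp_measurable (comap_measurable _)
  have hFi : Integrable (fun ω => F (π ω)) P := 
    Integrable.of_bound (hFπ.mono (hle.trans hle2)).aestronglyMeasurable C 
        (Eventually.of_forall fun a => by simpa using hFb _)
  have hgm : Measurable (fun ω : ℝ × ℝ × H => g (fun k : ℕ => ⟪e (r + k), ω.2.2⟫)) := hg.comp htail
  have hgi : Integrable (fun ω : ℝ × ℝ × H => g (fun k : ℕ => ⟪e (r + k), ω.2.2⟫)) P := 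
    Integrable.of_bound hgm.aestronglyMeasurable D 
        (Eventually.of_forall fun a => by simpa using hD _)
  have hFgi : Integrable (fun ω : ℝ × ℝ × H => F (π ω) * g (fun k : ℕ => ⟪e (r + k), ω.2.2⟫)) P := 
    hgi.bdd_mul (c := C) hFi.1 (Eventually.of_forall fun a => by simpa using hFb _)
  have h1 := nullP_condExp ν hA hB σ τ 
    (fun ω => f (ω.1, ω.2.1) * g (fun k : ℕ => ⟪e (r + k), ω.2.2⟫)) (by fun_prop) (C * D) (fun a => by
    rw [abs_mul]; exact mul_le_mul (hC _) (hD _) (abs_nonneg _) ((abs_nonneg _).trans (hC (a.1, a.2.1))))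
  have h2 := nullP_condExp ν hA hB σ τ (fun ω => f (ω.1, ω.2.1)) (by fun_prop) C (fun a => hC _)
  simp only [integral_mul_const] at h1
  have eF : ∀ ω : ℝ × ℝ × H, ∫ x, f (A ω.2.2 + x.1, B ω.2.2 + x.2)
        ∂((gaussianReal 0 σ).prod (gaussianReal 0 τ)) = F (π ω) := by
    intro ω; simp only [F, hAA, hBB, π]
  simp only [eF, ← hP] at h1 h2
  have t1 := condExp_condExp_of_le (μ := P) (f := fun ω => f (ω.1, ω.2.1) * g (fun k : ℕ => ⟪e (r + k), ω.2.2⟫)) hle hle2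
  have t2 := condExp_condExp_of_le (μ := P) (f := fun ω => f (ω.1, ω.2.1)) hle hle2
  have c1 := condExp_congr_ae (m := MeasurableSpace.comap π inferInstance) h1
  have c2 := condExp_congr_ae (m := MeasurableSpace.comap π inferInstance) h2
  have p1 := condExp_mul_of_stronglyMeasurable_left hFπ hFgi hgi
  have p2 := condExp_of_stronglyMeasurable (hle.trans hle2) hFπ hFi
  rw [p2] at c2
  filter_upwards [t1, t2, c1, c2, p1] with ω t1 t2 c1 c2 p1
  change P[_|MeasurableSpace.comap π inferInstance] ω = P[_|MeasurableSpace.comap π inferInstance] ω * P[_|MeasurableSpace.comap π inferInstance] ω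
  rw [← t1, c1, ← t2, c2]
  exact p1

end NullModel

section NullModel2
set_option linter.unusedSectionVars false
variable {H : Type*} [NormedAddCommGroup H] [InnerProductSpace ℝ H] [CompleteSpace H]
    [SecondCountableTopology H] [MeasurableSpace H] [BorelSpace H]

theorem nullP_gauss (ν : Measure H) [IsGaussian ν] {A B : H → ℝ} (a0 b0 : ℝ) (a b : H)
    (hA : ∀ z, A z = a0 + ⟪a, z⟫) (hB : ∀ z, B z = b0 + ⟪b, z⟫) (σ τ : ℝ≥0) :
    IsGaussianMeasure (nullP ν A B σ τ) := by
  obtain rfl : A = fun z => a0 + ⟪a, z⟫ := funext hA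
  obtain rfl : B = fun z => b0 + ⟪b, z⟫ := funext hB
  let M : ((ℝ × ℝ) × H) →L[ℝ] (ℝ × ℝ × H) :=
    (((innerSL ℝ a).comp (ContinuousLinearMap.snd ℝ (ℝ × ℝ) H)) +
      (ContinuousLinearMap.fst ℝ ℝ ℝ).comp (ContinuousLinearMap.fst ℝ (ℝ × ℝ) H)).prod
    ((((innerSL ℝ b).comp (ContinuousLinearMap.snd ℝ (ℝ × ℝ) H)) +
      (ContinuousLinearMap.snd ℝ ℝ ℝ).comp (ContinuousLinearMap.fst ℝ (ℝ × ℝ) H)).prod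
      (ContinuousLinearMap.snd ℝ (ℝ × ℝ) H))
  have hM : nullP ν (fun z => a0 + ⟪a, z⟫) (fun z => b0 + ⟪b, z⟫) σ τ =
      ((((gaussianReal 0 σ).prod (gaussianReal 0 τ)).prod ν).map M).map
        (fun x => ((a0, b0, 0) : ℝ × ℝ × H) + x) := by
    rw [Measure.map_map (by fun_prop) (by fun_prop), nullP]
    congr 1
    ext p <;> simp [M, add_assoc]
  have hG : IsGaussian (nullP ν (fun z => a0 + ⟪a, z⟫) (fun z => b0 + ⟪b, z⟫) σ τ) := by
    rw [hM]; infer_instance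
  intro L
  exact ⟨_, _, IsGaussian.map_eq_gaussianReal L⟩

theorem aux_dual_decomp (L : (ℝ × ℝ × H) →L[ℝ] ℝ) : ∃ (l1 l2 : ℝ) (h : H),
    ∀ x y z, L (x, y, z) = l1 * x + l2 * y + ⟪h, z⟫ := by
  let L3 : H →L[ℝ] ℝ := L.comp ((ContinuousLinearMap.inr ℝ ℝ (ℝ × H)).comp (ContinuousLinearMap.inr ℝ ℝ H))
  refine ⟨L (1, 0, 0), L (0, 1, 0), (InnerProductSpace.toDual ℝ H).symm L3, fun x y z => ?_⟩
  rw [InnerProductSpace.toDual_symm_apply]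
  have : ((x, y, z) : ℝ × ℝ × H) = x • (1, 0, 0) + y • (0, 1, 0) + (0, 0, z) := by
    ext <;> simp
  rw [this, map_add, map_add, map_smul, map_smul]
  simp [L3, mul_comm]

theorem covForm_self (P : Measure (ℝ × ℝ × H)) (L : (ℝ × ℝ × H) →L[ℝ] ℝ) :
    covForm P L L = Var[L; P] := by
  rw [← covariance_self (by fun_prop)]
  rfl

theorem nullP_inj (ν : Measure H) [IsGaussian ν]
    (hinj : ∀ h : H, Var[fun z => ⟪h, z⟫; ν] = 0 → h = 0)
    {A B : H → ℝ} (a0 b0 : ℝ) (a b : H)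
    (hA : ∀ z, A z = a0 + ⟪a, z⟫) (hB : ∀ z, B z = b0 + ⟪b, z⟫) (σ τ : ℝ≥0)
    (hσ : 0 < σ) (hτ : 0 < τ) :
    HasInjectiveCovariance (nullP ν A B σ τ) := by
  intro L hL
  have h0 := hL L
  rw [covForm_self] at h0
  obtain rfl : A = fun z => a0 + ⟪a, z⟫ := funext hA
  obtain rfl : B = fun z => b0 + ⟪b, z⟫ := funext hB
  obtain ⟨l1, l2, h, hLe⟩ := aux_dual_decomp L
  rw [nullP, variance_map (by fun_prop) (by fun_prop)] at h0
  have hcomp : (L ∘ fun p : (ℝ × ℝ) × H => (a0 + ⟪a, p.2⟫ + p.1.1, b0 + ⟪b, p.2⟫ + p.1.2, p.2)) =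
      fun p => (l1 * a0 + l2 * b0) + ((l1 * p.1.1 + l2 * p.1.2) + ⟪l1 • a + l2 • b + h, p.2⟫) := by
    ext p
    simp only [Function.comp, hLe, inner_add_left, inner_smul_left]
    simp; ring
  have m1 : ∀ (l : ℝ) (v : ℝ≥0), MemLp (fun x : ℝ => l * x) 2 (gaussianReal 0 v) := fun l v =>
    (memLp_id_gaussianReal 2).const_mul l
  have m2 : MemLp (fun x : ℝ × ℝ => l1 * x.1 + l2 * x.2) 2
      ((gaussianReal 0 σ).prod (gaussianReal 0 τ)) :=
    ((m1 l1 σ).comp_fst _).add ((m1 l2 τ).comp_snd _)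
  have m3 : MemLp (fun z : H => ⟪l1 • a + l2 • b + h, z⟫) 2 ν :=
    IsGaussian.memLp_dual ν (innerSL ℝ (l1 • a + l2 • b + h)) 2 (by simp)
  have v1 : ∀ (l : ℝ) (v : ℝ≥0), Var[fun x : ℝ => l * x; gaussianReal 0 v] = l ^ 2 * v := by
    intro l v
    rw [variance_const_mul]; congr 1; exact variance_id_gaussianReal
  rw [hcomp, variance_const_add (by fun_prop), variance_add_prod m2 m3,
    variance_add_prod (m1 l1 σ) (m1 l2 τ), v1, v1] at h0
  have n1 : 0 ≤ l1 ^ 2 * (σ : ℝ) := by positivity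
  have n2 : 0 ≤ l2 ^ 2 * (τ : ℝ) := by positivity
  have n3 := variance_nonneg (fun z : H => ⟪l1 • a + l2 • b + h, z⟫) ν
  have hσ' : (0:ℝ) < σ := hσ
  have hτ' : (0:ℝ) < τ := hτ
  have z1 : l1 = 0 := by
    have : l1 ^ 2 * (σ : ℝ) = 0 := by linarith
    simpa [hσ'.ne'] using this
  have z2 : l2 = 0 := by
    have : l2 ^ 2 * (τ : ℝ) = 0 := by linarith
    simpa [hτ'.ne'] using this
  have z3 := hinj _ (by linarith : Var[fun z : H => ⟪l1 • a + l2 • b + h, z⟫; ν] = 0)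
  subst z1 z2
  simp only [zero_smul, zero_add] at z3
  subst z3
  refine ContinuousLinearMap.ext fun p => ?_
  rw [show p = (p.1, p.2.1, p.2.2) from rfl, hLe]
  simp

end NullModel2

section Regress
set_option linter.unusedSectionVars false
variable {H : Type*} [NormedAddCommGroup H] [InnerProductSpace ℝ H] [CompleteSpace H]
    [SecondCountableTopology H] [MeasurableSpace H] [BorelSpace H]

theorem inj_var (Q : Measure (ℝ × ℝ × H)) [IsGaussian Q] (hinj : HasInjectiveCovariance Q)
    (L : (ℝ × ℝ × H) →L[ℝ] ℝ) (h : Var[L; Q] = 0) : L = 0 := by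
  refine hinj L fun L₂ => ?_
  have h1 : L =ᵐ[Q] fun _ => Q[L] :=
    (evariance_eq_zero_iff (by fun_prop)).1
      (by rw [← ofReal_variance (IsGaussian.memLp_dual Q L 2 (by simp)), h, ENNReal.ofReal_zero])
  unfold covForm
  rw [← integral_zero (ℝ × ℝ × H) ℝ (μ := Q)]
  refine integral_congr_ae ?_
  filter_upwards [h1] with x hx
  rw [hx]; simp

/-- the functional `ω ↦ ⟪h, ω.2.2⟫`. -/
def zf (h : H) : (ℝ × ℝ × H) →L[ℝ] ℝ :=
  (innerSL ℝ h).comp ((ContinuousLinearMap.snd ℝ ℝ H).comp (ContinuousLinearMap.snd ℝ ℝ (ℝ × H)))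

theorem zf_apply (h : H) (ω : ℝ × ℝ × H) : zf h ω = ⟪h, ω.2.2⟫ := rfl

theorem zf_var (Q : Measure (ℝ × ℝ × H)) (h : H) :
    Var[fun z => ⟪h, z⟫; Q.map (fun ω => ω.2.2)] = Var[zf h; Q] := by
  rw [variance_map (by fun_prop) (by fun_prop)]
  rfl

theorem marg_inj (Q : Measure (ℝ × ℝ × H)) [IsGaussian Q] (hinj : HasInjectiveCovariance Q)
    (h : H) (hv : Var[fun z => ⟪h, z⟫; Q.map (fun ω => ω.2.2)] = 0) : h = 0 := by
  rw [zf_var] at hv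
  have := inj_var Q hinj _ hv
  have h2 := congrArg (fun L => L ((0, 0, h) : ℝ × ℝ × H)) this
  simpa [zf_apply] using h2

theorem cov_riesz (Q : Measure (ℝ × ℝ × H)) [IsGaussian Q] (L : (ℝ × ℝ × H) →L[ℝ] ℝ) :
    ∃ w : H, ∀ h : H, cov[L, zf h; Q] = ⟪h, w⟫ := by
  let π : (ℝ × ℝ × H) →L[ℝ] H :=
    (ContinuousLinearMap.snd ℝ ℝ H).comp (ContinuousLinearMap.snd ℝ ℝ (ℝ × H))
  let Φ : H →L[ℝ] ℝ := (covarianceBilinDual Q L).comp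
    (((ContinuousLinearMap.compL ℝ (ℝ × ℝ × H) H ℝ).flip π).comp (innerSLFlip ℝ))
  refine ⟨(InnerProductSpace.toDual ℝ H).symm Φ, fun h => ?_⟩
  rw [real_inner_comm, InnerProductSpace.toDual_symm_apply]
  have h2 : Φ h = covarianceBilinDual Q L (zf h) := by
    simp only [Φ, ContinuousLinearMap.comp_apply]
    congr 1
    ext x
    · simp [zf, π]
    · simp [zf, π]
    · simp only [π, zf, ContinuousLinearMap.flip_apply, ContinuousLinearMap.compL_apply, ContinuousLinearMap.comp_apply, innerSL_apply_apply]
      exact real_inner_comm _ _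
  rw [h2, covarianceBilinDual_eq_covariance IsGaussian.memLp_two_id]

theorem cov_zero_span (Q : Measure (ℝ × ℝ × H)) [IsGaussian Q] (L : (ℝ × ℝ × H) →L[ℝ] ℝ)
    (S : Set H) (hS : ∀ h ∈ S, cov[L, zf h; Q] = 0) :
    ∀ h ∈ (Submodule.span ℝ S).topologicalClosure, cov[L, zf h; Q] = 0 := by
  obtain ⟨w, hw⟩ := cov_riesz Q L
  intro h hh
  rw [hw]
  have h1 : Submodule.span ℝ S ≤ (ℝ ∙ w)ᗮ := by
    rw [Submodule.span_le]
    intro x hx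
    rw [SetLike.mem_coe, Submodule.mem_orthogonal_singleton_iff_inner_left, ← hw]
    exact hS x hx
  have h2 := Submodule.topologicalClosure_minimal _ h1 (Submodule.isClosed_orthogonal _) hh
  rwa [Submodule.mem_orthogonal_singleton_iff_inner_left] at h2

/-- Regression on the first `r` coordinates. -/
theorem regress_exists (Q : Measure (ℝ × ℝ × H)) [IsGaussian Q] (e u : ℕ → H) (r : ℕ)
    (hu : ∀ j, j < r → u j ∈ Submodule.span ℝ (e '' Set.Iio r))
    (hu2 : ∀ j, j < r → e j ∈ Submodule.span ℝ (u '' Set.Iio r))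
    (hcov : ∀ i j, cov[zf (u i), zf (u j); Q] = if i = j then 1 else 0)
    (L : (ℝ × ℝ × H) →L[ℝ] ℝ) :
    ∃ a ∈ Submodule.span ℝ (e '' Set.Iio r), ∀ i < r, cov[(L - zf a : (ℝ × ℝ × H) →L[ℝ] ℝ), zf (e i); Q] = 0 := by
  have hm : ∀ L : (ℝ × ℝ × H) →L[ℝ] ℝ, MemLp L 2 Q := fun L => IsGaussian.memLp_dual Q L 2 (by simp)
  set a : H := ∑ j ∈ Finset.range r, cov[L, zf (u j); Q] • u j with ha
  refine ⟨a, Submodule.sum_mem _ fun j hj => Submodule.smul_mem _ _ (hu j (by simpa using hj)), ?_⟩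
  have key : ∀ h ∈ u '' Set.Iio r, cov[(L - zf a : (ℝ × ℝ × H) →L[ℝ] ℝ), zf h; Q] = 0 := by
    rintro _ ⟨i, hi, rfl⟩
    have hzf : (zf a : ℝ × ℝ × H → ℝ) = fun ω => ∑ j ∈ Finset.range r, cov[L, zf (u j); Q] * zf (u j) ω := by
      ext ω
      simp only [zf_apply, ha, sum_inner, inner_smul_left]
      simp
    have h1 : cov[(zf a : ℝ × ℝ × H → ℝ), zf (u i); Q] = cov[L, zf (u i); Q] := by
      rw [hzf, covariance_fun_sum_left' (fun j _ => (hm _).const_mul _) (hm _)]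
      simp only [covariance_const_mul_left, hcov]
      rw [Finset.sum_eq_single i]
      · simp
      · intro b _ hb; simp [hb]
      · intro hi'; exact absurd (Finset.mem_range.2 hi) hi'
    rw [FunLike.coe_sub, covariance_sub_left (hm _) (hm _) (hm _), h1, sub_self]
  intro i hi
  exact cov_zero_span Q _ _ key _ (Submodule.le_topologicalClosure _ (hu2 i hi))

end Regress

section Sparse
set_option linter.unusedSectionVars false
variable {H : Type*} [NormedAddCommGroup H] [InnerProductSpace ℝ H] [CompleteSpace H]
    [SecondCountableTopology H] [MeasurableSpace H] [BorelSpace H]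

/-- truncation -/
def trn (N : ℕ) (x : ℝ) : ℝ := max (-(N : ℝ)) (min (N : ℝ) x)

theorem trn_meas (N : ℕ) : Measurable (trn N) := by unfold trn; fun_prop

theorem trn_bd (N : ℕ) (x : ℝ) : |trn N x| ≤ N := by
  have : (0 : ℝ) ≤ N := Nat.cast_nonneg N
  rw [trn, abs_le]
  exact ⟨le_max_left _ _, max_le (by linarith) (min_le_left _ _)⟩

theorem trn_le (N : ℕ) (x : ℝ) : |trn N x| ≤ |x| := by
  have : (0 : ℝ) ≤ N := Nat.cast_nonneg N
  rw [trn, abs_le]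
  constructor
  · refine le_max_of_le_right (le_min ?_ (neg_abs_le x))
    have := abs_nonneg x; linarith
  · refine max_le ?_ ((min_le_right _ _).trans (le_abs_self x))
    have := abs_nonneg x; linarith

theorem trn_tendsto (x : ℝ) : Tendsto (fun N => trn N x) atTop (𝓝 x) := by
  refine tendsto_const_nhds.congr' ?_
  obtain ⟨N0, hN0⟩ := exists_nat_ge |x|
  filter_upwards [eventually_ge_atTop N0] with N hN
  have h1 : |x| ≤ N := hN0.trans (by exact_mod_cast hN)
  rw [abs_le] at h1
  rw [trn, min_eq_right h1.2, max_eq_right h1.1]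

/-- Removal of truncation under the integral. -/
theorem trn_lim {Ω : Type*} [MeasurableSpace Ω] (μ : Measure Ω) (X g g' : Ω → ℝ)
    (hX : AEStronglyMeasurable X μ)
    (h1 : Integrable (fun ω => X ω * g ω) μ) (h2 : Integrable (fun ω => X ω * g' ω) μ)
    (hg : AEStronglyMeasurable g μ) (hg' : AEStronglyMeasurable g' μ)
    (h : ∀ N, ∫ ω, trn N (X ω) * g ω ∂μ = ∫ ω, trn N (X ω) * g' ω ∂μ) :
    ∫ ω, X ω * g ω ∂μ = ∫ ω, X ω * g' ω ∂μ := by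
  have key : ∀ g : Ω → ℝ, AEStronglyMeasurable g μ → Integrable (fun ω => X ω * g ω) μ →
      Tendsto (fun N => ∫ ω, trn N (X ω) * g ω ∂μ) atTop (𝓝 (∫ ω, X ω * g ω ∂μ)) := by
    intro g hg hi
    refine tendsto_integral_of_dominated_convergence (fun ω => ‖X ω * g ω‖) ?_ hi.norm ?_ ?_
    · intro N
      exact ((trn_meas N).comp_aemeasurable hX.aemeasurable).aestronglyMeasurable.mul hg
    · intro N
      refine Eventually.of_forall fun ω => ?_
      rw [norm_mul, norm_mul]
      exact mul_le_mul_of_nonneg_right (trn_le N _) (norm_nonneg _)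
    · exact Eventually.of_forall fun ω => (trn_tendsto _).mul_const _
  exact tendsto_nhds_unique (key g hg h1) (by simpa only [h] using key g' hg' h2)

/-- A bounded function against a conditional expectation. -/
theorem ce_pull {Ω : Type*} {m m0 : MeasurableSpace Ω} (hm : m ≤ m0) (μ : Measure[m0] Ω)
    [IsProbabilityMeasure μ] (x g : Ω → ℝ)
    (hx : StronglyMeasurable[m] x) (hxg : Integrable (fun ω => x ω * g ω) μ)
    (hg : Integrable g μ) :
    ∫ ω, x ω * g ω ∂μ = ∫ ω, x ω * (μ[g|m]) ω ∂μ := by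
  rw [← integral_condExp hm (f := fun ω => x ω * g ω)]
  exact integral_congr_ae (condExp_mul_of_stronglyMeasurable_left hx hxg hg)

theorem sparse_cov (Q : Measure (ℝ × ℝ × H)) [IsGaussian Q] (e : ℕ → H) (r : ℕ)
    (hsp : CondIndepGiven Q (fun ω => (ω.1, ω.2.1))
      (fun ω (k : ℕ) => ⟪e (r + k), ω.2.2⟫) (fun ω (i : Fin r) => ⟪e (i : ℕ), ω.2.2⟫))
    (f : (ℝ × ℝ) → ℝ) (hf : Measurable f) (a : H) (ha : a ∈ Submodule.span ℝ (e '' Set.Iio r))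
    (L : (ℝ × ℝ × H) →L[ℝ] ℝ) (hL : ∀ ω, L ω = f (ω.1, ω.2.1) - ⟪a, ω.2.2⟫)
    (hcov : ∀ i < r, cov[L, zf (e i); Q] = 0) (k : ℕ) :
    cov[L, zf (e (r + k)); Q] = 0 := by
  have hm : ∀ L : (ℝ × ℝ × H) →L[ℝ] ℝ, MemLp L 2 Q := fun L => IsGaussian.memLp_dual Q L 2 (by simp)
  let π : ℝ × ℝ × H → (Fin r → ℝ) := fun ω i => ⟪e (i : ℕ), ω.2.2⟫
  have hπ : Measurable π := by simp only [π]; fun_prop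
  have hle := hπ.comap_le
  have hamem : StronglyMeasurable[(MeasurableSpace.comap π MeasurableSpace.pi)] (fun ω : ℝ × ℝ × H => ⟪a, ω.2.2⟫) := by
    refine Submodule.span_induction (p := fun a _ => StronglyMeasurable[(MeasurableSpace.comap π MeasurableSpace.pi)] (fun ω : ℝ × ℝ × H => ⟪a, ω.2.2⟫))
      ?_ ?_ ?_ ?_ ha
    · rintro _ ⟨i, hi, rfl⟩
      refine Measurable.stronglyMeasurable ?_
      exact (measurable_pi_apply (⟨i, hi⟩ : Fin r)).comp (comap_measurable π)
    · simpa using stronglyMeasurable_const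
    · intro x y _ _ hx hy
      simp only [inner_add_left]
      exact hx.add hy
    · intro c x _ hx
      simp only [real_inner_smul_left]
      exact hx.const_mul c
  let ε : ℝ × ℝ × H → ℝ := fun ω => L ω - Q[L]
  have hind0 : IndepFun (fun ω (_ : Unit) => L ω) π Q := by
    refine HasGaussianLaw.indepFun_of_covariance_eval (X := fun _ ω => L ω)
      (Y := fun (i : Fin r) (ω : ℝ × ℝ × H) => ⟪e (i : ℕ), ω.2.2⟫) ?_ ?_
    · let M : (ℝ × ℝ × H) →L[ℝ] ((Unit → ℝ) × (Fin r → ℝ)) :=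
        (ContinuousLinearMap.pi fun _ => L).prod (ContinuousLinearMap.pi fun i => zf (e i))
      exact (IsGaussian.hasGaussianLaw_id (μ := Q)).map_fun M
    · intro _ i
      exact hcov i i.2
  have hind : IndepFun ε π Q :=
    hind0.comp (φ := fun x : Unit → ℝ => x () - ∫ ω, L ω ∂Q) (ψ := id) (by fun_prop) measurable_id
  have hεi : Integrable ε Q := ((hm L).integrable (by simp)).sub (integrable_const _)
  have hε2 : MemLp ε 2 Q := (hm L).sub (memLp_const _)
  have hε0 : ∫ ω, ε ω ∂Q = 0 := by
    simp only [ε]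
    rw [integral_sub ((hm L).integrable (by simp)) (integrable_const _)]
    simp
  have hεm : Measurable ε := by simp only [ε]; fun_prop
  have hce : Q[ε|(MeasurableSpace.comap π MeasurableSpace.pi)] =ᵐ[Q] fun _ => 0 := by
    have := condExp_indep_eq (μ := Q) (m₁ := MeasurableSpace.comap ε inferInstance) (m₂ := (MeasurableSpace.comap π MeasurableSpace.pi))
      hεm.comap_le hle (f := ε) (comap_measurable ε).stronglyMeasurable hind
    rw [hε0] at this
    exact this
  let V : ℝ × ℝ × H → ℝ := fun ω => ⟪e (r + k), ω.2.2⟫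
  have hVm : Measurable V := by simp only [V]; fun_prop
  have hV2 : MemLp V 2 Q := hm (zf (e (r + k)))
  have hXm : Measurable (fun ω : ℝ × ℝ × H => f (ω.1, ω.2.1)) := by fun_prop
  have haL : MemLp (fun ω : ℝ × ℝ × H => ⟪a, ω.2.2⟫) 2 Q := hm (zf a)
  have hXeq : (fun ω : ℝ × ℝ × H => f (ω.1, ω.2.1)) = fun ω => L ω + ⟪a, ω.2.2⟫ := by
    ext ω; rw [hL]; ring
  have hX2 : MemLp (fun ω : ℝ × ℝ × H => f (ω.1, ω.2.1)) 2 Q := by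
    rw [hXeq]; exact (hm L).add haL
  have main : ∀ N, ∫ ω, trn N (V ω) * ε ω ∂Q = ∫ ω, trn N (V ω) * 0 ∂Q := by
    intro N
    let g : ℝ × ℝ × H → ℝ := fun ω => trn N (V ω)
    have hgm : Measurable g := (trn_meas N).comp hVm
    have hgb : ∀ ω, ‖g ω‖ ≤ N := fun ω => trn_bd N _
    have hgi : Integrable g Q := Integrable.of_bound hgm.aestronglyMeasurable N (Eventually.of_forall hgb)
    have hEb : ∀ᵐ ω ∂Q, ‖(Q[g|(MeasurableSpace.comap π MeasurableSpace.pi)]) ω‖ ≤ N := by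
      have := ae_bdd_abs_condExp_of_ae_bdd_abs (m := (MeasurableSpace.comap π MeasurableSpace.pi)) (μ := Q) (R := (N : ℝ)) (f := g)
        (Eventually.of_forall fun ω => by simpa using trn_bd N _)
      simpa using this
    have hEm : StronglyMeasurable[(MeasurableSpace.comap π MeasurableSpace.pi)] (Q[g|(MeasurableSpace.comap π MeasurableSpace.pi)]) := stronglyMeasurable_condExp
    have hEm' : AEStronglyMeasurable (Q[g|(MeasurableSpace.comap π MeasurableSpace.pi)]) Q := (hEm.mono hle).aestronglyMeasurable
    have big : ∀ x : ℝ × ℝ × H → ℝ, Integrable x Q → Integrable (fun ω => x ω * g ω) Q := fun x hx =>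
      hx.mul_bdd (c := N) hgm.aestronglyMeasurable (Eventually.of_forall hgb)
    have bigE : ∀ x : ℝ × ℝ × H → ℝ, Integrable x Q → Integrable (fun ω => x ω * (Q[g|(MeasurableSpace.comap π MeasurableSpace.pi)]) ω) Q := fun x hx =>
      hx.mul_bdd (c := N) hEm' hEb
    have hXi := hX2.integrable (by simp : (1 : ℝ≥0∞) ≤ 2)
    have hai := haL.integrable (by simp : (1 : ℝ≥0∞) ≤ 2)
    have s1 : ∫ ω, f (ω.1, ω.2.1) * g ω ∂Q = ∫ ω, f (ω.1, ω.2.1) * (Q[g|(MeasurableSpace.comap π MeasurableSpace.pi)]) ω ∂Q := by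
      refine trn_lim Q _ _ _ hX2.1 (big _ hXi) (bigE _ hXi) hgm.aestronglyMeasurable hEm' ?_
      intro M
      have c := hsp (fun x => trn M (f x)) (fun y => trn N (y k)) ((trn_meas M).comp hf)
        ((trn_meas N).comp (measurable_pi_apply k)) ⟨M, fun _ => trn_bd _ _⟩ ⟨N, fun _ => trn_bd _ _⟩
      have hti : Integrable (fun ω : ℝ × ℝ × H => trn M (f (ω.1, ω.2.1))) Q :=
        Integrable.of_bound ((trn_meas M).comp hXm).aestronglyMeasurable M
          (Eventually.of_forall fun _ => trn_bd _ _)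
      have c2 := condExp_mul_of_stronglyMeasurable_right hEm (bigE _ hti) hti
      rw [← integral_condExp hle (f := fun ω => trn M (f (ω.1, ω.2.1)) * g ω),
        ← integral_condExp hle (f := fun ω => trn M (f (ω.1, ω.2.1)) * (Q[g|(MeasurableSpace.comap π MeasurableSpace.pi)]) ω)]
      exact integral_congr_ae (c.trans c2.symm)
    have s2 : ∫ ω, ⟪a, ω.2.2⟫ * g ω ∂Q = ∫ ω, ⟪a, ω.2.2⟫ * (Q[g|(MeasurableSpace.comap π MeasurableSpace.pi)]) ω ∂Q :=
      ce_pull hle Q _ _ hamem (big _ hai) hgi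
    have s3 : ∫ ω, Q[L] * g ω ∂Q = ∫ ω, Q[L] * (Q[g|(MeasurableSpace.comap π MeasurableSpace.pi)]) ω ∂Q := by
      rw [integral_const_mul, integral_const_mul, integral_condExp hle]
    have s4 : ∫ ω, ε ω * (Q[g|(MeasurableSpace.comap π MeasurableSpace.pi)]) ω ∂Q = 0 := by
      have c2 := condExp_mul_of_stronglyMeasurable_right hEm (bigE _ hεi) hεi
      rw [← integral_condExp hle (f := fun ω => ε ω * (Q[g|(MeasurableSpace.comap π MeasurableSpace.pi)]) ω)]
      rw [← integral_zero (ℝ × ℝ × H) ℝ (μ := Q)]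
      refine integral_congr_ae (c2.trans ?_)
      filter_upwards [hce] with ω hω
      simp [hω]
    have eE : ∀ x : ℝ × ℝ × H → ℝ, (∀ y, Integrable y Q → Integrable (fun ω => y ω * x ω) Q) → 
        ∫ ω, ε ω * x ω ∂Q = ∫ ω, f (ω.1, ω.2.1) * x ω ∂Q - ∫ ω, ⟪a, ω.2.2⟫ * x ω ∂Q - ∫ ω, Q[L] * x ω ∂Q := by
      intro x hx
      have hsub : Integrable (fun ω => f (ω.1, ω.2.1) * x ω - ⟪a, ω.2.2⟫ * x ω) Q :=
        (hx _ hXi).sub (hx _ hai)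
      rw [← integral_sub (hx _ hXi) (hx _ hai), ← integral_sub hsub (hx _ (integrable_const _))]
      refine integral_congr_ae (Eventually.of_forall fun ω => ?_)
      simp only [ε, hL]; ring
    have : ∫ ω, ε ω * g ω ∂Q = 0 := by
      rw [eE _ big, s1, s2, s3, ← eE _ bigE, s4]
    simp only [mul_zero, integral_zero]
    rw [← this]
    refine integral_congr_ae (Eventually.of_forall fun ω => ?_)
    simp only [g]; ring
  have fin := trn_lim Q V ε (fun _ => 0) hV2.1 (hV2.integrable_mul hε2) (by simp) hε2.1 (by fun_prop) main
  have h1 : cov[L, zf (e (r + k)); Q] = ∫ ω, ε ω * (V ω - Q[V]) ∂Q := rfl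
  rw [h1]
  simp only [mul_sub]
  have hi2 : Integrable (fun ω => ε ω * V ω) Q := hε2.integrable_mul hV2
  rw [integral_sub hi2 (hεi.mul_const _), integral_mul_const, hε0, zero_mul, sub_zero]
  simpa [mul_comm] using fin

end Sparse

theorem aux_gauss2 (μ : Measure (ℝ × ℝ)) [IsGaussian μ] (m1 m2 : ℝ)
    (hm1 : ∫ x, x.1 ∂μ = m1) (hm2 : ∫ x, x.2 ∂μ = m2)
    (p q c : ℝ) (hp : Var[fun x : ℝ × ℝ => x.1; μ] = p) (hq : Var[fun x : ℝ × ℝ => x.2; μ] = q)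
    (hc : cov[fun x : ℝ × ℝ => x.1, fun x : ℝ × ℝ => x.2; μ] = c)
    (hq0 : 0 < q) (hnd : c ^ 2 < p * q) :
    ∃ (α β : ℝ) (σ τ : ℝ≥0), 0 < σ ∧ 0 < τ ∧
      μ = ((gaussianReal 0 1).prod ((gaussianReal 0 σ).prod (gaussianReal 0 τ))).map
        (fun t => (m1 + (α * t.1 + t.2.1), m2 + (β * t.1 + t.2.2))) := by
  have hcp : c ^ 2 / q < p := by rw [div_lt_iff₀ hq0]; exact hnd
  have hc0 : 0 ≤ c ^ 2 / q := by positivity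
  set A : ℝ := (c ^ 2 / q + p) / 2 with hA
  have hApos : 0 < A := by linarith
  have hAp : A < p := by linarith
  have hcA : c ^ 2 / q < A := by linarith
  set α : ℝ := Real.sqrt A with hα
  have hαsq : α ^ 2 = A := Real.sq_sqrt hApos.le
  have hα0 : 0 < α := Real.sqrt_pos.2 hApos
  set β : ℝ := c / α with hβ
  have hβsq : β ^ 2 < q := by
    rw [hβ, div_pow, hαsq, div_lt_iff₀ hApos]
    rw [div_lt_iff₀ hq0] at hcA
    linarith
  have hαβ : α * β = c := by rw [hβ]; field_simp
  have hσ1 : 0 ≤ p - α ^ 2 := by linarith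
  have hτ1 : 0 ≤ q - β ^ 2 := by linarith
  obtain ⟨σ, hσ'⟩ : ∃ σ : ℝ≥0, (σ : ℝ) = p - α ^ 2 := ⟨⟨p - α ^ 2, hσ1⟩, rfl⟩
  obtain ⟨τ, hτ'⟩ : ∃ τ : ℝ≥0, (τ : ℝ) = q - β ^ 2 := ⟨⟨q - β ^ 2, hτ1⟩, rfl⟩
  refine ⟨α, β, σ, τ, ?_, ?_, ?_⟩
  · rw [← NNReal.coe_pos, hσ']; linarith
  · rw [← NNReal.coe_pos, hτ']; linarith
  let μ0 := (gaussianReal 0 1).prod ((gaussianReal 0 σ).prod (gaussianReal 0 τ))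
  have hT : Measurable (fun t : ℝ × ℝ × ℝ => (m1 + (α * t.1 + t.2.1), m2 + (β * t.1 + t.2.2))) := by
    fun_prop
  let M : (ℝ × ℝ × ℝ) →L[ℝ] (ℝ × ℝ) :=
    (α • ContinuousLinearMap.fst ℝ ℝ (ℝ × ℝ) +
      (ContinuousLinearMap.fst ℝ ℝ ℝ).comp (ContinuousLinearMap.snd ℝ ℝ (ℝ × ℝ))).prod
    (β • ContinuousLinearMap.fst ℝ ℝ (ℝ × ℝ) +
      (ContinuousLinearMap.snd ℝ ℝ ℝ).comp (ContinuousLinearMap.snd ℝ ℝ (ℝ × ℝ)))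
  have hM : μ0.map (fun t => (m1 + (α * t.1 + t.2.1), m2 + (β * t.1 + t.2.2))) =
      (μ0.map M).map (fun x => ((m1, m2) : ℝ × ℝ) + x) := by
    rw [Measure.map_map (by fun_prop) (by fun_prop)]
    congr 1
  have hG : IsGaussian (μ0.map (fun t => (m1 + (α * t.1 + t.2.1), m2 + (β * t.1 + t.2.2)))) := by
    rw [hM]; simp only [μ0]; infer_instance
  have k1 : ∀ (l : ℝ) (v : ℝ≥0), MemLp (fun x : ℝ => l * x) 2 (gaussianReal 0 v) := fun l v =>
    (memLp_id_gaussianReal 2).const_mul l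
  have i1 : ∀ (l : ℝ) (v : ℝ≥0), ∫ x : ℝ, l * x ∂(gaussianReal 0 v) = 0 := fun l v => by
    rw [integral_const_mul, integral_id_gaussianReal, mul_zero]
  have v1 : ∀ (l : ℝ) (v : ℝ≥0), Var[fun x : ℝ => l * x; gaussianReal 0 v] = l ^ 2 * v := by
    intro l v
    rw [variance_const_mul]; congr 1; exact variance_id_gaussianReal
  refine Measure.ext_of_charFunDual ?_
  ext L
  rw [IsGaussian.charFunDual_eq, IsGaussian.charFunDual_eq, integral_complex_ofReal,
    integral_complex_ofReal]
  set l1 := L (1, 0) with hl1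
  set l2 := L (0, 1) with hl2
  have hLe : ∀ x : ℝ × ℝ, L x = l1 * x.1 + l2 * x.2 := by
    intro x
    have : x = x.1 • ((1, 0) : ℝ × ℝ) + x.2 • ((0, 1) : ℝ × ℝ) := by ext <;> simp
    rw [this, map_add, map_smul, map_smul]
    simp [mul_comm, hl1, hl2]
  have hLf : (L : ℝ × ℝ → ℝ) = fun x => l1 * x.1 + l2 * x.2 := funext hLe
  have f1 : MemLp (fun x : ℝ × ℝ => x.1) 2 μ :=
    IsGaussian.memLp_dual μ (ContinuousLinearMap.fst ℝ ℝ ℝ) 2 (by simp)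
  have f2 : MemLp (fun x : ℝ × ℝ => x.2) 2 μ :=
    IsGaussian.memLp_dual μ (ContinuousLinearMap.snd ℝ ℝ ℝ) 2 (by simp)
  have hcomp : (L ∘ fun t : ℝ × ℝ × ℝ => (m1 + (α * t.1 + t.2.1), m2 + (β * t.1 + t.2.2))) =
      fun t => (l1 * m1 + l2 * m2) + ((l1 * α + l2 * β) * t.1 + (l1 * t.2.1 + l2 * t.2.2)) := by
    ext t; simp only [Function.comp, hLe]; ring
  have k2 : MemLp (fun x : ℝ × ℝ => l1 * x.1 + l2 * x.2) 2
      ((gaussianReal 0 σ).prod (gaussianReal 0 τ)) :=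
    ((k1 l1 σ).comp_fst _).add ((k1 l2 τ).comp_snd _)
  have k3 : MemLp (fun t : ℝ × ℝ × ℝ => (l1 * α + l2 * β) * t.1 + (l1 * t.2.1 + l2 * t.2.2)) 2 μ0 :=
    ((k1 _ 1).comp_fst _).add (k2.comp_snd _)
  have eV1 : Var[L; μ] = l1 ^ 2 * p + 2 * (l1 * l2 * c) + l2 ^ 2 * q := by
    rw [hLf]
    have := variance_add (f1.const_mul l1) (f2.const_mul l2)
    rw [variance_const_mul, variance_const_mul, covariance_const_mul_left,
      covariance_const_mul_right, hp, hq, hc] at this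
    rw [show (fun x : ℝ × ℝ => l1 * x.1 + l2 * x.2) = (fun x => l1 * x.1) + fun x => l2 * x.2 from rfl,
      this]
    ring
  have eV2 : Var[L; μ0.map (fun t => (m1 + (α * t.1 + t.2.1), m2 + (β * t.1 + t.2.2)))] =
      l1 ^ 2 * p + 2 * (l1 * l2 * c) + l2 ^ 2 * q := by
    rw [variance_map (by fun_prop) (by fun_prop), hcomp, variance_const_add k3.1]
    simp only [μ0]
    rw [variance_add_prod (k1 _ 1) k2, variance_add_prod (k1 l1 σ) (k1 l2 τ), v1, v1, v1, hσ', hτ',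
      ← hαβ]
    push_cast
    ring
  have eM1 : ∫ x, L x ∂μ = l1 * m1 + l2 * m2 := by
    simp only [hLe]
    rw [integral_add ((f1.const_mul l1).integrable (by simp)) ((f2.const_mul l2).integrable (by simp)),
      integral_const_mul, integral_const_mul, hm1, hm2]
  have eM2 : ∫ x, L x ∂(μ0.map (fun t => (m1 + (α * t.1 + t.2.1), m2 + (β * t.1 + t.2.2)))) =
      l1 * m1 + l2 * m2 := by
    rw [integral_map (by fun_prop) (by fun_prop)]
    have : ∀ t : ℝ × ℝ × ℝ, L (m1 + (α * t.1 + t.2.1), m2 + (β * t.1 + t.2.2)) =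
      (l1 * m1 + l2 * m2) + ((l1 * α + l2 * β) * t.1 + (l1 * t.2.1 + l2 * t.2.2)) := congrFun hcomp
    simp only [this]
    have j1 : Integrable (fun t : ℝ × ℝ × ℝ => (l1 * α + l2 * β) * t.1) μ0 :=
      ((k1 _ 1).comp_fst _).integrable (by simp)
    have j2 : Integrable (fun t : ℝ × ℝ × ℝ => l1 * t.2.1 + l2 * t.2.2) μ0 :=
      (k2.comp_snd _).integrable (by simp)
    have j3 : Integrable (fun t : ℝ × ℝ => l1 * t.1) ((gaussianReal 0 σ).prod (gaussianReal 0 τ)) :=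
      ((k1 _ _).comp_fst _).integrable (by simp)
    have j4 : Integrable (fun t : ℝ × ℝ => l2 * t.2) ((gaussianReal 0 σ).prod (gaussianReal 0 τ)) :=
      ((k1 _ _).comp_snd _).integrable (by simp)
    rw [integral_add (integrable_const _) (k3.integrable (by simp)), integral_add j1 j2]
    simp only [μ0]
    rw [integral_fun_fst (fun x : ℝ => (l1 * α + l2 * β) * x),
      integral_fun_snd (fun x : ℝ × ℝ => l1 * x.1 + l2 * x.2), integral_add j3 j4,
      integral_fun_fst (fun x : ℝ => l1 * x), integral_fun_snd (fun x : ℝ => l2 * x), i1, i1, i1]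
    simp
  rw [eM1, eV1, eM2, eV2]


section QStruct
set_option linter.unusedSectionVars false
variable {H : Type*} [NormedAddCommGroup H] [InnerProductSpace ℝ H] [CompleteSpace H]
    [SecondCountableTopology H] [MeasurableSpace H] [BorelSpace H]

theorem Q_resid (Q : Measure (ℝ × ℝ × H)) [IsGaussian Q] (e u : ℕ → H)
    (hetotal : (Submodule.span ℝ (Set.range e)).topologicalClosure = ⊤) (r : ℕ)
    (hu : ∀ j, j < r → u j ∈ Submodule.span ℝ (e '' Set.Iio r))
    (hu2 : ∀ j, j < r → e j ∈ Submodule.span ℝ (u '' Set.Iio r))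
    (hcov : ∀ i j, cov[zf (u i), zf (u j); Q] = if i = j then 1 else 0)
    (hsp : CondIndepGiven Q (fun ω => (ω.1, ω.2.1))
      (fun ω (k : ℕ) => ⟪e (r + k), ω.2.2⟫) (fun ω (i : Fin r) => ⟪e (i : ℕ), ω.2.2⟫))
    (f : (ℝ × ℝ) → ℝ) (hf : Measurable f) (L : (ℝ × ℝ × H) →L[ℝ] ℝ)
    (hL : ∀ ω, L ω = f (ω.1, ω.2.1)) :
    ∃ a ∈ Submodule.span ℝ (e '' Set.Iio r), ∀ h,
      cov[(L - zf a : (ℝ × ℝ × H) →L[ℝ] ℝ), zf h; Q] = 0 := by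
  obtain ⟨a, ha, hac⟩ := regress_exists Q e u r hu hu2 hcov L
  refine ⟨a, ha, fun h => ?_⟩
  refine cov_zero_span Q _ (Set.range e) ?_ h (by rw [hetotal]; trivial)
  rintro _ ⟨j, rfl⟩
  by_cases hj : j < r
  · exact hac j hj
  · obtain ⟨k, rfl⟩ := Nat.exists_eq_add_of_le (not_lt.1 hj)
    refine sparse_cov Q e r hsp f hf a ha (L - zf a) (fun ω => ?_) hac k
    simp [hL, zf_apply]

theorem Q_struct (Q : Measure (ℝ × ℝ × H)) [IsGaussian Q] (hinj : HasInjectiveCovariance Q)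
    (e u : ℕ → H)
    (hetotal : (Submodule.span ℝ (Set.range e)).topologicalClosure = ⊤) (r : ℕ)
    (hu : ∀ j, j < r → u j ∈ Submodule.span ℝ (e '' Set.Iio r))
    (hu2 : ∀ j, j < r → e j ∈ Submodule.span ℝ (u '' Set.Iio r))
    (hcov : ∀ i j, cov[zf (u i), zf (u j); Q] = if i = j then 1 else 0)
    (hsp : CondIndepGiven Q (fun ω => (ω.1, ω.2.1))
      (fun ω (k : ℕ) => ⟪e (r + k), ω.2.2⟫) (fun ω (i : Fin r) => ⟪e (i : ℕ), ω.2.2⟫)) :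
    ∃ a ∈ Submodule.span ℝ (e '' Set.Iio r), ∃ b ∈ Submodule.span ℝ (e '' Set.Iio r),
      ∃ (a0 b0 α β : ℝ) (σ τ : ℝ≥0), 0 < σ ∧ 0 < τ ∧
      Q = (((gaussianReal 0 1).prod ((gaussianReal 0 σ).prod (gaussianReal 0 τ))).prod
          (Q.map (fun ω => ω.2.2))).map
        (fun p => ((a0 + ⟪a, p.2⟫) + α * p.1.1 + p.1.2.1, (b0 + ⟪b, p.2⟫) + β * p.1.1 + p.1.2.2, p.2)) := by
  have hm : ∀ L : (ℝ × ℝ × H) →L[ℝ] ℝ, MemLp L 2 Q := fun L => IsGaussian.memLp_dual Q L 2 (by simp)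
  let X : (ℝ × ℝ × H) →L[ℝ] ℝ := ContinuousLinearMap.fst ℝ ℝ (ℝ × H)
  let Y : (ℝ × ℝ × H) →L[ℝ] ℝ :=
    (ContinuousLinearMap.fst ℝ ℝ H).comp (ContinuousLinearMap.snd ℝ ℝ (ℝ × H))
  let Z : (ℝ × ℝ × H) →L[ℝ] H :=
    (ContinuousLinearMap.snd ℝ ℝ H).comp (ContinuousLinearMap.snd ℝ ℝ (ℝ × H))
  obtain ⟨a, ha, hac⟩ := Q_resid Q e u hetotal r hu hu2 hcov hsp Prod.fst measurable_fst X (fun _ => rfl)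
  obtain ⟨b, hb, hbc⟩ := Q_resid Q e u hetotal r hu hu2 hcov hsp Prod.snd measurable_snd Y (fun _ => rfl)
  set LX : (ℝ × ℝ × H) →L[ℝ] ℝ := X - zf a with hLX
  set LY : (ℝ × ℝ × H) →L[ℝ] ℝ := Y - zf b with hLY
  let M : (ℝ × ℝ × H) →L[ℝ] (ℝ × ℝ) := LX.prod LY
  have hMm : Measurable M := by fun_prop
  have hind : IndepFun M Z Q := by
    refine HasGaussianLaw.indepFun_of_covariance_strongDual ?_ ?_
    · exact (IsGaussian.hasGaussianLaw_id (μ := Q)).map_fun (M.prod Z)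
    · intro L₁ L₂
      have h2 : (L₂ ∘ Z : ℝ × ℝ × H → ℝ) = zf ((InnerProductSpace.toDual ℝ H).symm L₂) := by
        ext ω; rw [zf_apply, InnerProductSpace.toDual_symm_apply]; rfl
      have h1 : (L₁ ∘ M : ℝ × ℝ × H → ℝ) = (fun ω => L₁ (1, 0) * LX ω) + (fun ω => L₁ (0, 1) * LY ω) := by
        ext ω
        have : M ω = LX ω • ((1, 0) : ℝ × ℝ) + LY ω • ((0, 1) : ℝ × ℝ) := by ext <;> simp [M]
        simp only [Function.comp, Pi.add_apply]
        rw [this, map_add, map_smul, map_smul]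
        simp [mul_comm]
      rw [h1, h2, covariance_add_left ((hm LX).const_mul _) ((hm LY).const_mul _) (hm _),
        covariance_const_mul_left, covariance_const_mul_left, hac, hbc]
      simp
  have hvar : ∀ l1 l2 : ℝ, Var[(l1 • LX + l2 • LY : (ℝ × ℝ × H) →L[ℝ] ℝ); Q] =
      l1 ^ 2 * Var[LX; Q] + 2 * (l1 * l2 * cov[LX, LY; Q]) + l2 ^ 2 * Var[LY; Q] := by
    intro l1 l2
    have := variance_add ((hm LX).const_mul l1) ((hm LY).const_mul l2)
    rw [variance_const_mul, variance_const_mul, covariance_const_mul_left,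
      covariance_const_mul_right] at this
    rw [show ((l1 • LX + l2 • LY : (ℝ × ℝ × H) →L[ℝ] ℝ) : ℝ × ℝ × H → ℝ) =
      (fun x => l1 * LX x) + fun x => l2 * LY x from rfl, this]
    ring
  have hpos : ∀ l1 l2 : ℝ, (l1 ≠ 0 ∨ l2 ≠ 0) →
      0 < l1 ^ 2 * Var[LX; Q] + 2 * (l1 * l2 * cov[LX, LY; Q]) + l2 ^ 2 * Var[LY; Q] := by
    intro l1 l2 hl
    rw [← hvar]
    refine lt_of_le_of_ne (variance_nonneg _ _) fun h0 => ?_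
    have hz := inj_var Q hinj _ h0.symm
    have e1 := congrArg (fun L => L ((1, 0, 0) : ℝ × ℝ × H)) hz
    have e2 := congrArg (fun L => L ((0, 1, 0) : ℝ × ℝ × H)) hz
    simp [hLX, hLY, X, Y, zf_apply] at e1 e2
    rcases hl with hl | hl
    · exact hl e1
    · exact hl e2
  have hq0 : 0 < Var[LY; Q] := by simpa using hpos 0 1 (by simp)
  have hnd : cov[LX, LY; Q] ^ 2 < Var[LX; Q] * Var[LY; Q] := by
    have h := hpos (Var[LY; Q]) (-cov[LX, LY; Q]) (Or.inl hq0.ne')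
    have h2 : 0 < Var[LY; Q] * (Var[LX; Q] * Var[LY; Q] - cov[LX, LY; Q] ^ 2) := by
      refine h.trans_eq ?_; ring
    have := (mul_pos_iff_of_pos_left hq0).1 h2
    linarith
  have hMG : IsGaussian (Q.map M) := inferInstance
  obtain ⟨α, β, σ, τ, hσ, hτ, hlaw⟩ := aux_gauss2 (Q.map M) (∫ ω, LX ω ∂Q) (∫ ω, LY ω ∂Q)
    (by rw [integral_map (by fun_prop) (by fun_prop)]; rfl)
    (by rw [integral_map (by fun_prop) (by fun_prop)]; rfl)
    (Var[LX; Q]) (Var[LY; Q]) (cov[LX, LY; Q])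
    (by rw [variance_map (by fun_prop) (by fun_prop)]; rfl)
    (by rw [variance_map (by fun_prop) (by fun_prop)]; rfl)
    (by rw [covariance_map (by fun_prop) (by fun_prop) (by fun_prop)]; rfl) hq0 hnd
  refine ⟨a, ha, b, hb, ∫ ω, LX ω ∂Q, ∫ ω, LY ω ∂Q, α, β, σ, τ, hσ, hτ, ?_⟩
  have hjoint := (indepFun_iff_map_prod_eq_prod_map_map (by fun_prop) (by fun_prop)).1 hind
  have hre : Q = (Q.map (fun ω => (M ω, Z ω))).map
      (fun p => (p.1.1 + ⟪a, p.2⟫, p.1.2 + ⟪b, p.2⟫, p.2)) := by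
    rw [Measure.map_map (by fun_prop) (by fun_prop)]
    have : ((fun p : (ℝ × ℝ) × H => (p.1.1 + ⟪a, p.2⟫, p.1.2 + ⟪b, p.2⟫, p.2)) ∘ fun ω => (M ω, Z ω)) = id := by
      ext ω <;> simp [M, Z, hLX, hLY, X, Y, zf_apply]
    rw [this, Measure.map_id]
  have hZ : (Z : ℝ × ℝ × H → H) = fun ω => ω.2.2 := rfl
  rw [hjoint, hlaw, hZ] at hre
  have hprob : IsProbabilityMeasure (Q.map (fun ω => ω.2.2)) :=
    Measure.isProbabilityMeasure_map (by fun_prop)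
  conv_lhs => rw [hre]
  have hid : (Q.map (fun ω => ω.2.2)) = (Q.map (fun ω => ω.2.2)).map id := Measure.map_id.symm
  conv_lhs => rw [hid]
  rw [Measure.map_prod_map _ _ (by fun_prop) measurable_id, Measure.map_map (by fun_prop) (by fun_prop)]
  congr 1
  ext p <;> simp [Prod.map] <;> ring

end QStruct

section Mixture
set_option linter.unusedSectionVars false

theorem aux_pi_prod_left {α β : Type*} [MeasurableSpace α] [MeasurableSpace β] (μ : Measure α)
    (ν : Measure β) [IsProbabilityMeasure μ] [IsProbabilityMeasure ν] (n : ℕ)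
    (A : Set (Fin n → α × β)) (hA : MeasurableSet A) :
    (Measure.pi fun _ : Fin n => μ.prod ν) A =
      ∫⁻ x, (Measure.pi fun _ : Fin n => ν) {z | (fun i => (x i, z i)) ∈ A}
        ∂(Measure.pi fun _ : Fin n => μ) := by
  have h := (measurePreserving_arrowProdEquivProdArrow α β (Fin n) (fun _ => μ) (fun _ => ν)).symm
  rw [← h.measure_preimage hA.nullMeasurableSet, Measure.prod_apply (hA.preimage h.measurable)]
  rfl

theorem aux_pi_prod_right {α β : Type*} [MeasurableSpace α] [MeasurableSpace β] (μ : Measure α)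
    (ν : Measure β) [IsProbabilityMeasure μ] [IsProbabilityMeasure ν] (n : ℕ)
    (A : Set (Fin n → α × β)) (hA : MeasurableSet A) :
    (Measure.pi fun _ : Fin n => μ.prod ν) A =
      ∫⁻ z, (Measure.pi fun _ : Fin n => μ) {x | (fun i => (x i, z i)) ∈ A}
        ∂(Measure.pi fun _ : Fin n => ν) := by
  have h := (measurePreserving_arrowProdEquivProdArrow α β (Fin n) (fun _ => μ) (fun _ => ν)).symm
  rw [← h.measure_preimage hA.nullMeasurableSet, Measure.prod_apply_symm (hA.preimage h.measurable)]
  rfl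

theorem aux_pi_map {α γ : Type*} [MeasurableSpace α] [MeasurableSpace γ] (μ : Measure α)
    [IsProbabilityMeasure μ] (n : ℕ) (T : α → γ) (hT : Measurable T)
    (S : Set (Fin n → γ)) (hS : MeasurableSet S) :
    (Measure.pi fun _ : Fin n => μ.map T) S =
      (Measure.pi fun _ : Fin n => μ) {x | (fun i => T (x i)) ∈ S} := by
  have : IsProbabilityMeasure (μ.map T) := Measure.isProbabilityMeasure_map hT.aemeasurable
  rw [← Measure.pi_map_pi (fun _ => hT.aemeasurable), Measure.map_apply (by fun_prop) hS]
  rfl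

theorem aux_pi_map_prod {α β γ : Type*} [MeasurableSpace α] [MeasurableSpace β]
    [MeasurableSpace γ] (μ : Measure α) (ν : Measure β)
    [IsProbabilityMeasure μ] [IsProbabilityMeasure ν] (n : ℕ) (T : α × β → γ) (hT : Measurable T)
    (S : Set (Fin n → γ)) (hS : MeasurableSet S) :
    (Measure.pi fun _ : Fin n => (μ.prod ν).map T) S =
      ∫⁻ z, (Measure.pi fun _ : Fin n => μ) {x | (fun i => T (x i, z i)) ∈ S}
        ∂(Measure.pi fun _ : Fin n => ν) := by
  rw [aux_pi_map _ n T hT S hS, aux_pi_prod_right]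
  · rfl
  · exact hS.preimage (by fun_prop : Measurable (fun x : Fin n → α × β => fun i => T (x i)))

variable {H : Type*} [NormedAddCommGroup H] [InnerProductSpace ℝ H] [CompleteSpace H]
    [SecondCountableTopology H] [MeasurableSpace H] [BorelSpace H]

theorem mixture_bound (ν : Measure H) [IsProbabilityMeasure ν] (A B : H → ℝ) (hA : Measurable A)
    (hB : Measurable B) (α β : ℝ) (σ τ : ℝ≥0) (hσ : 0 < σ) (hτ : 0 < τ)
    (W : ℕ → H → ℝ) (hW : ∀ j, Measurable (W j)) (hlaw : ∀ j, ν.map (W j) = gaussianReal 0 1)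
    (hind : ∀ i j, i ≠ j → IndepFun (W i) (W j) ν) (n : ℕ)
    (S : Set (Fin n → ℝ × ℝ × H)) (hS : MeasurableSet S) (K : ℝ≥0∞)
    (hK : ∀ (k : ℕ) (w : Fin k → ℝ), (Measure.pi fun _ : Fin n => nullP ν
      (fun z => A z + α * ((Real.sqrt k)⁻¹ * ∑ j : Fin k, w j * W j z))
      (fun z => B z + β * ((Real.sqrt k)⁻¹ * ∑ j : Fin k, w j * W j z)) σ τ) S ≤ K) :
    (Measure.pi fun _ : Fin n =>
      (((gaussianReal 0 1).prod ((gaussianReal 0 σ).prod (gaussianReal 0 τ))).prod ν).map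
        (fun p : (ℝ × ℝ × ℝ) × H => (A p.2 + α * p.1.1 + p.1.2.1, B p.2 + β * p.1.1 + p.1.2.2, p.2))) S
      ≤ K := by
  by_cases hKt : K = ⊤
  · rw [hKt]; exact le_top
  set N2 : Measure (ℝ × ℝ) := (gaussianReal 0 σ).prod (gaussianReal 0 τ) with hN2
  set m : Measure (Fin n → ℝ × ℝ) := Measure.pi fun _ : Fin n => N2 with hm
  set νn : Measure (Fin n → H) := Measure.pi fun _ : Fin n => ν with hνn
  let D : (Fin n → H) → (Fin n → ℝ) → Set (Fin n → ℝ × ℝ) := fun z t =>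
    {x | (fun i => (A (z i) + α * t i + (x i).1, B (z i) + β * t i + (x i).2, z i)) ∈ S}
  let G : (Fin n → H) → (Fin n → ℝ) → ℝ := fun z t => (m (D z t)).toReal
  have hGm0 : Measurable (fun p : (Fin n → H) × (Fin n → ℝ) => m (D p.1 p.2)) := by
    have hset : MeasurableSet {q : ((Fin n → H) × (Fin n → ℝ)) × (Fin n → ℝ × ℝ) |
        (fun i => (A (q.1.1 i) + α * q.1.2 i + (q.2 i).1, B (q.1.1 i) + β * q.1.2 i + (q.2 i).2, q.1.1 i)) ∈ S} := by
      refine hS.preimage ?_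
      fun_prop
    exact measurable_measure_prodMk_left hset
  have hGm : Measurable (fun p : (Fin n → H) × (Fin n → ℝ) => G p.1 p.2) := hGm0.ennreal_toReal
  have hG0 : ∀ z t, 0 ≤ G z t := fun z t => ENNReal.toReal_nonneg
  have hG1 : ∀ z t, |G z t| ≤ 1 := fun z t => by
    rw [abs_of_nonneg (hG0 z t)]
    exact measureReal_le_one
  have hN2ac : N2 ≪ volume := by
    rw [hN2, Measure.volume_eq_prod]
    exact (gaussianReal_absolutelyContinuous 0 hσ.ne').prod (gaussianReal_absolutelyContinuous 0 hτ.ne')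
  have hmac : m ≪ volume := aux_pi_ac N2 volume hN2ac n
  have hGc : ∀ z, Continuous (G z) := by
    intro z
    have hSz : MeasurableSet {y : Fin n → ℝ × ℝ | (fun i => ((y i).1, (y i).2, z i)) ∈ S} :=
      hS.preimage (by fun_prop)
    have h1 := aux_translate m hmac _ hSz
    have h2 : Continuous (fun t : Fin n → ℝ => (fun i => (A (z i) + α * t i, B (z i) + β * t i) : Fin n → ℝ × ℝ)) := by
      fun_prop
    exact h1.comp h2
  have hae := aux_slln ν W hW hlaw hind n
  let sk : (k : ℕ) → (Fin k → ℝ) → (Fin n → H) → (Fin n → ℝ) := fun k w z i =>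
    (Real.sqrt k)⁻¹ * ∑ j : Fin k, w j * W j (z i)
  have hskm : ∀ k, Measurable (fun p : (Fin n → H) × (Fin k → ℝ) => sk k p.2 p.1) := by
    intro k
    refine measurable_pi_lambda _ fun i => ?_
    refine measurable_const.mul (Finset.measurable_sum _ fun j _ => ?_)
    have := hW j
    fun_prop
  have hjm : ∀ k, Measurable (fun p : (Fin n → H) × (Fin k → ℝ) => G p.1 (sk k p.2 p.1)) := fun k =>
    hGm.comp (measurable_fst.prodMk (hskm k))
  let γ : (k : ℕ) → Measure (Fin k → ℝ) := fun k => Measure.pi fun _ : Fin k => gaussianReal 0 1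
  have hlim : Tendsto (fun k => ∫ z, ∫ w, G z (sk k w z) ∂(γ k) ∂νn) atTop
      (𝓝 (∫ z, ∫ t, G z t ∂(γ n) ∂νn)) := by
    refine tendsto_integral_of_dominated_convergence (fun _ => (1 : ℝ)) ?_ (integrable_const _) ?_ ?_
    · intro k
      exact ((hjm k).stronglyMeasurable.integral_prod_right').aestronglyMeasurable
    · intro k
      refine Eventually.of_forall fun z => ?_
      have := norm_integral_le_of_norm_le_const (μ := γ k) (f := fun w => G z (sk k w z)) (C := 1)
        (Eventually.of_forall fun w => hG1 _ _)
      simpa [γ] using this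
    · filter_upwards [hae] with z hz
      exact aux_weak (fun j i => W j (z i)) hz (G z) (hGc z) 1 (hG1 z)
  have hnull : ∀ k, ∫ z, ∫ w, G z (sk k w z) ∂(γ k) ∂νn ≤ K.toReal := by
    intro k
    have hint : Integrable (Function.uncurry fun (z : Fin n → H) (w : Fin k → ℝ) => G z (sk k w z)) (νn.prod (γ k)) :=
      Integrable.of_bound (hjm k).aestronglyMeasurable 1 (Eventually.of_forall fun p => hG1 _ _)
    rw [integral_integral_swap hint]
    have hle : ∀ w, ∫ z, G z (sk k w z) ∂νn ≤ K.toReal := by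
      intro w
      have hskw : Measurable (sk k w) := (hskm k).comp (measurable_id.prodMk measurable_const)
      have hA' : Measurable (fun z => A z + α * ((Real.sqrt k)⁻¹ * ∑ j : Fin k, w j * W j z)) := by
        fun_prop
      have hB' : Measurable (fun z => B z + β * ((Real.sqrt k)⁻¹ * ∑ j : Fin k, w j * W j z)) := by
        fun_prop
      have hT := nullP_meas hA' hB'
      have h1 := hK k w
      unfold nullP at h1
      rw [aux_pi_map_prod _ _ n _ hT S hS] at h1
      have h2 : ∫ z, G z (sk k w z) ∂νn = (∫⁻ z, m (D z (sk k w z)) ∂νn).toReal := by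
        refine integral_toReal ?_ ?_
        · exact (hGm0.comp (measurable_id.prodMk hskw)).aemeasurable
        · exact Eventually.of_forall fun z => measure_lt_top _ _
      rw [h2]
      exact ENNReal.toReal_mono hKt h1
    calc _ ≤ ∫ _, K.toReal ∂(γ k) := by
          refine integral_mono_of_nonneg (Eventually.of_forall fun w => ?_) (integrable_const _)
            (Eventually.of_forall hle)
          exact integral_nonneg fun z => hG0 _ _
      _ = K.toReal := by simp [γ]
  have hfin := le_of_tendsto' hlim hnull
  have hTQ : Measurable (fun p : (ℝ × ℝ × ℝ) × H =>
      (A p.2 + α * p.1.1 + p.1.2.1, B p.2 + β * p.1.1 + p.1.2.2, p.2)) := by fun_prop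
  rw [aux_pi_map_prod _ _ n _ hTQ S hS]
  have hin : ∀ z : Fin n → H, (Measure.pi fun _ : Fin n => (gaussianReal 0 1).prod N2)
      {x | (fun i => (A (z i) + α * (x i).1 + (x i).2.1, B (z i) + β * (x i).1 + (x i).2.2, z i)) ∈ S}
      = ∫⁻ t, m (D z t) ∂(γ n) := by
    intro z
    rw [aux_pi_prod_left]
    · rfl
    · exact (hS.preimage (by fun_prop : Measurable (fun x : Fin n → ℝ × ℝ × ℝ => fun i =>
        (A (z i) + α * (x i).1 + (x i).2.1, B (z i) + β * (x i).1 + (x i).2.2, z i))))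
  simp only [hin]
  have hreal : ∀ z, ∫ t, G z t ∂(γ n) = (∫⁻ t, m (D z t) ∂(γ n)).toReal := fun z =>
    integral_toReal (hGm0.comp (measurable_const.prodMk measurable_id)).aemeasurable
      (Eventually.of_forall fun t => measure_lt_top _ _)
  have hlt : ∀ z, ∫⁻ t, m (D z t) ∂(γ n) ≤ 1 := fun z => by
    calc _ ≤ ∫⁻ _, 1 ∂(γ n) := lintegral_mono fun t => prob_le_one
      _ = 1 := by simp [γ]
  have hreal2 : ∫ z, ∫ t, G z t ∂(γ n) ∂νn = (∫⁻ z, ∫⁻ t, m (D z t) ∂(γ n) ∂νn).toReal := by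
    simp only [hreal]
    refine integral_toReal ?_ (Eventually.of_forall fun z => (hlt z).trans_lt ENNReal.one_lt_top)
    exact (hGm0.lintegral_prod_right').aemeasurable
  rw [hreal2] at hfin
  refine (ENNReal.toReal_le_toReal ?_ hKt).1 hfin
  refine ne_top_of_le_ne_top ENNReal.one_ne_top ?_
  calc _ ≤ ∫⁻ _, 1 ∂νn := lintegral_mono hlt
    _ = 1 := by simp [νn]

end Mixture

section Final
set_option linter.unusedSectionVars false
variable {H : Type*} [NormedAddCommGroup H] [InnerProductSpace ℝ H] [CompleteSpace H]
    [SecondCountableTopology H] [MeasurableSpace H] [BorelSpace H]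

theorem span_factor (e : ℕ → H) (r : ℕ) (a : H) (ha : a ∈ Submodule.span ℝ (e '' Set.Iio r)) :
    ∃ A' : (Fin r → ℝ) → ℝ, Measurable A' ∧ ∀ z : H, ⟪a, z⟫ = A' (fun i => ⟪e i, z⟫) := by
  induction ha using Submodule.span_induction with
  | mem x hx =>
    obtain ⟨j, hj, rfl⟩ := hx
    exact ⟨fun y => y ⟨j, hj⟩, measurable_pi_apply _, fun z => rfl⟩
  | zero => exact ⟨fun _ => 0, measurable_const, fun z => by simp⟩
  | add x y _ _ hx hy =>
    obtain ⟨A1, h1, h1e⟩ := hx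
    obtain ⟨A2, h2, h2e⟩ := hy
    exact ⟨fun y => A1 y + A2 y, h1.add h2, fun z => by rw [inner_add_left, h1e, h2e]⟩
  | smul c x _ hx =>
    obtain ⟨A1, h1, h1e⟩ := hx
    exact ⟨fun y => c * A1 y, h1.const_mul c, fun z => by rw [real_inner_smul_left, h1e]⟩

theorem W_law (ν : Measure H) [IsGaussian ν] (u : H)
    (hc : cov[fun z => ⟪u, z⟫, fun z => ⟪u, z⟫; ν] = 1) :
    ν.map (fun z => ⟪u, z⟫ - ∫ y, ⟪u, y⟫ ∂ν) = gaussianReal 0 1 := by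
  have h1 : ν.map (innerSL ℝ u) = gaussianReal (∫ y, ⟪u, y⟫ ∂ν) 1 := by
    rw [IsGaussian.map_eq_gaussianReal]
    rw [covariance_self (by fun_prop)] at hc
    congr 1
    change Var[fun z => ⟪u, z⟫; ν].toNNReal = 1
    rw [hc]; simp
  have h2 : (fun z => ⟪u, z⟫ - ∫ y, ⟪u, y⟫ ∂ν) = (fun x => x - ∫ y, ⟪u, y⟫ ∂ν) ∘ (innerSL ℝ u) := rfl
  rw [h2, ← Measure.map_map (by fun_prop) (by fun_prop), h1, gaussianReal_map_sub_const, sub_self]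

theorem W_indep (ν : Measure H) [IsGaussian ν] (u v : H)
    (hc : cov[fun z => ⟪u, z⟫, fun z => ⟪v, z⟫; ν] = 0) :
    IndepFun (fun z => ⟪u, z⟫ - ∫ y, ⟪u, y⟫ ∂ν) (fun z => ⟪v, z⟫ - ∫ y, ⟪v, y⟫ ∂ν) ν := by
  have hg : HasGaussianLaw (fun z => ((⟪u, z⟫ : ℝ), (⟪v, z⟫ : ℝ))) ν :=
    ⟨inferInstanceAs (IsGaussian (ν.map ((innerSL ℝ u).prod (innerSL ℝ v))))⟩
  exact (hg.indepFun_of_covariance_eq_zero hc).comp (φ := fun x => x - ∫ y, ⟪u, y⟫ ∂ν)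
    (ψ := fun x => x - ∫ y, ⟪v, y⟫ ∂ν) (by fun_prop) (by fun_prop)

theorem main_aux (e : ℕ → H) (he : Orthonormal ℝ e)
    (hetotal : (Submodule.span ℝ (Set.range e)).topologicalClosure = ⊤)
    (Q : Measure (ℝ × ℝ × H)) [IsGaussian Q] (hQinj : HasInjectiveCovariance Q)
    (r : ℕ) (hsp : CondIndepGiven Q (fun ω => (ω.1, ω.2.1))
      (fun ω (k : ℕ) => ⟪e (r + k), ω.2.2⟫) (fun ω (i : Fin r) => ⟪e (i : ℕ), ω.2.2⟫))
    (n : ℕ) (S : Set (Fin n → ℝ × ℝ × H)) (hS : MeasurableSet S) (K : ℝ≥0∞)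
    (hK : ∀ P : Measure (ℝ × ℝ × H), 
        IsProbabilityMeasure P ∧ IsGaussianMeasure P ∧ HasInjectiveCovariance P ∧
          (∃ r : ℕ, CondIndepGiven P (fun ω => (ω.1, ω.2.1))
            (fun ω (k : ℕ) => ⟪e (r + k), ω.2.2⟫) (fun ω (i : Fin r) => ⟪e (i : ℕ), ω.2.2⟫)) ∧
          CondIndepGiven P (fun ω => ω.1) (fun ω => ω.2.1) (fun ω => ω.2.2) ∧
          P.map (fun ω => ω.2.2) = Q.map (fun ω => ω.2.2) → 
        (Measure.pi fun _ : Fin n => P) S ≤ K) :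
    (Measure.pi fun _ : Fin n => Q) S ≤ K := by
  have hνg : IsGaussian (Q.map (fun ω => ω.2.2)) :=
    inferInstanceAs (IsGaussian (Q.map ((ContinuousLinearMap.snd ℝ ℝ H).comp
      (ContinuousLinearMap.snd ℝ ℝ (ℝ × H)))))
  have hinj := marg_inj Q hQinj
  obtain ⟨u, hu, hu2, hcov⟩ := aux_gs (Q.map (fun ω => ω.2.2)) hinj e he
  have hcovQ : ∀ i j, cov[zf (u i), zf (u j); Q] = if i = j then 1 else 0 := by
    intro i j
    rw [← hcov i j, covariance_map (by fun_prop) (by fun_prop) (by fun_prop)]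
    rfl
  obtain ⟨a, ha, b, hb, a0, b0, α, β, σ, τ, hσ, hτ, hQ⟩ :=
    Q_struct Q hQinj e u hetotal r (hu r) (hu2 r) hcovQ hsp
  generalize Q.map (fun ω => ω.2.2) = ν at *
  rw [hQ]
  refine mixture_bound ν (fun z => a0 + ⟪a, z⟫) (fun z => b0 + ⟪b, z⟫) (by fun_prop) (by fun_prop)
    α β σ τ hσ hτ (fun j z => ⟪u j, z⟫ - ∫ y, ⟪u j, y⟫ ∂ν) (fun j => by fun_prop)
    (fun j => W_law ν (u j) (by simpa using hcov j j))
    (fun i j hij => W_indep ν (u i) (u j) (by simpa [hij] using hcov i j)) n S hS K ?_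
  intro k w
  refine hK _ ?_
  have hlin : ∀ (c0 : ℝ) (c : H) (γ : ℝ) (z : H), c0 + ⟪c, z⟫ + γ * ((Real.sqrt k)⁻¹ *
      ∑ j : Fin k, w j * (⟪u j, z⟫ - ∫ y, ⟪u j, y⟫ ∂ν)) =
      (c0 - γ * ((Real.sqrt k)⁻¹ * ∑ j : Fin k, w j * ∫ y, ⟪u j, y⟫ ∂ν)) +
      ⟪c + (γ * (Real.sqrt k)⁻¹) • ∑ j : Fin k, w j • u j, z⟫ := by
    intro c0 c γ z
    simp only [inner_add_left, real_inner_smul_left, sum_inner, mul_sub, Finset.sum_sub_distrib]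
    ring
  have hspan : ∀ c ∈ Submodule.span ℝ (e '' Set.Iio r), ∀ γ : ℝ,
      c + (γ * (Real.sqrt k)⁻¹) • ∑ j : Fin k, w j • u j ∈
        Submodule.span ℝ (e '' Set.Iio (max r k)) := by
    intro c hc γ
    refine Submodule.add_mem _ ?_ (Submodule.smul_mem _ _ (Submodule.sum_mem _ fun j _ =>
      Submodule.smul_mem _ _ (hu _ _ (lt_of_lt_of_le j.2 (le_max_right _ _)))))
    exact Submodule.span_mono (Set.image_mono (Set.Iio_subset_Iio (le_max_left _ _))) hc
  simp only [hlin]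
  obtain ⟨A', hA', hAA⟩ := span_factor e _ _ (hspan a ha α)
  obtain ⟨B', hB', hBB⟩ := span_factor e _ _ (hspan b hb β)
  refine ⟨nullP_prob ν (by fun_prop) (by fun_prop) σ τ,
    nullP_gauss ν _ _ _ _ (fun _ => rfl) (fun _ => rfl) σ τ,
    nullP_inj ν hinj _ _ _ _ (fun _ => rfl) (fun _ => rfl) σ τ hσ hτ,
    ⟨max r k, nullP_sparse ν (by fun_prop) (by fun_prop) σ τ e (max r k)
      (fun y => _ + A' y) (fun y => _ + B' y) (hA'.const_add _) (hB'.const_add _)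
      (fun z => by rw [← hAA]) (fun z => by rw [← hBB])⟩,
    nullP_ci ν (by fun_prop) (by fun_prop) σ τ,
    nullP_map ν (by fun_prop) (by fun_prop) σ τ⟩

end Final

/-- Proposition (hardness persists under sparsity): with `Z` expanded in a fixed orthonormal
basis `(e_k)`, even when all distributions in the model satisfy
`(X, Y) ⫫ (Z_{r+1}, Z_{r+2}, …) | (Z_1, …, Z_r)` for some `r`, the power of any conditional
independence test is at most its size over the null `𝒫₀^Q`. -/
theorem power_le_size_gaussian_sparse
    {HZ : Type*}
    [NormedAddCommGroup HZ] [InnerProductSpace ℝ HZ] [CompleteSpace HZ]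
    [TopologicalSpace.SeparableSpace HZ] [MeasurableSpace HZ] [BorelSpace HZ]
    (e : ℕ → HZ) (he : Orthonormal ℝ e)
    (hetotal : (Submodule.span ℝ (Set.range e)).topologicalClosure = ⊤)
    (Q : Measure (ℝ × ℝ × HZ))
    (hQprob : IsProbabilityMeasure Q)
    (hQgauss : IsGaussianMeasure Q)
    (hQinj : HasInjectiveCovariance Q)
    (hQsparse : ∃ r : ℕ, CondIndepGiven Q (fun ω => (ω.1, ω.2.1))
      (fun ω (k : ℕ) => ⟪e (r + k), ω.2.2⟫) (fun ω (i : Fin r) => ⟪e (i : ℕ), ω.2.2⟫))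
    (hQalt : ¬ CondIndepGiven Q (fun ω => ω.1) (fun ω => ω.2.1) (fun ω => ω.2.2))
    (n : ℕ)
    (ψ : (Fin n → ℝ × ℝ × HZ) → Bool)
    (hψ : Measurable ψ) :
    (Measure.pi fun _ : Fin n => Q) {x | ψ x = true} ≤
      ⨆ (P : Measure (ℝ × ℝ × HZ)) (_ :
        IsProbabilityMeasure P ∧ IsGaussianMeasure P ∧ HasInjectiveCovariance P ∧
          (∃ r : ℕ, CondIndepGiven P (fun ω => (ω.1, ω.2.1))
            (fun ω (k : ℕ) => ⟪e (r + k), ω.2.2⟫) (fun ω (i : Fin r) => ⟪e (i : ℕ), ω.2.2⟫)) ∧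
          CondIndepGiven P (fun ω => ω.1) (fun ω => ω.2.1) (fun ω => ω.2.2) ∧
          P.map (fun ω => ω.2.2) = Q.map (fun ω => ω.2.2)),
        (Measure.pi fun _ : Fin n => P) {x | ψ x = true} := by
  have : SecondCountableTopology HZ := UniformSpace.secondCountable_of_separable HZ
  have : IsGaussian Q := isGaussian_of_map_eq_gaussianReal hQgauss
  obtain ⟨r, hr⟩ := hQsparse
  have hS : MeasurableSet {x | ψ x = true} := hψ (measurableSet_singleton true)
  refine main_aux e he hetotal Q hQinj r hr n _ hS _ ?_
  intro P hP
  exact le_iSup₂_of_le P hP le_rfl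
end
end
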